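/- arXiv:1612.08755 — 15 statements merged into one kernel-verified Lean document; each statement's English description precedes it below -/
import Mathlib

section
/- Let F : ℝ × ℝⁿ → ℝⁿ be a lifted flow on the torus (F₀ = id, F_{s+t} = F_s ∘ F_t, F_t(x+m) = F_t(x)+m for all m ∈ ℤⁿ, jointly continuous) such that for some K ≥ 1 every time-t map F_t is K-Lipschitz. Then there exists a vector ρ ∈ ℝⁿ (the rotation vector of the flow) such that (F_t(q) − q)/t converges to ρ uniformly in q ∈ ℝⁿ as t → +∞. -/
open Filter

/-- A quasi-additive sequence stays within `C` of a linear one. -/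
theorem quasi_additive_linear {E : Type*} [NormedAddCommGroup E] [NormedSpace ℝ E]
    [CompleteSpace E] (a : ℕ → E) (C : ℝ)
    (h : ∀ i j, ‖a (i + j) - a i - a j‖ ≤ C) :
    ∃ ρ : E, ∀ k : ℕ, ‖a k - (k : ℝ) • ρ‖ ≤ C := by
  have hC : 0 ≤ C := le_trans (norm_nonneg _) (h 0 0)
  have hmul : ∀ j k : ℕ, ‖a ((k + 1) * j) - ((k : ℝ) + 1) • a j‖ ≤ k * C := by
    intro j k
    induction k with
    | zero => simp
    | succ k ih =>
      have e : a ((k + 1 + 1) * j) - (((k + 1 : ℕ) : ℝ) + 1) • a j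
          = (a ((k + 1) * j + j) - a ((k + 1) * j) - a j)
            + (a ((k + 1) * j) - ((k : ℝ) + 1) • a j) := by
        rw [show (k + 1 + 1) * j = (k + 1) * j + j by ring]
        push_cast
        module
      rw [e]
      refine (norm_add_le _ _).trans ?_
      have := h ((k + 1) * j) j
      push_cast
      linarith
  have hmul2 : ∀ i j : ℕ, ‖((j : ℝ) + 1) • a (i + 1) - ((i : ℝ) + 1) • a (j + 1)‖
      ≤ (i + j) * C := by
    intro i j
    have h1 := hmul (j + 1) i
    have h2 := hmul (i + 1) j
    rw [show (j + 1) * (i + 1) = (i + 1) * (j + 1) by ring] at h2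
    have e : ((j : ℝ) + 1) • a (i + 1) - ((i : ℝ) + 1) • a (j + 1)
        = (a ((i + 1) * (j + 1)) - ((i : ℝ) + 1) • a (j + 1))
          - (a ((i + 1) * (j + 1)) - ((j : ℝ) + 1) • a (i + 1)) := by abel
    rw [e]
    refine (norm_sub_le _ _).trans ?_
    linarith
  let b : ℕ → E := fun i => ((i : ℝ) + 1)⁻¹ • a (i + 1)
  have hb : ∀ i j : ℕ, ((i : ℝ) + 1) * ‖b i - b j‖ ≤ C + C * ((i : ℝ) + 1) * ((j : ℝ) + 1)⁻¹ := by
    intro i j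
    have hi : (0 : ℝ) < (i : ℝ) + 1 := by positivity
    have hj : (0 : ℝ) < (j : ℝ) + 1 := by positivity
    have e : ((j : ℝ) + 1) • a (i + 1) - ((i : ℝ) + 1) • a (j + 1)
        = (((i : ℝ) + 1) * ((j : ℝ) + 1)) • (b i - b j) := by
      simp only [b, smul_sub, smul_smul]
      congr 2 <;> field_simp
    have h3 := hmul2 i j
    rw [e, norm_smul, Real.norm_of_nonneg (by positivity)] at h3
    have h4 : (((i : ℝ) + 1) * ‖b i - b j‖) * ((j : ℝ) + 1)
        ≤ (C + C * ((i : ℝ) + 1) * ((j : ℝ) + 1)⁻¹) * ((j : ℝ) + 1) := by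
      have : (C + C * ((i : ℝ) + 1) * ((j : ℝ) + 1)⁻¹) * ((j : ℝ) + 1)
          = C * (j + 1) + C * (i + 1) := by field_simp
      rw [this]
      nlinarith
    exact le_of_mul_le_mul_right h4 hj
  have hinv : Tendsto (fun j : ℕ => ((j : ℝ) + 1)⁻¹) atTop (nhds 0) := by
    simpa using (tendsto_one_div_add_atTop_nhds_zero_nat (𝕜 := ℝ))
  have hcau : CauchySeq b := by
    refine cauchySeq_of_le_tendsto_0 (fun N : ℕ => 2 * C * ((N : ℝ) + 1)⁻¹) ?_ ?_
    · intro i j N hi hj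
      have hi0 : (0 : ℝ) < (i : ℝ) + 1 := by positivity
      have h5 : ‖b i - b j‖ ≤ C * ((i : ℝ) + 1)⁻¹ + C * ((j : ℝ) + 1)⁻¹ := by
        refine le_of_mul_le_mul_left ((hb i j).trans (le_of_eq ?_)) hi0
        field_simp
      have h6 : ((i : ℝ) + 1)⁻¹ ≤ ((N : ℝ) + 1)⁻¹ := by gcongr
      have h7 : ((j : ℝ) + 1)⁻¹ ≤ ((N : ℝ) + 1)⁻¹ := by gcongr
      rw [dist_eq_norm]
      nlinarith
    · simpa using hinv.const_mul (2 * C)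
  obtain ⟨ρ, hρ⟩ := cauchySeq_tendsto_of_complete hcau
  refine ⟨ρ, ?_⟩
  intro k
  rcases k with _ | i
  · have := h 0 0
    simpa using this
  have hl : Tendsto (fun j => ((i : ℝ) + 1) * ‖b i - b j‖) atTop
      (nhds (((i : ℝ) + 1) * ‖b i - ρ‖)) :=
    ((tendsto_const_nhds.sub hρ).norm).const_mul _
  have hr : Tendsto (fun j : ℕ => C + C * ((i : ℝ) + 1) * ((j : ℝ) + 1)⁻¹) atTop (nhds C) := by
    simpa using (hinv.const_mul (C * ((i : ℝ) + 1))).const_add C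
  have h8 := le_of_tendsto_of_tendsto' hl hr (hb i)
  have hi0 : (0 : ℝ) < (i : ℝ) + 1 := by positivity
  have e : a (i + 1) - ((i + 1 : ℕ) : ℝ) • ρ = ((i : ℝ) + 1) • (b i - ρ) := by
    simp only [b, smul_sub, smul_smul]
    rw [mul_inv_cancel₀ hi0.ne', one_smul]
    push_cast
    rfl
  rw [e, norm_smul, Real.norm_of_nonneg hi0.le]
  exact h8

/-- **Rotation vector of a uniformly Lipschitz lifted flow on the torus.**
If `F : ℝ × ℝⁿ → ℝⁿ` is a lifted flow on the torus (`F 0 = id`, `F (s+t) = F s ∘ F t`,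
`F t (x + m) = F t x + m` for every integer vector `m`, jointly continuous) and every
time-`t` map is `K`-Lipschitz for some `K ≥ 1`, then there is a vector `ρ ∈ ℝⁿ` such that
`(F t q - q) / t` converges to `ρ` uniformly in `q` as `t → +∞`. -/
theorem rotation_vector_exists
    (n : ℕ) (F : ℝ → (Fin n → ℝ) → (Fin n → ℝ))
    (hcont : Continuous fun p : ℝ × (Fin n → ℝ) => F p.1 p.2)
    (hF0 : F 0 = id)
    (hflow : ∀ s t : ℝ, F (s + t) = F s ∘ F t)
    (hper : ∀ (t : ℝ) (x : Fin n → ℝ) (m : Fin n → ℤ),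
      F t (x + fun i => (m i : ℝ)) = F t x + fun i => (m i : ℝ))
    (K : NNReal) (hK : 1 ≤ K)
    (hlip : ∀ t : ℝ, LipschitzWith K (F t)) :
    ∃ ρ : Fin n → ℝ,
      TendstoUniformly (fun (t : ℝ) (q : Fin n → ℝ) => t⁻¹ • (F t q - q))
        (fun _ => ρ) atTop := by
  have hosc : ∀ (t : ℝ) (q : Fin n → ℝ), ‖(F t q - q) - F t 0‖ ≤ (K : ℝ) + 1 := by
    intro t q
    let m : Fin n → ℤ := fun i => ⌊q i⌋
    let r : Fin n → ℝ := fun i => Int.fract (q i)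
    have hq : q = r + fun i => (m i : ℝ) := by
      funext i
      simp [r, m]
    have hr : ‖r‖ ≤ 1 := by
      rw [pi_norm_le_iff_of_nonneg zero_le_one]
      intro i
      rw [Real.norm_of_nonneg (Int.fract_nonneg _)]
      exact (Int.fract_lt_one _).le
    have h1 := (hlip t).dist_le_mul r 0
    rw [dist_eq_norm, dist_zero_right] at h1
    have e : (F t q - q) - F t 0 = (F t r - F t 0) - r := by
      rw [hq, hper]
      abel
    rw [e]
    refine (norm_sub_le _ _).trans ?_
    have hK0 : (0 : ℝ) ≤ K := K.2
    nlinarith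
  have hquasi : ∀ s t : ℝ, ‖F (s + t) 0 - F s 0 - F t 0‖ ≤ (K : ℝ) + 1 := by
    intro s t
    have := hosc s (F t 0)
    rw [hflow]
    convert this using 2
    simp only [Function.comp]
    abel
  obtain ⟨ρ, hρ⟩ := quasi_additive_linear (fun k : ℕ => F (k : ℝ) 0) ((K : ℝ) + 1) (by
    intro i j
    have := hquasi i j
    push_cast
    exact this)
  have hc0 : Continuous fun t : ℝ => F t 0 :=
    hcont.comp (by fun_prop : Continuous fun t : ℝ => (t, (0 : Fin n → ℝ)))
  obtain ⟨M, hM⟩ := (isCompact_Icc (a := (0 : ℝ)) (b := 1)).exists_bound_of_continuousOn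
    hc0.continuousOn
  refine ⟨ρ, ?_⟩
  set D : ℝ := 3 * ((K : ℝ) + 1) + M + ‖ρ‖ with hD
  have hmain : ∀ t : ℝ, 0 ≤ t → ∀ q, ‖(F t q - q) - t • ρ‖ ≤ D := by
    intro t ht q
    have h1 := hosc t q
    have h2 := hquasi (⌊t⌋₊ : ℝ) (t - ⌊t⌋₊)
    rw [add_sub_cancel] at h2
    have h3 := hρ ⌊t⌋₊
    have hf0 : 0 ≤ t - ⌊t⌋₊ := sub_nonneg.2 (Nat.floor_le ht)
    have hf1 : t - ⌊t⌋₊ ≤ 1 := by linarith [Nat.lt_floor_add_one t]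
    have h4 := hM (t - ⌊t⌋₊) ⟨hf0, hf1⟩
    have h5 : ‖(t - ⌊t⌋₊) • ρ‖ ≤ ‖ρ‖ := by
      rw [norm_smul, Real.norm_of_nonneg hf0]
      exact mul_le_of_le_one_left (norm_nonneg _) hf1
    have e : (F t q - q) - t • ρ = ((F t q - q) - F t 0)
        + (F t 0 - F (⌊t⌋₊ : ℝ) 0 - F (t - ⌊t⌋₊) 0)
        + (F (⌊t⌋₊ : ℝ) 0 - (⌊t⌋₊ : ℝ) • ρ) + F (t - ⌊t⌋₊) 0 - (t - ⌊t⌋₊) • ρ := by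
      module
    rw [e]
    refine (norm_sub_le _ _).trans ?_
    refine (add_le_add (norm_add_le _ _) le_rfl).trans ?_
    refine (add_le_add (add_le_add (norm_add_le _ _) le_rfl) le_rfl).trans ?_
    refine (add_le_add (add_le_add (add_le_add (norm_add_le _ _) le_rfl) le_rfl) le_rfl).trans ?_
    linarith
  rw [Metric.tendstoUniformly_iff]
  intro ε hε
  filter_upwards [eventually_gt_atTop (0 : ℝ), eventually_gt_atTop (D / ε)] with t ht htD q
  rw [dist_comm, dist_eq_norm]
  have e : t⁻¹ • (F t q - q) - ρ = t⁻¹ • ((F t q - q) - t • ρ) := by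
    rw [smul_sub t⁻¹ (F t q - q), smul_smul, inv_mul_cancel₀ ht.ne', one_smul]
  rw [e, norm_smul, Real.norm_of_nonneg (by positivity), inv_mul_lt_iff₀ ht]
  refine (hmain t ht.le q).trans_lt ?_
  rwa [div_lt_iff₀ hε] at htD
end

section
/- Let F : ℝ × ℝⁿ → ℝⁿ be a lifted flow on the torus such that for some K ≥ 1 every time-t map F_t is K-Lipschitz, let f₁ be the induced time-one homeomorphism of 𝕋ⁿ, and let d : 𝕋ⁿ → ℝⁿ be the continuous displacement function defined by d(π(q)) = F₁(q) − q (well defined since F₁(q+m) = F₁(q)+m). Then for every f₁-invariant Borel probability measure μ on 𝕋ⁿ, the integral ∫_{𝕋ⁿ} d dμ equals the rotation vector ρ of the flow, i.e. the uniform limit of (F_t(q) − q)/t as t → +∞. In particular this integral is the same for all f₁-invariant probability measures. -/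
open MeasureTheory Filter

noncomputable section

/-- The lattice `ℤⁿ` inside `ℝⁿ`. -/
def intLattice (n : ℕ) : AddSubgroup (Fin n → ℝ) where
  carrier := {x | ∀ i, ∃ m : ℤ, x i = (m : ℝ)}
  zero_mem' := fun i => ⟨0, by simp⟩
  add_mem' := by
    intro a b ha hb i
    obtain ⟨ma, hma⟩ := ha i
    obtain ⟨mb, hmb⟩ := hb i
    exact ⟨ma + mb, by simp [hma, hmb]⟩
  neg_mem' := by
    intro a ha i
    obtain ⟨m, hm⟩ := ha i
    exact ⟨-m, by simp [hm]⟩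

/-- The torus `𝕋ⁿ = ℝⁿ/ℤⁿ`, with the quotient (semi)norm/metric. -/
abbrev Torus (n : ℕ) : Type := (Fin n → ℝ) ⧸ intLattice n

/-- The canonical projection `π : ℝⁿ → 𝕋ⁿ`. -/
def torusProj (n : ℕ) : (Fin n → ℝ) → Torus n := QuotientAddGroup.mk' (intLattice n)

instance (priority := 2000) torusMeasurableSpace (n : ℕ) : MeasurableSpace (Torus n) :=
  borel _

instance torusBorelSpace (n : ℕ) : BorelSpace (Torus n) := ⟨rfl⟩

/-- **The displacement integral of any invariant measure is the rotation vector.**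
Let `F` be a lifted flow on the torus whose time-`t` maps are all `K`-Lipschitz
(`K ≥ 1`), with rotation vector `ρ` (uniform limit of `(F t q - q)/t` as `t → +∞`).
Let `f₁` be the induced time-one homeomorphism of `𝕋ⁿ` and
`d : 𝕋ⁿ → ℝⁿ` the continuous displacement function, `d (π q) = F 1 q - q`.
Then for every `f₁`-invariant Borel probability measure `μ` on `𝕋ⁿ`,
`∫ d dμ = ρ`; in particular this integral is the same for all invariant measures. -/
theorem integral_displacement_eq_rotation_vector
    (n : ℕ) (F : ℝ → (Fin n → ℝ) → (Fin n → ℝ))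
    (hcont : Continuous fun p : ℝ × (Fin n → ℝ) => F p.1 p.2)
    (hF0 : F 0 = id)
    (hflow : ∀ s t : ℝ, F (s + t) = F s ∘ F t)
    (hper : ∀ (t : ℝ) (x : Fin n → ℝ) (m : Fin n → ℤ),
      F t (x + fun i => (m i : ℝ)) = F t x + fun i => (m i : ℝ))
    (K : NNReal) (hK : 1 ≤ K)
    (hlip : ∀ t : ℝ, LipschitzWith K (F t))
    (ρ : Fin n → ℝ)
    (hρ : TendstoUniformly (fun (t : ℝ) (q : Fin n → ℝ) => t⁻¹ • (F t q - q))
        (fun _ => ρ) atTop)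
    (f₁ : Torus n → Torus n) (hf₁cont : Continuous f₁)
    (hf₁ : ∀ q : Fin n → ℝ, f₁ (torusProj n q) = torusProj n (F 1 q))
    (d : Torus n → (Fin n → ℝ)) (hdcont : Continuous d)
    (hd : ∀ q : Fin n → ℝ, d (torusProj n q) = F 1 q - q)
    (μ : Measure (Torus n)) (hμ : IsProbabilityMeasure μ)
    (hinv : ∀ A : Set (Torus n), MeasurableSet A → μ (f₁ ⁻¹' A) = μ A) :
    ∫ x, d x ∂μ = ρ := by
  have hsurj : Function.Surjective (torusProj n) := QuotientAddGroup.mk'_surjective _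
  have hmp : MeasurePreserving f₁ μ μ :=
    ⟨hf₁cont.measurable, Measure.ext fun A hA => by
      rw [Measure.map_apply hf₁cont.measurable hA, hinv A hA]⟩
  -- boundedness of the displacement
  have hbd : ∀ x, ‖d x‖ ≤ (K : ℝ) * 1 + ‖F 1 0‖ + 1 := by
    intro x
    obtain ⟨q, rfl⟩ := hsurj x
    have hq : q = (fun i => Int.fract (q i)) + fun i => ((⌊q i⌋ : ℤ) : ℝ) := by
      funext i; simp [Int.fract_add_floor]
    have h1 : F 1 q - q = F 1 (fun i => Int.fract (q i)) - fun i => Int.fract (q i) := by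
      have h2 := hper 1 (fun i => Int.fract (q i)) (fun i => ⌊q i⌋)
      rw [← hq] at h2
      rw [h2]
      funext i
      have h7 := Int.fract_add_floor (q i)
      simp only [Pi.sub_apply, Pi.add_apply]
      linarith
    have hfr : ‖(fun i => Int.fract (q i) : Fin n → ℝ)‖ ≤ 1 := by
      rw [pi_norm_le_iff_of_nonneg zero_le_one]
      intro i
      rw [Real.norm_of_nonneg (Int.fract_nonneg _)]
      exact (Int.fract_lt_one _).le
    rw [hd, h1]
    generalize (fun i => Int.fract (q i) : Fin n → ℝ) = r at hfr
    have h3 := (hlip 1).dist_le_mul r 0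
    rw [dist_eq_norm, dist_zero_right] at h3
    have h4 : ‖F 1 r‖ ≤ ‖F 1 r - F 1 0‖ + ‖F 1 0‖ := by
      simpa using norm_add_le (F 1 r - F 1 0) (F 1 0)
    have h5 := norm_sub_le (F 1 r) r
    have h6 : (K : ℝ) * ‖r‖ ≤ K * 1 := mul_le_mul_of_nonneg_left hfr K.2
    linarith
  have hint : Integrable d μ :=
    Integrable.of_bound hdcont.aestronglyMeasurable _ (Eventually.of_forall hbd)
  have hiter : ∀ (k : ℕ) (q : Fin n → ℝ), f₁^[k] (torusProj n q) = torusProj n (F k q) := by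
    intro k q
    induction k with
    | zero => simp [hF0]
    | succ k ih =>
      rw [Function.iterate_succ_apply', ih, hf₁]
      congr 1
      have := congrFun (hflow 1 k) q
      rw [Nat.cast_succ, add_comm, this]; rfl
  have hsum : ∀ (N : ℕ) (q : Fin n → ℝ),
      ∑ k ∈ Finset.range N, d (f₁^[k] (torusProj n q)) = F N q - q := by
    intro N q
    induction N with
    | zero => simp [hF0]
    | succ k ih =>
      rw [Finset.sum_range_succ, ih, hiter, hd]
      have := congrFun (hflow 1 k) q
      rw [Nat.cast_succ, add_comm (k : ℝ) 1, this]
      simp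
  have hintk : ∀ k : ℕ, Integrable (fun x => d (f₁^[k] x)) μ := fun k =>
    (hmp.iterate k).integrable_comp_of_integrable hint
  have hk : ∀ k : ℕ, ∫ x, d (f₁^[k] x) ∂μ = ∫ x, d x ∂μ := by
    intro k
    have h := (hmp.iterate k)
    have h2 := integral_map (μ := μ) h.measurable.aemeasurable
      (f := d) hdcont.aestronglyMeasurable
    rw [h.map_eq] at h2
    exact h2.symm
  have hS : ∀ N : ℕ, ∫ x, ∑ k ∈ Finset.range N, d (f₁^[k] x) ∂μ = (N : ℝ) • ∫ x, d x ∂μ := by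
    intro N
    rw [integral_finsetSum _ fun k _ => hintk k]
    simp [hk, Nat.cast_smul_eq_nsmul]
  rw [← sub_eq_zero, ← norm_le_zero_iff]
  refine le_of_forall_pos_le_add fun ε hε => ?_
  rw [Metric.tendstoUniformly_iff] at hρ
  obtain ⟨N, hN, hN0⟩ := ((tendsto_natCast_atTop_atTop.eventually (hρ ε hε)).and
    (eventually_gt_atTop 0)).exists
  have hN' : (N : ℝ) ≠ 0 := by exact_mod_cast hN0.ne'
  have hmain : ∫ x, d x ∂μ - ρ
      = ∫ x, ((N : ℝ)⁻¹ • ∑ k ∈ Finset.range N, d (f₁^[k] x) - ρ) ∂μ := by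
    have hI : Integrable (fun x => (N : ℝ)⁻¹ • ∑ k ∈ Finset.range N, d (f₁^[k] x)) μ :=
      Integrable.smul (N : ℝ)⁻¹ (f := fun x => ∑ k ∈ Finset.range N, d (f₁^[k] x))
        (integrable_finsetSum _ fun k _ => hintk k)
    rw [integral_sub hI (integrable_const _),
      integral_smul, hS, smul_smul, inv_mul_cancel₀ hN']
    simp
  rw [hmain, zero_add]
  have := norm_integral_le_of_norm_le_const (μ := μ) (C := ε)
    (f := fun x => ((N : ℝ)⁻¹ • ∑ k ∈ Finset.range N, d (f₁^[k] x) - ρ))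
    (Eventually.of_forall fun x => by
      obtain ⟨q, rfl⟩ := hsurj x
      have h := hN q
      rw [dist_comm, dist_eq_norm] at h
      simp only [hsum]
      exact h.le)
  simpa using this
end
end

section
/- Let F : ℝ × ℝⁿ → ℝⁿ be a lifted flow on the torus such that for some K ≥ 1 every time-t map F_t is K-Lipschitz, let (f_t) be the induced flow on 𝕋ⁿ, and let ρ ∈ ℝⁿ be the rotation vector (the uniform limit of (F_t(q) − q)/t as t → +∞). Assume ρ is completely irrational, i.e. for every k ∈ ℤⁿ \ {0} one has ⟨k, ρ⟩ ∉ ℤ (equivalently, the translation x ↦ x + π(ρ) of 𝕋ⁿ is minimal). Then there exists a K-Lipschitz homeomorphism h : 𝕋ⁿ → 𝕋ⁿ such that h(f_t(x)) = h(x) + π(tρ) for all t ∈ ℝ and all x ∈ 𝕋ⁿ. -/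
open Filter

noncomputable section

section Helpers

open Filter MeasureTheory Topology

noncomputable local instance kMS : MeasureSpace UnitAddCircle := ⟨AddCircle.haarAddCircle⟩
local instance kHaar : Measure.IsAddHaarMeasure (volume : Measure UnitAddCircle) :=
  inferInstanceAs (Measure.IsAddHaarMeasure AddCircle.haarAddCircle)
local instance kProb : IsProbabilityMeasure (volume : Measure UnitAddCircle) :=
  inferInstanceAs (IsProbabilityMeasure AddCircle.haarAddCircle)

theorem mFourier_add_arg {n : ℕ} (k : Fin n → ℤ) (x y : UnitAddTorus (Fin n)) :
    UnitAddTorus.mFourier k (x + y) = UnitAddTorus.mFourier k x * UnitAddTorus.mFourier k y := by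
  simp only [UnitAddTorus.mFourier, ContinuousMap.coe_mk, Pi.add_apply, fourier_apply, smul_add,
    AddCircle.toCircle_add, Circle.coe_mul, Finset.prod_mul_distrib]

theorem const_of_invariant {n : ℕ} (a : UnitAddTorus (Fin n))
    (ha : ∀ k : Fin n → ℤ, k ≠ 0 → UnitAddTorus.mFourier k a ≠ 1)
    (f : C(UnitAddTorus (Fin n), ℂ)) (hf : ∀ x, f (x + a) = f x) (x y) : f x = f y := by
  have h0 : ∀ k : Fin n → ℤ, k ≠ 0 → UnitAddTorus.mFourierCoeff f k = 0 := by
    intro k hk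
    have e1 : UnitAddTorus.mFourierCoeff f k
        = UnitAddTorus.mFourier (-k) a * UnitAddTorus.mFourierCoeff f k := by
      unfold UnitAddTorus.mFourierCoeff
      conv_lhs => rw [← integral_add_right_eq_self _ a]
      rw [← integral_const_mul]
      congr 1
      ext t
      rw [mFourier_add_arg, hf]
      simp only [smul_eq_mul]; ring
    have h2 := ha (-k) (by simpa using hk)
    have : (UnitAddTorus.mFourier (-k) a - 1) * UnitAddTorus.mFourierCoeff f k = 0 := by
      linear_combination -e1
    rcases mul_eq_zero.1 this with h | h
    · exact absurd (sub_eq_zero.1 h) h2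
    · exact h
  have hs : Summable (UnitAddTorus.mFourierCoeff f) :=
    summable_of_ne_finset_zero (s := {0}) (fun b hb => h0 b (by simpa using hb))
  have key : ∀ x, f x = UnitAddTorus.mFourierCoeff f 0 := by
    intro x
    have h1 := UnitAddTorus.hasSum_mFourier_series_apply_of_summable hs x
    have h2 := hasSum_single (f := fun i ↦ UnitAddTorus.mFourierCoeff f i • UnitAddTorus.mFourier i x) 0
      (fun b hb => by simp [h0 b hb])
    have := h1.unique h2
    simpa [UnitAddTorus.mFourier_zero] using this
  rw [key x, key y]

theorem kron_torus {n : ℕ} (a : UnitAddTorus (Fin n))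
    (ha : ∀ k : Fin n → ℤ, k ≠ 0 → UnitAddTorus.mFourier k a ≠ 1)
    (y : UnitAddTorus (Fin n)) (ε : ℝ) (hε : 0 < ε) : ∃ j : ℤ, dist y (j • a) < ε := by
  set S : Set (UnitAddTorus (Fin n)) := Set.range (fun j : ℤ => j • a) with hS
  have hne : S.Nonempty := Set.range_nonempty _
  let f : C(UnitAddTorus (Fin n), ℂ) :=
    ⟨fun x => (Metric.infDist x S : ℂ), by
      exact Complex.continuous_ofReal.comp (Metric.continuous_infDist_pt S)⟩
  have hle : ∀ (b x : UnitAddTorus (Fin n)), (∀ s ∈ S, s + b ∈ S) →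
      Metric.infDist (x + b) S ≤ Metric.infDist x S := by
    intro b x hb
    rw [Metric.le_infDist hne]
    intro s hs
    calc _ ≤ dist (x + b) (s + b) := Metric.infDist_le_dist_of_mem (hb s hs)
      _ = dist x s := dist_add_right _ _ _
  have hinv : ∀ x, f (x + a) = f x := by
    intro x
    have h1 := hle a x (by rintro _ ⟨j, rfl⟩; exact ⟨j + 1, by simp [add_smul]⟩)
    have h2 := hle (-a) (x + a) (by rintro _ ⟨j, rfl⟩; exact ⟨j - 1, by
      show (j - 1) • a = j • a + -a
      rw [sub_zsmul, one_zsmul]⟩)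
    rw [add_neg_cancel_right] at h2
    simp only [f, ContinuousMap.coe_mk, le_antisymm h1 h2]
  have h := const_of_invariant a ha f hinv y 0
  have h0 : Metric.infDist (0 : UnitAddTorus (Fin n)) S = 0 :=
    Metric.infDist_zero_of_mem ⟨0, by simp⟩
  have hy : Metric.infDist y S = 0 := by
    simpa [f, h0] using h
  obtain ⟨s, ⟨j, rfl⟩, hs⟩ := (Metric.infDist_lt_iff hne).1 (hy.trans_lt hε)
  exact ⟨j, hs⟩

theorem kron {n : ℕ} (ρ : Fin n → ℝ)
    (hirr : ∀ k : Fin n → ℤ, k ≠ 0 → ∀ m : ℤ, (∑ i, (k i : ℝ) * ρ i) ≠ (m : ℝ))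
    (y : Fin n → ℝ) (ε : ℝ) (hε : 0 < ε) :
    ∃ (t : ℝ) (m : Fin n → ℤ), ‖t • ρ + (fun i => (m i : ℝ)) - y‖ < ε := by
  obtain ⟨j, hj⟩ := kron_torus (n := n) (fun i => (ρ i : UnitAddCircle)) (by
    intro k hk h1
    simp only [UnitAddTorus.mFourier, ContinuousMap.coe_mk, fourier_coe_apply] at h1
    rw [← Complex.exp_sum, Complex.exp_eq_one_iff] at h1
    obtain ⟨m, hm⟩ := h1
    apply hirr k hk m
    have h3 : (2 * Real.pi * Complex.I) * ((∑ i, (k i : ℝ) * ρ i : ℝ) : ℂ)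
        = (2 * Real.pi * Complex.I) * (m : ℝ) := by
      push_cast
      rw [Finset.mul_sum, mul_comm _ (m : ℂ), ← hm]
      apply Finset.sum_congr rfl
      intros; push_cast; ring
    have h4 := mul_left_cancel₀ Complex.two_pi_I_ne_zero h3
    exact_mod_cast h4) (fun i => (y i : UnitAddCircle)) ε hε
  refine ⟨j, fun i => - round ((j : ℝ) * ρ i - y i), ?_⟩
  rw [pi_norm_lt_iff hε]
  intro i
  rw [dist_pi_lt_iff hε] at hj
  have := hj i
  rw [dist_comm, dist_eq_norm] at this
  simp only [Pi.smul_apply] at this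
  rw [← AddCircle.coe_zsmul, ← AddCircle.coe_sub, UnitAddCircle.norm_eq] at this
  simp only [zsmul_eq_mul] at this
  rw [Real.norm_eq_abs]
  convert this using 2
  simp; ring

theorem exists_int_close {n : ℕ} (q q' : Fin n → ℝ) :
    ∃ m : Fin n → ℤ, ‖q - (q' + fun i => (m i : ℝ))‖ ≤ 1 := by
  refine ⟨fun i => ⌊q i - q' i⌋, ?_⟩
  rw [pi_norm_le_iff_of_nonneg zero_le_one]
  intro i
  have h1 := Int.floor_le (q i - q' i)
  have h2 := Int.lt_floor_add_one (q i - q' i)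
  simp only [Pi.sub_apply, Pi.add_apply, Real.norm_eq_abs]
  rw [abs_le]; constructor <;> linarith

theorem osc_bound {n : ℕ} (G : (Fin n → ℝ) → (Fin n → ℝ)) (K : NNReal)
    (hlip : LipschitzWith K G)
    (hper : ∀ (x : Fin n → ℝ) (m : Fin n → ℤ),
      G (x + fun i => (m i : ℝ)) = G x + fun i => (m i : ℝ)) (q q' : Fin n → ℝ) :
    ‖(G q - q) - (G q' - q')‖ ≤ K + 1 := by
  obtain ⟨m, hm⟩ := exists_int_close q q'
  have h1 : (G q - q) - (G q' - q') = (G q - G (q' + fun i => (m i : ℝ)))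
      - (q - (q' + fun i => (m i : ℝ))) := by
    rw [hper]; abel
  rw [h1]
  have h2 : ‖G q - G (q' + fun i => (m i : ℝ))‖ ≤ K * ‖q - (q' + fun i => (m i : ℝ))‖ :=
    by simpa [dist_eq_norm] using hlip.dist_le_mul q (q' + fun i => (m i : ℝ))
  have h3 : (K : ℝ) * ‖q - (q' + fun i => (m i : ℝ))‖ ≤ K * 1 := by gcongr
  refine (norm_sub_le _ _).trans ?_
  linarith

theorem flow_bound {n : ℕ} (F : ℝ → (Fin n → ℝ) → (Fin n → ℝ))
    (hF0 : F 0 = id)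
    (hflow : ∀ s t : ℝ, F (s + t) = F s ∘ F t)
    (hper : ∀ (t : ℝ) (x : Fin n → ℝ) (m : Fin n → ℤ),
      F t (x + fun i => (m i : ℝ)) = F t x + fun i => (m i : ℝ))
    (K : NNReal)
    (hlip : ∀ t : ℝ, LipschitzWith K (F t))
    (ρ : Fin n → ℝ)
    (hρ : TendstoUniformly (fun (t : ℝ) (q : Fin n → ℝ) => t⁻¹ • (F t q - q))
        (fun _ => ρ) atTop) (t : ℝ) (q : Fin n → ℝ) :
    ‖F t q - q - t • ρ‖ ≤ K + 1 := by
  have hiter : ∀ (t : ℝ) (q) (j : ℕ), ‖(F (j * t) q - q) - (j : ℝ) • (F t q - q)‖ ≤ j * (K + 1) := by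
    intro t q j
    induction j with
    | zero => simp [hF0]
    | succ j ih =>
      have e : F ((j + 1 : ℕ) * t) q = F t (F (j * t) q) := by
        have : ((j + 1 : ℕ) : ℝ) * t = t + j * t := by push_cast; ring
        rw [this, hflow]; rfl
      have e2 : (F ((j + 1 : ℕ) * t) q - q) - ((j + 1 : ℕ) : ℝ) • (F t q - q)
          = ((F (j * t) q - q) - (j : ℝ) • (F t q - q))
            + ((F t (F (j * t) q) - F (j * t) q) - (F t q - q)) := by
        rw [e]; push_cast; rw [add_smul, one_smul]; abel
      rw [e2]
      refine (norm_add_le _ _).trans ?_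
      have := osc_bound (F t) K (hlip t) (hper t) (F (j * t) q) q
      push_cast; linarith
  have hpos : ∀ (t : ℝ) (q), 0 < t → ‖F t q - q - t • ρ‖ ≤ K + 1 := by
    intro t q ht
    have h1 : Tendsto (fun j : ℕ => ((j : ℝ) * t)⁻¹ • (F (j * t) q - q)) atTop (𝓝 ρ) := by
      have h2 : Tendsto (fun j : ℕ => (j : ℝ) * t) atTop atTop :=
        tendsto_natCast_atTop_atTop.atTop_mul_const ht
      exact (hρ.tendsto_at q).comp h2
    have h3 : Tendsto (fun j : ℕ => ‖F t q - q - t • (((j : ℝ) * t)⁻¹ • (F (j * t) q - q))‖) atTop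
        (𝓝 ‖F t q - q - t • ρ‖) :=
      (tendsto_const_nhds.sub (h1.const_smul t)).norm
    refine le_of_tendsto h3 ?_
    filter_upwards [eventually_gt_atTop 0] with j hj
    have hj' : (0 : ℝ) < j := by exact_mod_cast hj
    have e : F t q - q - t • (((j : ℝ) * t)⁻¹ • (F (j * t) q - q))
        = (-(j : ℝ)⁻¹) • ((F (j * t) q - q) - (j : ℝ) • (F t q - q)) := by
      rw [smul_sub (-(j : ℝ)⁻¹), smul_smul, smul_smul]
      have e1 : t * ((j : ℝ) * t)⁻¹ = (j : ℝ)⁻¹ := by field_simp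
      have e2 : -(j : ℝ)⁻¹ * j = -1 := by field_simp
      rw [e1, e2, neg_smul, neg_smul, one_smul]; abel
    rw [e, norm_smul, norm_neg, norm_inv, Real.norm_natCast]
    rw [inv_mul_le_iff₀ hj']
    exact hiter t q j
  rcases lt_trichotomy t 0 with ht | ht | ht
  · have h1 := hpos (-t) (F t q) (by linarith)
    have h2 : F (-t) (F t q) = q := by
      have := congrFun (hflow (-t) t) q
      simp [hF0] at this; exact this.symm
    rw [h2, ← norm_neg] at h1
    have e : -(q - F t q - -t • ρ) = F t q - q - t • ρ := by rw [neg_smul]; abel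
    rwa [e] at h1
  · subst ht; simp [hF0]; positivity
  · exact hpos t q ht

/-- The semiconjugacy. -/
theorem exists_semiconj {n : ℕ} (F : ℝ → (Fin n → ℝ) → (Fin n → ℝ))
    (hflow : ∀ s t : ℝ, F (s + t) = F s ∘ F t)
    (hper : ∀ (t : ℝ) (x : Fin n → ℝ) (m : Fin n → ℤ),
      F t (x + fun i => (m i : ℝ)) = F t x + fun i => (m i : ℝ))
    (K : NNReal)
    (hlip : ∀ t : ℝ, LipschitzWith K (F t))
    (ρ : Fin n → ℝ) (C : ℝ)
    (hb : ∀ t q, ‖F t q - q - t • ρ‖ ≤ C) :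
    ∃ H : (Fin n → ℝ) → (Fin n → ℝ), LipschitzWith K H ∧ (∀ t q, H (F t q) = H q + t • ρ) ∧
      (∀ (x : Fin n → ℝ) (m : Fin n → ℤ),
        H (x + fun i => (m i : ℝ)) = H x + fun i => (m i : ℝ)) ∧ ∀ q, ‖H q - q‖ ≤ C := by
  have hC : 0 ≤ C := (norm_nonneg _).trans (hb 0 0)
  have hbi : ∀ t q i, |F t q i - t * ρ i - q i| ≤ C := by
    intro t q i
    have := (norm_le_pi_norm (F t q - q - t • ρ) i).trans (hb t q)
    simp only [Pi.sub_apply, Pi.smul_apply, smul_eq_mul, Real.norm_eq_abs] at this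
    have e : F t q i - t * ρ i - q i = F t q i - q i - t * ρ i := by ring
    rwa [e]
  have hbdd : ∀ q i, BddAbove (Set.range fun t : ℝ => F t q i - t * ρ i) := by
    intro q i
    refine ⟨q i + C, ?_⟩
    rintro _ ⟨t, rfl⟩
    have := (abs_le.1 (hbi t q i)).2
    linarith
  refine ⟨fun q i => ⨆ t : ℝ, (F t q i - t * ρ i), ?_, ?_, ?_, ?_⟩
  · have key : ∀ x y i, (⨆ t : ℝ, (F t x i - t * ρ i)) ≤ (⨆ t : ℝ, (F t y i - t * ρ i)) + K * dist x y := by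
      intro x y i
      apply ciSup_le
      intro t
      have h1 := le_ciSup (hbdd y i) t
      have h2 := (dist_le_pi_dist (F t x) (F t y) i).trans ((hlip t).dist_le_mul x y)
      rw [Real.dist_eq] at h2
      have h3 := (abs_le.1 h2).2
      linarith
    apply LipschitzWith.of_dist_le_mul
    intro x y
    rw [dist_pi_le_iff (by positivity)]
    intro i
    rw [Real.dist_eq, abs_le]
    have h1 := key x y i
    have h2 := key y x i
    rw [dist_comm] at h2
    constructor <;> linarith
  · intro s q
    ext i
    simp only [Pi.add_apply, Pi.smul_apply, smul_eq_mul]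
    have e : ∀ t, F t (F s q) i - t * ρ i = (F (t + s) q i - (t + s) * ρ i) + s * ρ i := by
      intro t; rw [hflow]; simp only [Function.comp]; ring
    simp_rw [e]
    rw [← ciSup_add]
    · congr 1
      exact (Equiv.addRight s).iSup_comp (g := fun t => F t q i - t * ρ i)
    · obtain ⟨b, hb⟩ := hbdd q i
      exact ⟨b, by rintro _ ⟨t, rfl⟩; exact hb ⟨t + s, rfl⟩⟩
  · intro x m
    ext i
    simp only [hper, Pi.add_apply]
    rw [ciSup_add (hbdd x i)]
    congr 1; ext t; ring
  · intro q
    rw [pi_norm_le_iff_of_nonneg hC]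
    intro i
    rw [Pi.sub_apply, Real.norm_eq_abs, abs_le]
    constructor
    · have h1 := le_ciSup (hbdd q i) 0
      have := (abs_le.1 (hbi 0 q i)).1
      linarith
    · rw [sub_le_iff_le_add]
      apply ciSup_le
      intro t
      have := (abs_le.1 (hbi t q i)).2
      linarith

def IsConfig {n : ℕ} (H : (Fin n → ℝ) → (Fin n → ℝ)) {N : ℕ} (δ : ℝ) (y : Fin n → ℝ)
    (X : Fin N → (Fin n → ℝ)) : Prop :=
  (∀ i, H (X i) = y) ∧ ∀ i j, i ≠ j → δ ≤ dist (X i) (X j)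

theorem limit_config {n : ℕ} (H : (Fin n → ℝ) → (Fin n → ℝ)) (hH : Continuous H)
    (C : ℝ) (hC : ∀ q, ‖H q - q‖ ≤ C) {N : ℕ} (δ : ℝ) (y : Fin n → ℝ) (u : ℕ → Fin n → ℝ)
    (hu : Tendsto u atTop (𝓝 y)) (X : ℕ → Fin N → (Fin n → ℝ)) (hX : ∀ j, IsConfig H δ (u j) (X j)) :
    ∃ Z : Fin N → (Fin n → ℝ), IsConfig H δ y Z ∧ ∃ φ : ℕ → ℕ, StrictMono φ ∧
      Tendsto (X ∘ φ) atTop (𝓝 Z) := by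
  have hC0 : 0 ≤ C := (norm_nonneg _).trans (hC 0)
  obtain ⟨R, hR⟩ := (Metric.isBounded_range_of_tendsto u hu).exists_norm_le
  have hR0 : 0 ≤ R := (norm_nonneg _).trans (hR (u 0) ⟨0, rfl⟩)
  have hb : ∀ j, X j ∈ Metric.closedBall (0 : Fin N → (Fin n → ℝ)) (R + C) := by
    intro j
    rw [mem_closedBall_zero_iff, pi_norm_le_iff_of_nonneg (by positivity)]
    intro i
    have h1 := hC (X j i)
    rw [(hX j).1 i] at h1
    have h2 := hR (u j) ⟨j, rfl⟩
    have h3 := norm_sub_norm_le (X j i) (u j)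
    rw [norm_sub_rev] at h3
    linarith
  obtain ⟨Z, -, φ, hφ, hZ⟩ := tendsto_subseq_of_bounded Metric.isBounded_closedBall hb
  refine ⟨Z, ⟨?_, ?_⟩, φ, hφ, hZ⟩
  · intro i
    have h1 : Tendsto (fun j => H ((X ∘ φ) j i)) atTop (𝓝 (H (Z i))) :=
      (hH.tendsto _).comp ((tendsto_pi_nhds.1 hZ) i)
    have h2 : Tendsto (fun j => H ((X ∘ φ) j i)) atTop (𝓝 y) := by
      have : (fun j => H ((X ∘ φ) j i)) = u ∘ φ := by
        ext1 j; exact (hX (φ j)).1 i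
      rw [this]; exact hu.comp hφ.tendsto_atTop
    exact tendsto_nhds_unique h1 h2
  · intro i j hij
    refine ge_of_tendsto (((tendsto_pi_nhds.1 hZ) i).dist ((tendsto_pi_nhds.1 hZ) j)) ?_
    exact Eventually.of_forall fun k => (hX (φ k)).2 i j hij

theorem transfer_config {n : ℕ} (H : (Fin n → ℝ) → (Fin n → ℝ)) (hH : Continuous H)
    (C : ℝ) (hC : ∀ q, ‖H q - q‖ ≤ C) (K : ℝ) (hK : 0 < K)
    (hdense : ∀ (y y0 : Fin n → ℝ) (ε : ℝ), 0 < ε → ∃ (G : (Fin n → ℝ) → (Fin n → ℝ)) (w : Fin n → ℝ),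
      (∀ x, H (G x) = H x + w) ∧ (∀ x x', dist x x' ≤ K * dist (G x) (G x')) ∧ dist (y0 + w) y < ε)
    {N : ℕ} (δ : ℝ) (y0 : Fin n → ℝ) (X : Fin N → (Fin n → ℝ)) (hX : IsConfig H δ y0 X)
    (y : Fin n → ℝ) : ∃ Z : Fin N → (Fin n → ℝ), IsConfig H (δ / K) y Z := by
  choose G w hG1 hG2 hG3 using fun j : ℕ => hdense y y0 (1 / ((j : ℝ) + 1)) (by positivity)
  have hu : Tendsto (fun j => y0 + w j) atTop (𝓝 y) := by
    rw [tendsto_iff_dist_tendsto_zero]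
    exact squeeze_zero (fun _ => dist_nonneg) (fun j => (hG3 j).le) tendsto_one_div_add_atTop_nhds_zero_nat
  obtain ⟨Z, hZ, -⟩ := limit_config H hH C hC (δ / K) y _ hu (fun j i => G j (X i)) (by
    intro j
    refine ⟨fun i => by rw [hG1, hX.1], fun i i' h => ?_⟩
    rw [div_le_iff₀' hK]
    exact (hX.2 i i' h).trans (hG2 j _ _))
  exact ⟨Z, hZ⟩

theorem count_bound {n : ℕ} (H : (Fin n → ℝ) → (Fin n → ℝ)) (K : NNReal) (hH : LipschitzWith K H)
    (R : ℕ) (hC : ∀ q, ‖H q - q‖ ≤ R) {N : ℕ} (δ : ℝ) (hδ : 0 < δ)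
    (hX : ∀ y, ∃ X : Fin N → (Fin n → ℝ), IsConfig H δ y X) :
    (N : ℝ) ≤ ((2 * (R + 1) + 1) * (2 * K)) ^ n := by
  classical
  obtain ⟨L, hL⟩ := exists_nat_gt (2 / δ)
  have hL0 : (0 : ℝ) < L := lt_trans (by positivity) hL
  have hL1 : (1 : ℝ) ≤ L := by exact_mod_cast (Nat.one_le_iff_ne_zero.2 (by rintro rfl; simp at hL0))
  have hLδ : 2 / L < δ := by
    rw [div_lt_iff₀ hL0]; rw [div_lt_iff₀ hδ] at hL; linarith
  let M : ℤ := (R + 1) * L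
  let I : Finset (Fin n → ℤ) := Fintype.piFinset fun _ => Finset.Icc (-M) M
  let p : (Fin n → ℤ) → (Fin n → ℝ) := fun c i => (c i : ℝ) / L
  let B : (Fin n → ℤ) → Set (Fin n → ℝ) := fun c => Metric.closedBall (H (p c)) (K / L)
  have hcl : ∀ x : Fin n → ℝ, dist x (p fun i => ⌊L * x i⌋) ≤ 1 / L := by
    intro x
    rw [dist_pi_le_iff (by positivity)]
    intro i
    have h1 := Int.floor_le (L * x i)
    have h2 := Int.lt_floor_add_one (L * x i)
    have e : x i - p (fun i => ⌊L * x i⌋) i = (L * x i - ⌊L * x i⌋) / L := by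
      simp only [p]; field_simp
    rw [Real.dist_eq, e, abs_div, abs_of_pos hL0]
    gcongr
    rw [abs_le]; constructor <;> linarith
  have hcount : ∀ y ∈ Set.Icc (0 : Fin n → ℝ) 1,
      (N : ENNReal) ≤ ∑ c ∈ I, (B c).indicator (fun _ => (1 : ENNReal)) y := by
    intro y hy
    obtain ⟨X, hX1, hX2⟩ := hX y
    let c : Fin N → (Fin n → ℤ) := fun i k => ⌊L * X i k⌋
    have hinj : Function.Injective c := by
      intro i j hij
      by_contra hne
      have h1 := hX2 i j hne
      have h2 := hcl (X i)
      have h3 := hcl (X j)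
      have h4 : dist (X i) (X j) ≤ 1 / L + 1 / L := by
        refine (dist_triangle_right _ _ (p (c i))).trans (add_le_add h2 ?_)
        rw [hij]; exact h3
      have : (1 : ℝ) / L + 1 / L = 2 / L := by ring
      linarith
    have hsub : Finset.univ.image c ⊆ I.filter (fun d => y ∈ B d) := by
      intro d hd
      obtain ⟨i, -, rfl⟩ := Finset.mem_image.1 hd
      rw [Finset.mem_filter]
      constructor
      · rw [Fintype.mem_piFinset]
        intro k
        have hyk : ‖y‖ ≤ 1 := by
          rw [pi_norm_le_iff_of_nonneg zero_le_one]
          intro k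
          have h1 := hy.1 k
          have h2 := hy.2 k
          simp only [Pi.zero_apply, Pi.one_apply] at h1 h2
          rw [Real.norm_eq_abs, abs_le]; constructor <;> linarith
        have h1 := hC (X i)
        rw [hX1] at h1
        have h3 := norm_sub_norm_le (X i) y
        rw [norm_sub_rev] at h3
        have h4 := norm_le_pi_norm (X i) k
        have h5 : |X i k| ≤ R + 1 := by rw [← Real.norm_eq_abs]; linarith
        rw [abs_le] at h5
        rw [Finset.mem_Icc]
        constructor
        · apply Int.le_floor.2
          simp only [M]; push_cast; nlinarith
        · have : ((⌊L * X i k⌋ : ℤ) : ℝ) ≤ (M : ℝ) := by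
            refine (Int.floor_le _).trans ?_
            simp only [M]; push_cast; nlinarith
          exact_mod_cast this
      · have h1 := hH.dist_le_mul (X i) (p (c i))
        rw [hX1] at h1
        refine Metric.mem_closedBall.2 (h1.trans ?_)
        calc (K : ℝ) * dist (X i) (p (c i)) ≤ K * (1 / L) := by gcongr; exact hcl (X i)
          _ = K / L := by ring
    have hcard := Finset.card_le_card hsub
    rw [Finset.card_image_of_injective _ hinj, Finset.card_univ, Fintype.card_fin] at hcard
    have e : ∑ c ∈ I, (B c).indicator (fun _ => (1 : ENNReal)) y
        = ((I.filter (fun d => y ∈ B d)).card : ENNReal) := by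
      simp only [Set.indicator_apply, Finset.sum_boole]
    rw [e]; exact_mod_cast hcard
  have hvolI : volume (Set.Icc (0 : Fin n → ℝ) 1) = 1 := by
    rw [Real.volume_Icc_pi]; simp
  have hint : (N : ENNReal) ≤ ∑ c ∈ I, volume (B c) := by
    calc (N : ENNReal) = ∫⁻ _ in Set.Icc (0 : Fin n → ℝ) 1, (N : ENNReal) := by
          rw [setLIntegral_const, hvolI, mul_one]
      _ ≤ ∫⁻ y in Set.Icc (0 : Fin n → ℝ) 1, ∑ c ∈ I, (B c).indicator (fun _ => (1 : ENNReal)) y :=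
          setLIntegral_mono' measurableSet_Icc hcount
      _ ≤ ∫⁻ y, ∑ c ∈ I, (B c).indicator (fun _ => (1 : ENNReal)) y := setLIntegral_le_lintegral _ _
      _ = ∑ c ∈ I, volume (B c) := by
          rw [lintegral_finsetSum]
          · apply Finset.sum_congr rfl
            intro c _
            exact lintegral_indicator_one Metric.isClosed_closedBall.measurableSet
          · intro c _
            exact measurable_const.indicator Metric.isClosed_closedBall.measurableSet
  have hKL : (0 : ℝ) ≤ K / L := by positivity
  have hvol : ∀ c, volume (B c) = ENNReal.ofReal ((2 * (K / L)) ^ n) := by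
    intro c
    simp only [B]
    rw [Real.volume_pi_closedBall _ hKL, Fintype.card_fin]
  have hcardI : (I.card : ℝ) = (2 * (R + 1) * L + 1) ^ n := by
    simp only [I, Fintype.card_piFinset, Int.card_Icc, Finset.prod_const, Finset.card_univ, Fintype.card_fin]
    push_cast
    congr 1
    have : ((M + 1 - -M).toNat : ℤ) = M + 1 - -M := Int.toNat_of_nonneg (by
      have : 0 ≤ M := by positivity
      linarith)
    have h2 : (((M + 1 - -M).toNat : ℤ) : ℝ) = ((M + 1 - -M : ℤ) : ℝ) := by rw [this]
    push_cast at h2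
    rw [h2]; simp only [M]; push_cast; ring
  simp_rw [hvol] at hint
  rw [Finset.sum_const, nsmul_eq_mul] at hint
  have hfin : (N : ℝ) ≤ I.card * (2 * (K / L)) ^ n := by
    rw [← ENNReal.ofReal_natCast, ← ENNReal.ofReal_natCast, ← ENNReal.ofReal_mul (by positivity)] at hint
    exact (ENNReal.ofReal_le_ofReal_iff (by positivity)).1 hint
  refine hfin.trans ?_
  rw [hcardI, ← mul_pow]
  have h1 : (2 * ((R : ℝ) + 1) * L + 1) ≤ (2 * (R + 1) + 1) * L := by nlinarith
  have h2 : (2 * ((R : ℝ) + 1) * L + 1) * (2 * (K / L)) ≤ (2 * (R + 1) + 1) * (2 * K) := by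
    calc (2 * ((R : ℝ) + 1) * L + 1) * (2 * (K / L))
        ≤ ((2 * (R + 1) + 1) * L) * (2 * (K / L)) := by gcongr
      _ = _ := by field_simp
  exact pow_le_pow_left₀ (by positivity) h2 n

theorem inj_of_covering {n : ℕ} (H : (Fin n → ℝ) → (Fin n → ℝ)) (hc : IsCoveringMap H) :
    Function.Injective H := by
  intro x x' hxx
  obtain ⟨s, ⟨hs1, hs2⟩, -⟩ := hc.existsUnique_continuousMap_lifts (ContinuousMap.id (Fin n → ℝ)) (H x) x rfl
  have h : (⇑s ∘ H) = id := by
    refine hc.eq_of_comp_eq (s.continuous.comp hc.continuous) continuous_id ?_ x (by simpa using hs1)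
    rw [← Function.comp_assoc, hs2]; rfl
  have h1 := congrFun h x
  have h2 := congrFun h x'
  simp only [Function.comp, id] at h1 h2
  rw [← h1, ← h2, hxx]

theorem bijective_of_dense {n : ℕ} (H : (Fin n → ℝ) → (Fin n → ℝ)) (K : NNReal) (hK : 1 ≤ K)
    (hH : LipschitzWith K H) (C : ℝ) (hC : ∀ q, ‖H q - q‖ ≤ C)
    (hdense : ∀ (y y0 : Fin n → ℝ) (ε : ℝ), 0 < ε → ∃ (G : (Fin n → ℝ) → (Fin n → ℝ)) (w : Fin n → ℝ),
      (∀ x, H (G x) = H x + w) ∧ (∀ x x', dist x x' ≤ K * dist (G x) (G x')) ∧ dist (y0 + w) y < ε) :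
    Function.Bijective H ∧ IsOpenMap H := by
  have hK0 : (0 : ℝ) < K := lt_of_lt_of_le zero_lt_one (by exact_mod_cast hK)
  obtain ⟨R, hR⟩ := exists_nat_ge C
  -- injective configurations are separated
  have hsep : ∀ {N : ℕ} (X : Fin N → (Fin n → ℝ)), Function.Injective X →
      ∃ δ > 0, ∀ i j, i ≠ j → δ ≤ dist (X i) (X j) := by
    intro N X hX
    have : ∀ᶠ δ in 𝓝[>] (0 : ℝ), ∀ i j, i ≠ j → δ ≤ dist (X i) (X j) := by
      rw [eventually_all]; intro i
      rw [eventually_all]; intro j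
      by_cases hij : i = j
      · exact Eventually.of_forall fun _ h => absurd hij h
      · have hpos : 0 < dist (X i) (X j) := dist_pos.2 (fun h => hij (hX h))
        filter_upwards [Ioo_mem_nhdsGT hpos] with δ hδ _
        exact hδ.2.le
    obtain ⟨δ, h, hδ⟩ := (this.and self_mem_nhdsWithin).exists
    exact ⟨δ, hδ, h⟩
  let P : ℕ → Prop := fun N => ∃ X : Fin N → (Fin n → ℝ), Function.Injective X ∧ ∃ y, ∀ i, H (X i) = y
  have hbound : ∀ N, P N → (N : ℝ) ≤ ((2 * (R + 1) + 1) * (2 * K)) ^ n := by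
    rintro N ⟨X, hX, y, hy⟩
    obtain ⟨δ, hδ, h⟩ := hsep X hX
    exact count_bound H K hH R (fun q => (hC q).trans hR) (δ / K) (by positivity)
      (transfer_config H hH.continuous C hC K hK0 hdense δ y X ⟨hy, h⟩)
  obtain ⟨b, hb⟩ := exists_nat_ge (((2 * ((R : ℝ) + 1) + 1) * (2 * K)) ^ n)
  have hP1 : P 1 := ⟨fun _ => 0, fun _ _ _ => Subsingleton.elim _ _, H 0, fun _ => rfl⟩
  obtain ⟨N, hN1, hPN, hmax⟩ : ∃ N, 1 ≤ N ∧ P N ∧ ¬ P (N + 1) := by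
    by_contra hcon
    push Not at hcon
    have : ∀ N, P (N + 1) := by
      intro N
      induction N with
      | zero => exact hP1
      | succ k ih => exact hcon _ (by omega) ih
    have h1 := (hbound _ (this b)).trans hb
    push_cast at h1; linarith
  obtain ⟨X0, hX0, y0, hy0⟩ := hPN
  obtain ⟨δ0, hδ0, hs0⟩ := hsep X0 hX0
  set δ : ℝ := δ0 / K with hδdef
  have hδ : 0 < δ := by positivity
  have hconf : ∀ y, ∃ X : Fin N → (Fin n → ℝ), IsConfig H δ y X :=
    transfer_config H hH.continuous C hC K hK0 hdense δ0 y0 X0 ⟨hy0, hs0⟩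
  have hall : ∀ y (X : Fin N → (Fin n → ℝ)), IsConfig H δ y X → ∀ x, H x = y → ∃ i, X i = x := by
    intro y X hX x hx
    by_contra hcon
    push Not at hcon
    have hinj : Function.Injective X := by
      intro i j hij
      by_contra hne
      have := hX.2 i j hne
      rw [hij, dist_self] at this
      linarith
    apply hmax
    refine ⟨Fin.cons x X, ?_, y, ?_⟩
    · rw [Fin.cons_injective_iff]
      exact ⟨by rintro ⟨i, hi⟩; exact hcon i hi, hinj⟩
    · intro i
      refine Fin.cases ?_ (fun i => ?_) i
      · simpa using hx
      · simpa using hX.1 i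
  have hlocinj : ∀ x x', H x = H x' → dist x x' < δ → x = x' := by
    intro x x' h hd
    obtain ⟨X, hX⟩ := hconf (H x)
    obtain ⟨i, rfl⟩ := hall _ X hX x rfl
    obtain ⟨j, rfl⟩ := hall _ X hX x' h.symm
    by_contra hne
    have := hX.2 i j (fun h => hne (by rw [h]))
    linarith
  have hsurj : Function.Surjective H := by
    intro y
    obtain ⟨X, hX⟩ := hconf y
    exact ⟨X ⟨0, by omega⟩, hX.1 _⟩
  have hfin : ∀ y, (H ⁻¹' {y}).Finite := by
    intro y
    obtain ⟨X, hX⟩ := hconf y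
    refine (Set.finite_range X).subset ?_
    intro x hx
    exact hall y X hX x hx
  have hopen : IsOpenMap H := by
    rw [isOpenMap_iff_nhds_le]
    intro x U hU
    by_contra hcon
    have hU' : H ⁻¹' U ∈ 𝓝 x := hU
    have hfr : ∃ᶠ z in 𝓝 (H x), z ∉ U := fun hev => hcon (by
      filter_upwards [hev] with z hz
      exact not_not.1 hz)
    obtain ⟨u, hu, huU⟩ := exists_seq_forall_of_frequently hfr
    choose X hX using fun j => hconf (u j)
    obtain ⟨Z, hZ, φ, hφ, hlim⟩ := limit_config H hH.continuous C hC δ (H x) u hu X hX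
    obtain ⟨i, rfl⟩ := hall _ Z hZ x rfl
    have h1 := (tendsto_pi_nhds.1 hlim i).eventually hU'
    obtain ⟨j, hj⟩ := h1.exists
    apply huU (φ j)
    rw [← (hX (φ j)).1 i]
    exact hj
  have hclosed : IsClosedMap H := by
    intro A hA
    rw [← isSeqClosed_iff_isClosed]
    intro u y hu huy
    choose a ha1 ha2 using hu
    obtain ⟨Z, hZ, φ, hφ, hlim⟩ := limit_config H hH.continuous C hC 0 y u huy
      (fun j (_ : Fin 1) => a j) (fun j => ⟨fun _ => ha2 j, fun _ _ _ => dist_nonneg⟩)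
    refine ⟨Z 0, ?_, hZ.1 0⟩
    exact hA.mem_of_tendsto (tendsto_pi_nhds.1 hlim 0) (Eventually.of_forall fun j => ha1 (φ j))
  have hloc : IsLocalHomeomorph H := by
    rw [isLocalHomeomorph_iff_isOpenEmbedding_restrict]
    intro x
    refine ⟨Metric.ball x (δ / 2), Metric.ball_mem_nhds _ (by positivity), ?_⟩
    refine IsOpenEmbedding.of_continuous_injective_isOpenMap ?_ ?_ ?_
    · exact hH.continuous.comp continuous_subtype_val
    · rintro ⟨z, hz⟩ ⟨z', hz'⟩ h
      apply Subtype.ext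
      apply hlocinj z z' h
      have := dist_triangle_right z z' x
      rw [Metric.mem_ball] at hz hz'
      linarith
    · exact hopen.comp Metric.isOpen_ball.isOpenMap_subtype_val
  have hcov : IsCoveringMap H := by
    rw [isCoveringMap_iff_isCoveringMapOn_univ]
    exact hclosed.isCoveringMapOn_of_isLocalHomeomorphOn (fun y _ => hfin y) (hloc.isLocalHomeomorphOn.mono (Set.subset_univ _))
  exact ⟨⟨inj_of_covering H hcov, hsurj⟩, hopen⟩

theorem torus_lip (n : ℕ) (K : NNReal) (H : (Fin n → ℝ) → (Fin n → ℝ)) (hH : LipschitzWith K H)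
    (h1 : Torus n → Torus n) (e1 : ∀ q, h1 (torusProj n q) = torusProj n (H q)) :
    LipschitzWith K h1 := by
  have hsur : Function.Surjective (torusProj n) := QuotientAddGroup.mk'_surjective _
  have hsub : ∀ a b, torusProj n a - torusProj n b = torusProj n (a - b) := fun a b => rfl
  apply LipschitzWith.of_dist_le_mul
  intro x y
  obtain ⟨a, rfl⟩ := hsur x
  obtain ⟨b, rfl⟩ := hsur y
  apply le_of_forall_pos_le_add
  intro ε hε
  obtain ⟨v, hv, hvn⟩ := QuotientAddGroup.exists_norm_mk_lt (torusProj n a - torusProj n b)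
    (ε := ε / (K + 1)) (by positivity)
  have hay : torusProj n b = torusProj n (a - v) := by
    rw [← hsub]
    have : torusProj n v = torusProj n a - torusProj n b := hv
    rw [this]; abel
  rw [dist_eq_norm (torusProj n a)]
  rw [hay, e1, e1, dist_eq_norm, hsub, ← hay]
  have h3 : ‖torusProj n (H a - H (a - v))‖ ≤ ‖H a - H (a - v)‖ := QuotientAddGroup.norm_mk_le_norm
  have h4 : ‖H a - H (a - v)‖ ≤ K * ‖v‖ := by
    have := hH.dist_le_mul a (a - v)
    rw [dist_eq_norm, dist_eq_norm] at this
    simpa using this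
  have h5 : (K : ℝ) * ‖v‖ ≤ K * (‖torusProj n a - torusProj n b‖ + ε / (K + 1)) := by gcongr
  have h6 : (K : ℝ) * (ε / (K + 1)) ≤ ε := by
    rw [mul_div_assoc', div_le_iff₀ (by positivity)]
    nlinarith
  linarith

theorem torus_conj (n : ℕ) (K : NNReal) (H : (Fin n → ℝ) → (Fin n → ℝ)) (hH : LipschitzWith K H)
    (hbij : Function.Bijective H) (hopen : IsOpenMap H)
    (hHper : ∀ (x : Fin n → ℝ) (m : Fin n → ℤ),
      H (x + fun i => (m i : ℝ)) = H x + fun i => (m i : ℝ)) :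
    ∃ h : Torus n ≃ₜ Torus n, LipschitzWith K ⇑h ∧ ∀ q, h (torusProj n q) = torusProj n (H q) := by
  have hmem : ∀ v : Fin n → ℝ, v ∈ intLattice n ↔ ∃ m : Fin n → ℤ, v = fun i => (m i : ℝ) := by
    intro v
    constructor
    · intro hv
      choose m hm using hv
      exact ⟨m, funext hm⟩
    · rintro ⟨m, rfl⟩ i
      exact ⟨m i, rfl⟩
  have hperl : ∀ x v, v ∈ intLattice n → H (x + v) = H x + v := by
    intro x v hv
    obtain ⟨m, rfl⟩ := (hmem v).1 hv
    exact hHper x m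
  let e : (Fin n → ℝ) ≃ₜ (Fin n → ℝ) :=
    (Equiv.ofBijective H hbij).toHomeomorphOfContinuousOpen hH.continuous hopen
  have he : ∀ x, e x = H x := fun _ => rfl
  have hperl' : ∀ x v, v ∈ intLattice n → e.symm (x + v) = e.symm x + v := by
    intro x v hv
    apply e.injective
    rw [e.apply_symm_apply, he, hperl _ _ hv, ← he, e.apply_symm_apply]
  have hlift : ∀ G : (Fin n → ℝ) → (Fin n → ℝ), (∀ x v, v ∈ intLattice n → G (x + v) = G x + v) →
      ∀ a b : Fin n → ℝ, (QuotientAddGroup.leftRel (intLattice n)) a b →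
        torusProj n (G a) = torusProj n (G b) := by
    intro G hG a b hab
    rw [QuotientAddGroup.leftRel_apply] at hab
    have : b = a + (-a + b) := by abel
    rw [this, hG _ _ hab]
    exact (QuotientAddGroup.mk_add_of_mem (G a) hab).symm
  have hpc : Continuous (torusProj n) := QuotientAddGroup.continuous_mk
  let h1 : Torus n → Torus n := Quotient.lift (fun a => torusProj n (H a)) (hlift H hperl)
  let h2 : Torus n → Torus n := Quotient.lift (fun a => torusProj n (e.symm a)) (hlift e.symm hperl')
  have e1 : ∀ q, h1 (torusProj n q) = torusProj n (H q) := fun _ => rfl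
  have e2 : ∀ q, h2 (torusProj n q) = torusProj n (e.symm q) := fun _ => rfl
  have hsur : Function.Surjective (torusProj n) := QuotientAddGroup.mk'_surjective _
  let h : Torus n ≃ₜ Torus n :=
    { toFun := h1
      invFun := h2
      left_inv := by
        intro x
        obtain ⟨q, rfl⟩ := hsur x
        rw [e1, e2, ← he, e.symm_apply_apply]
      right_inv := by
        intro x
        obtain ⟨q, rfl⟩ := hsur x
        rw [e2, e1, ← he, e.apply_symm_apply]
      continuous_toFun := (hpc.comp hH.continuous).quotient_lift _
      continuous_invFun := (hpc.comp e.symm.continuous).quotient_lift _ }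
  exact ⟨h, torus_lip n K H hH h1 e1, e1⟩

end Helpers

/-- **Lipschitz conjugacy to a minimal translation flow.**
Let `F` be a lifted flow on the torus whose time-`t` maps are all `K`-Lipschitz
(`K ≥ 1`), let `f` be the induced flow on `𝕋ⁿ`, and let `ρ` be the rotation vector
(uniform limit of `(F t q - q)/t` as `t → +∞`). If `ρ` is completely irrational
(`⟨k, ρ⟩ ∉ ℤ` for every nonzero integer vector `k`, i.e. the translation by `π ρ` is
minimal), then there is a `K`-Lipschitz homeomorphism `h` of `𝕋ⁿ` with
`h (f t x) = h x + π (t • ρ)` for all `t` and `x`. -/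
theorem lipschitz_conjugacy_of_completely_irrational
    (n : ℕ) (F : ℝ → (Fin n → ℝ) → (Fin n → ℝ))
    (hcont : Continuous fun p : ℝ × (Fin n → ℝ) => F p.1 p.2)
    (hF0 : F 0 = id)
    (hflow : ∀ s t : ℝ, F (s + t) = F s ∘ F t)
    (hper : ∀ (t : ℝ) (x : Fin n → ℝ) (m : Fin n → ℤ),
      F t (x + fun i => (m i : ℝ)) = F t x + fun i => (m i : ℝ))
    (K : NNReal) (hK : 1 ≤ K)
    (hlip : ∀ t : ℝ, LipschitzWith K (F t))
    (f : ℝ → Torus n → Torus n)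
    (hf : ∀ (t : ℝ) (q : Fin n → ℝ), f t (torusProj n q) = torusProj n (F t q))
    (ρ : Fin n → ℝ)
    (hρ : TendstoUniformly (fun (t : ℝ) (q : Fin n → ℝ) => t⁻¹ • (F t q - q))
        (fun _ => ρ) atTop)
    (hirr : ∀ k : Fin n → ℤ, k ≠ 0 → ∀ m : ℤ, (∑ i, (k i : ℝ) * ρ i) ≠ (m : ℝ)) :
    ∃ h : Torus n ≃ₜ Torus n, LipschitzWith K ⇑h ∧
      ∀ (t : ℝ) (x : Torus n), h (f t x) = h x + torusProj n (t • ρ) := by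
  have hb := flow_bound F hF0 hflow hper K hlip ρ hρ
  obtain ⟨H, hH, hHF, hHper, hHC⟩ := exists_semiconj F hflow hper K hlip ρ (K + 1) hb
  obtain ⟨hbij, hopen⟩ := bijective_of_dense H K hK hH (K + 1) hHC (by
    intro y y0 ε hε
    obtain ⟨t, m, htm⟩ := kron ρ hirr (y - y0) ε hε
    refine ⟨fun x => F t x + fun i => (m i : ℝ), t • ρ + fun i => (m i : ℝ), ?_, ?_, ?_⟩
    · intro x
      rw [hHper, hHF, add_assoc]
    · intro x x'
      rw [dist_add_right]
      have hinv : ∀ x, F (-t) (F t x) = x := by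
        intro x
        have := congrFun (hflow (-t) t) x
        simp [hF0] at this; exact this.symm
      have := (hlip (-t)).dist_le_mul (F t x) (F t x')
      rwa [hinv, hinv] at this
    · rw [dist_eq_norm]
      have e : y0 + (t • ρ + fun i => (m i : ℝ)) - y
          = t • ρ + (fun i => (m i : ℝ)) - (y - y0) := by abel
      rwa [e])
  obtain ⟨h, hh1, hh2⟩ := torus_conj n K H hH hbij hopen hHper
  refine ⟨h, hh1, ?_⟩
  intro t x
  obtain ⟨q, rfl⟩ : ∃ q, torusProj n q = x := QuotientAddGroup.mk'_surjective _ x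
  rw [hf, hh2, hh2, hHF]
  rfl
end
end

section
/- Let g : 𝕋ⁿ → 𝕋ⁿ be a homeomorphism such that for some K ≥ 1 every iterate gᵏ, k ∈ ℤ, is K-Lipschitz. Then there exists a g-invariant Borel probability measure μ on 𝕋ⁿ such that for every Borel set A ⊆ 𝕋ⁿ one has K⁻ⁿ · Leb(A) ≤ μ(A) ≤ Kⁿ · Leb(A); in particular μ is equivalent to Leb. -/
open MeasureTheory

noncomputable section

/-- The Haar (Lebesgue) probability measure on `𝕋ⁿ`: the pushforward under `π` of
Lebesgue measure restricted to the fundamental cube `[0,1)ⁿ`. -/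
def torusLeb (n : ℕ) : Measure (Torus n) :=
  Measure.map (torusProj n)
    (volume.restrict (Set.univ.pi fun _ : Fin n => Set.Ico (0:ℝ) 1))

lemma intLattice_isClosed (n : ℕ) :
    IsClosed ((intLattice n : AddSubgroup (Fin n → ℝ)) : Set (Fin n → ℝ)) := by
  have h : ((intLattice n : AddSubgroup (Fin n → ℝ)) : Set (Fin n → ℝ))
      = ⋂ i, (fun x : Fin n → ℝ => x i) ⁻¹' (Set.range ((↑) : ℤ → ℝ)) := by
    ext x
    simp only [Set.mem_iInter, Set.mem_preimage, Set.mem_range]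
    constructor
    · intro hx i
      obtain ⟨m, hm⟩ := hx i
      exact ⟨m, hm.symm⟩
    · intro hx i
      obtain ⟨m, hm⟩ := hx i
      exact ⟨m, hm.symm⟩
  rw [h]
  exact isClosed_iInter fun i => Int.isClosedEmbedding_coe_real.isClosed_range.preimage
    (continuous_apply i)

section Helpers

attribute [local instance] intLattice_isClosed

lemma norm_torusProj (n : ℕ) (x : Fin n → ℝ) (hx : ‖x‖ ≤ 1 / 2) : ‖torusProj n x‖ = ‖x‖ := by
  apply le_antisymm
  · exact QuotientAddGroup.norm_mk_le_norm
  · apply QuotientAddGroup.le_norm_iff.2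
    intro m hm
    have hm' : -m + x ∈ intLattice n := QuotientAddGroup.eq.1 hm
    refine (pi_norm_le_iff_of_nonneg (norm_nonneg _)).2 fun i => ?_
    refine le_trans ?_ (norm_le_pi_norm m i)
    have hxi : ‖x i‖ ≤ 1 / 2 := (norm_le_pi_norm x i).trans hx
    obtain ⟨k, hk⟩ := hm' i
    simp only [Pi.add_apply, Pi.neg_apply] at hk
    have hmi : m i = x i - k := by linarith
    rw [hmi]
    simp only [Real.norm_eq_abs] at *
    by_cases hk0 : k = 0
    · simp [hk0]
    · have h1 : (1 : ℝ) ≤ |(k : ℝ)| := by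
        exact_mod_cast Int.one_le_abs hk0
      have h2 := abs_sub_abs_le_abs_sub (k : ℝ) (x i)
      rw [abs_sub_comm (x i)]
      linarith

lemma dist_torusProj (n : ℕ) (x y : Fin n → ℝ) (h : dist x y ≤ 1 / 2) :
    dist (torusProj n x) (torusProj n y) = dist x y := by
  rw [dist_eq_norm, dist_eq_norm]
  have : torusProj n x - torusProj n y = torusProj n (x - y) := rfl
  rw [this, norm_torusProj]
  rwa [← dist_eq_norm]

/-- The half-open unit cube. -/
def ucube (n : ℕ) : Set (Fin n → ℝ) := Set.univ.pi fun _ : Fin n => Set.Ico (0:ℝ) 1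

lemma measurableSet_ucube (n : ℕ) : MeasurableSet (ucube n) :=
  MeasurableSet.univ_pi fun _ => measurableSet_Ico

/-- The projection restricted to the cube. -/
def cubeProj (n : ℕ) (x : ucube n) : Torus n := torusProj n x.1

lemma continuous_torusProj (n : ℕ) : Continuous (torusProj n) := continuous_quotient_mk'

lemma cubeProj_injective (n : ℕ) : Function.Injective (cubeProj n) := by
  rintro ⟨x, hx⟩ ⟨y, hy⟩ h
  have h' : -x + y ∈ intLattice n := QuotientAddGroup.eq.1 h
  ext i
  obtain ⟨k, hk⟩ := h' i
  simp only [Pi.add_apply, Pi.neg_apply] at hk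
  have hxi : x i ∈ Set.Ico (0:ℝ) 1 := hx i trivial
  have hyi : y i ∈ Set.Ico (0:ℝ) 1 := hy i trivial
  have h1 : (k : ℝ) < 1 := by linarith [hxi.1, hyi.2]
  have h2 : (-1 : ℝ) < k := by linarith [hxi.2, hyi.1]
  have h3 : k < 1 := by exact_mod_cast h1
  have h4 : -1 < k := by exact_mod_cast h2
  have : k = 0 := by omega
  subst this
  simp only [Int.cast_zero] at hk
  show x i = y i
  linarith

lemma cubeProj_surjective (n : ℕ) : Function.Surjective (cubeProj n) := by
  intro z
  obtain ⟨x, rfl⟩ := QuotientAddGroup.mk_surjective z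
  refine ⟨⟨fun i => Int.fract (x i), fun i _ => ⟨Int.fract_nonneg _, Int.fract_lt_one _⟩⟩, ?_⟩
  refine QuotientAddGroup.eq.2 fun i => ⟨⌊x i⌋, ?_⟩
  simp only [Pi.add_apply, Pi.neg_apply]
  linarith [Int.fract_add_floor (x i)]

lemma measurableEmbedding_cubeProj (n : ℕ) : MeasurableEmbedding (cubeProj n) := by
  have : StandardBorelSpace (ucube n) := (measurableSet_ucube n).standardBorel
  have : SecondCountableTopology (Torus n) :=
    QuotientAddGroup.isOpenQuotientMap_mk.isQuotientMap.secondCountableTopology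
      QuotientAddGroup.isOpenQuotientMap_mk.isOpenMap
  exact ((continuous_torusProj n).comp continuous_subtype_val).measurable.measurableEmbedding
    (cubeProj_injective n)

lemma hausdorff_image_eq (n : ℕ) (B : Set (ucube n)) (hB : ∀ x ∈ B, ∀ y ∈ B, dist x y ≤ 1 / 2) :
    (Measure.hausdorffMeasure (n : ℝ) : Measure (Torus n)) (cubeProj n '' B)
      = volume ((Subtype.val : ucube n → _) '' B) := by
  have hv : (volume : Measure (Fin n → ℝ)) = Measure.hausdorffMeasure (n : ℝ) := by
    rw [← hausdorffMeasure_pi_real, Fintype.card_fin]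
  rw [hv]
  have i1 : Isometry (fun x : B => cubeProj n x.1) :=
    Isometry.of_dist_eq fun x y => dist_torusProj n _ _ (hB x.1 x.2 y.1 y.2)
  have i2 : Isometry (fun x : B => (x.1.1 : Fin n → ℝ)) :=
    Isometry.of_dist_eq fun x y => rfl
  have h1 := i1.hausdorffMeasure_image (d := n) (Or.inl (Nat.cast_nonneg n)) Set.univ
  have h2 := i2.hausdorffMeasure_image (d := n) (Or.inl (Nat.cast_nonneg n)) Set.univ
  have e1 : (fun x : B => cubeProj n x.1) '' Set.univ = cubeProj n '' B := by
    ext z; simp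
  have e2 : (fun x : B => (x.1.1 : Fin n → ℝ)) '' Set.univ = Subtype.val '' B := by
    ext z; simp
  rw [← e1, ← e2, h1, h2]

lemma comap_eq (n : ℕ) : Measure.comap (Subtype.val : ucube n → _) volume
    = Measure.comap (cubeProj n) (Measure.hausdorffMeasure (n : ℝ)) := by
  have : Nonempty (ucube n) := ⟨⟨0, fun i _ => by simp⟩⟩
  have hcov : ⋃ k : ℕ, Metric.ball (TopologicalSpace.denseSeq (ucube n) k) (1 / 4) = Set.univ := by
    refine Set.eq_univ_of_forall fun x => ?_
    obtain ⟨_, hk, ⟨k, rfl⟩⟩ := Metric.dense_iff.1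
      (TopologicalSpace.denseRange_denseSeq (ucube n)) x (1 / 4) (by norm_num)
    exact Set.mem_iUnion.2 ⟨k, Metric.mem_ball_comm.1 hk⟩
  refine Measure.ext_of_iUnion_eq_univ hcov fun k => ?_
  ext B hB
  rw [Measure.restrict_apply hB, Measure.restrict_apply hB,
    (MeasurableEmbedding.subtype_coe (measurableSet_ucube n)).comap_apply,
    (measurableEmbedding_cubeProj n).comap_apply, hausdorff_image_eq]
  intro x hx y hy
  have h1 := Metric.mem_ball.1 hx.2
  have h2 := Metric.mem_ball.1 hy.2
  have := dist_triangle_right x y (TopologicalSpace.denseSeq (ucube n) k)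
  linarith

lemma torusLeb_eq_hausdorff (n : ℕ) : torusLeb n = Measure.hausdorffMeasure (n : ℝ) := by
  have h1 : torusLeb n = Measure.map (cubeProj n) (Measure.comap Subtype.val volume) := by
    have : cubeProj n = torusProj n ∘ Subtype.val := rfl
    rw [this, ← Measure.map_map (continuous_torusProj n).measurable measurable_subtype_coe,
      map_comap_subtype_coe (measurableSet_ucube n)]
    rfl
  rw [h1, comap_eq, (measurableEmbedding_cubeProj n).map_comap,
    (cubeProj_surjective n).range_eq, Measure.restrict_univ]

lemma isProbabilityMeasure_torusLeb (n : ℕ) : IsProbabilityMeasure (torusLeb n) := by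
  constructor
  rw [torusLeb, Measure.map_apply (continuous_torusProj n).measurable MeasurableSet.univ]
  simp [volume_pi_pi]

lemma map_torusLeb_le (n : ℕ) (h : Torus n ≃ₜ Torus n) (K : NNReal)
    (hl : LipschitzWith K h.symm) :
    Measure.map h (torusLeb n) ≤ ((K : ENNReal) ^ n) • torusLeb n := by
  refine Measure.le_iff.2 fun A hA => ?_
  rw [Measure.map_apply h.continuous.measurable hA, Measure.smul_apply, smul_eq_mul,
    ← h.image_symm, torusLeb_eq_hausdorff]
  have := hl.hausdorffMeasure_image_le (d := n) (Nat.cast_nonneg n) A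
  rwa [ENNReal.rpow_natCast] at this

end Helpers

/-- **An equi-Lipschitz homeomorphism of the torus has an invariant measure
comparable to Lebesgue.**  If `g` is a homeomorphism of `𝕋ⁿ` all of whose iterates
`gᵏ, k ∈ ℤ`, are `K`-Lipschitz (`K ≥ 1`), then there is a `g`-invariant Borel
probability measure `μ` on `𝕋ⁿ` with
`K⁻ⁿ · Leb A ≤ μ A ≤ Kⁿ · Leb A` for every Borel set `A`;
in particular `μ` is equivalent to `Leb`. -/
theorem exists_invariant_measure_equivalent_to_leb
    (n : ℕ) (g : Torus n ≃ₜ Torus n)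
    (K : NNReal) (hK : 1 ≤ K)
    (hlip : ∀ k : ℕ, LipschitzWith K (⇑g)^[k])
    (hlip' : ∀ k : ℕ, LipschitzWith K (⇑g.symm)^[k]) :
    ∃ μ : Measure (Torus n), IsProbabilityMeasure μ ∧
      (∀ A : Set (Torus n), MeasurableSet A → μ (⇑g ⁻¹' A) = μ A) ∧
      (∀ A : Set (Torus n), MeasurableSet A →
        ((K : ENNReal) ^ n)⁻¹ * torusLeb n A ≤ μ A ∧
          μ A ≤ (K : ENNReal) ^ n * torusLeb n A) ∧
      μ ≪ torusLeb n ∧ torusLeb n ≪ μ := by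
  have := isProbabilityMeasure_torusLeb n
  have hpow : ∀ k : ℕ, ⇑(g ^ k) = (⇑g)^[k] := by
    intro k
    induction k with
    | zero => rfl
    | succ k ih => rw [pow_succ, Function.iterate_succ, ← ih]; rfl
  have hpow' : ∀ k : ℕ, ⇑(g⁻¹ ^ k) = (⇑g.symm)^[k] := by
    intro k
    induction k with
    | zero => rfl
    | succ k ih => rw [pow_succ, Function.iterate_succ, ← ih]; rfl
  have hz : ∀ k : ℤ, LipschitzWith K (g ^ k : Torus n ≃ₜ Torus n) := by
    intro k
    obtain ⟨m, rfl | rfl⟩ := k.eq_nat_or_neg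
    · rw [zpow_natCast, hpow]; exact hlip m
    · rw [zpow_neg, zpow_natCast, ← inv_pow, hpow']; exact hlip' m
  have hle : ∀ k : ℤ, Measure.map (g ^ k : Torus n ≃ₜ Torus n) (torusLeb n)
      ≤ ((K : ENNReal) ^ n) • torusLeb n := by
    intro k
    apply map_torusLeb_le
    have : (g ^ k : Torus n ≃ₜ Torus n).symm = g ^ (-k) := by rw [zpow_neg]; rfl
    rw [this]
    exact hz _
  let μ₀ : Measure (Torus n) := ⨆ k : ℤ, Measure.map (g ^ k : Torus n ≃ₜ Torus n) (torusLeb n)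
  have hμ₀ : μ₀ = ⨆ k : ℤ, Measure.map (g ^ k : Torus n ≃ₜ Torus n) (torusLeb n) := rfl
  clear_value μ₀
  have hup : μ₀ ≤ ((K : ENNReal) ^ n) • torusLeb n := by
    rw [hμ₀]; exact iSup_le hle
  have hlow : torusLeb n ≤ μ₀ := by
    rw [hμ₀]
    refine le_trans (le_of_eq ?_) (le_iSup _ (0 : ℤ))
    rw [zpow_zero]
    exact Measure.map_id.symm
  -- every power of `g` maps `μ₀` below itself
  have hsub : ∀ j : ℤ, μ₀ ≤ Measure.map (g ^ j : Torus n ≃ₜ Torus n) μ₀ := by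
    intro j
    conv_lhs => rw [hμ₀]
    refine iSup_le fun k => ?_
    have h1 : Measure.map (g ^ (k - j) : Torus n ≃ₜ Torus n) (torusLeb n) ≤ μ₀ := by
      rw [hμ₀]; exact le_iSup (fun k : ℤ => Measure.map (g ^ k : Torus n ≃ₜ Torus n) (torusLeb n)) _
    have h2 := Measure.map_mono h1 (g ^ j : Torus n ≃ₜ Torus n).continuous.measurable
    rw [Measure.map_map (g ^ j : Torus n ≃ₜ Torus n).continuous.measurable
      (g ^ (k - j) : Torus n ≃ₜ Torus n).continuous.measurable] at h2
    have h3 : (⇑(g ^ j) ∘ ⇑(g ^ (k - j)) : Torus n → Torus n) = ⇑(g ^ k) := by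
      have : g ^ k = g ^ j * g ^ (k - j) := by rw [← zpow_add]; congr 1; omega
      rw [this]; rfl
    rwa [h3] at h2
  have hinv : ∀ A : Set (Torus n), MeasurableSet A → μ₀ (⇑g ⁻¹' A) = μ₀ A := by
    intro A hA
    apply le_antisymm
    · have h := hsub (-1) (⇑g ⁻¹' A)
      rw [Measure.map_apply (g ^ (-1 : ℤ) : Torus n ≃ₜ Torus n).continuous.measurable
        (g.continuous.measurable hA), zpow_neg_one, ← Set.preimage_comp] at h
      have e : (⇑g ∘ ⇑g⁻¹ : Torus n → Torus n) = id := funext fun x => g.apply_symm_apply x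
      rwa [e, Set.preimage_id] at h
    · have h := hsub 1 A
      rwa [zpow_one, Measure.map_apply g.continuous.measurable hA] at h
  set c : ENNReal := (K : ENNReal) ^ n with hc
  have hc0 : c ≠ 0 := by
    have : (K : ENNReal) ≠ 0 := by
      exact_mod_cast (lt_of_lt_of_le zero_lt_one hK).ne'
    exact pow_ne_zero _ this
  have hct : c ≠ ⊤ := ENNReal.pow_ne_top ENNReal.coe_ne_top
  set m : ENNReal := μ₀ Set.univ with hm
  have hm1 : 1 ≤ m := by
    have := hlow Set.univ
    rwa [measure_univ] at this
  have hmc : m ≤ c := by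
    have := hup Set.univ
    rwa [Measure.smul_apply, measure_univ (μ := torusLeb n), smul_eq_mul, mul_one] at this
  have hm0 : m ≠ 0 := (lt_of_lt_of_le zero_lt_one hm1).ne'
  have hmt : m ≠ ⊤ := ne_top_of_le_ne_top hct hmc
  have hb : ∀ A : Set (Torus n), c⁻¹ * torusLeb n A ≤ (m⁻¹ • μ₀) A ∧
      (m⁻¹ • μ₀) A ≤ c * torusLeb n A := by
    intro A
    rw [Measure.smul_apply, smul_eq_mul]
    constructor
    · exact mul_le_mul' (ENNReal.inv_le_inv.2 hmc) (hlow A)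
    · calc m⁻¹ * μ₀ A ≤ 1 * μ₀ A := mul_le_mul' (ENNReal.inv_le_one.2 hm1) le_rfl
        _ = μ₀ A := one_mul _
        _ ≤ c * torusLeb n A := hup A
  refine ⟨m⁻¹ • μ₀, ⟨?_⟩, ?_, fun A _ => hb A, ?_, ?_⟩
  · rw [Measure.smul_apply, smul_eq_mul]
    exact ENNReal.inv_mul_cancel hm0 hmt
  · intro A hA
    rw [Measure.smul_apply, Measure.smul_apply, hinv A hA]
  · intro A hA
    have := (hb A).2
    rw [hA, mul_zero] at this
    exact le_antisymm this bot_le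
  · intro A hA
    have := (hb A).1
    rw [hA] at this
    have h0 := le_antisymm this bot_le
    rcases mul_eq_zero.1 h0 with h | h
    · exact absurd h (ENNReal.inv_ne_zero.2 hct)
    · exact h
end
end

section
/- Let G : ℝⁿ → ℝⁿ be a bijection such that both G and G⁻¹ are Lipschitz, and suppose G is differentiable at a point q₀ with derivative L = DG(q₀). Then L is an invertible linear map, G⁻¹ is differentiable at G(q₀), and DG⁻¹(G(q₀)) = L⁻¹. -/
/-- **Differentiability of the inverse of a bi-Lipschitz bijection at a point of
differentiability.**  Let `G : ℝⁿ → ℝⁿ` be a bijection such that `G` and `G⁻¹` are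
Lipschitz, and suppose `G` is (Fréchet) differentiable at `q₀` with derivative `L`.
Then `L` is invertible, `G⁻¹` is differentiable at `G q₀`, and `D G⁻¹ (G q₀) = L⁻¹`. -/
theorem inverse_differentiable_of_biLipschitz
    (n : ℕ) (G : (Fin n → ℝ) ≃ (Fin n → ℝ))
    (K₁ K₂ : NNReal) (hG : LipschitzWith K₁ ⇑G) (hGinv : LipschitzWith K₂ ⇑G.symm)
    (q₀ : Fin n → ℝ) (L : (Fin n → ℝ) →L[ℝ] (Fin n → ℝ))
    (hL : HasFDerivAt (⇑G) L q₀) :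
    ∃ e : (Fin n → ℝ) ≃L[ℝ] (Fin n → ℝ),
      (e : (Fin n → ℝ) →L[ℝ] (Fin n → ℝ)) = L ∧
      HasFDerivAt (⇑G.symm) (e.symm : (Fin n → ℝ) →L[ℝ] (Fin n → ℝ)) (G q₀) := by
  have key : ∀ v, ‖v‖ ≤ K₂ * ‖L v‖ := by
    intro v
    have hlim := hL.lim v (c := fun k : ℕ => (k : ℝ)) (l := Filter.atTop)
      (by simpa using tendsto_natCast_atTop_atTop (R := ℝ))
    refine ge_of_tendsto (hlim.norm.const_mul (K₂ : ℝ)) ?_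
    filter_upwards [Filter.eventually_gt_atTop 0] with k hk
    have hk' : (0 : ℝ) < k := by exact_mod_cast hk
    have h := hGinv.dist_le_mul (G (q₀ + (k : ℝ)⁻¹ • v)) (G q₀)
    rw [G.symm_apply_apply, G.symm_apply_apply, dist_eq_norm, dist_eq_norm,
      add_sub_cancel_left, norm_smul, norm_inv, Real.norm_of_nonneg hk'.le] at h
    rw [norm_smul, Real.norm_of_nonneg hk'.le]
    calc ‖v‖ = k * ((k : ℝ)⁻¹ * ‖v‖) := by field_simp
      _ ≤ k * (K₂ * ‖G (q₀ + (k : ℝ)⁻¹ • v) - G q₀‖) := by gcongr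
      _ = _ := by ring
  have hinj : Function.Injective (L : (Fin n → ℝ) →ₗ[ℝ] (Fin n → ℝ)) := by
    rw [injective_iff_map_eq_zero]
    intro v hv
    have h := key v
    have hv' : L v = 0 := hv
    rw [hv', norm_zero, mul_zero] at h
    exact norm_le_zero_iff.mp h
  let e := (LinearEquiv.ofInjectiveEndo (L : (Fin n → ℝ) →ₗ[ℝ] (Fin n → ℝ))
    hinj).toContinuousLinearEquiv
  have he : (e : (Fin n → ℝ) →L[ℝ] (Fin n → ℝ)) = L := by
    ext1 v
    rfl
  refine ⟨e, he, ?_⟩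
  refine HasFDerivAt.of_local_left_inverse (f := G) hGinv.continuous.continuousAt ?_
    (Filter.Eventually.of_forall G.apply_symm_apply)
  rw [G.symm_apply_apply, he]
  exact hL
end

section
/- Let f : 𝕋ⁿ → 𝕋ⁿ be a homeomorphism and let g, h : 𝕋ⁿ → 𝕋ⁿ be continuous maps, each homotopic to the identity, such that g(f(x)) = g(x) + α and h(f(x)) = h(x) + β for all x ∈ 𝕋ⁿ, where α, β ∈ 𝕋ⁿ. Then α = β. -/
noncomputable section

/-- The integer lattice is discrete. -/
lemma intLattice_isDiscrete (n : ℕ) : IsDiscrete (intLattice n : Set (Fin n → ℝ)) := by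
  constructor
  refine discreteTopology_of_isOpen_singleton_zero (G := intLattice n) ?_
  have : ({0} : Set (intLattice n)) = (Subtype.val : intLattice n → Fin n → ℝ) ⁻¹' Metric.ball 0 1 := by
    ext x
    simp only [Set.mem_singleton_iff, Set.mem_preimage, mem_ball_zero_iff]
    constructor
    · rintro rfl
      simp
    · intro hx
      ext i
      obtain ⟨m, hm⟩ := x.2 i
      have h1 : |(x : Fin n → ℝ) i| < 1 := lt_of_le_of_lt (norm_le_pi_norm (x : Fin n → ℝ) i) hx
      rw [hm] at h1 ⊢
      have h2 : |m| < 1 := by exact_mod_cast h1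
      have : m = 0 := by rwa [Int.abs_lt_one_iff] at h2
      simp [this]
  rw [this]
  exact Metric.isOpen_ball.preimage continuous_subtype_val

/-- The projection onto the torus is a covering map. -/
lemma torus_cov (n : ℕ) : IsCoveringMap (fun x : Fin n → ℝ => (x : Torus n)) :=
  (AddSubgroup.isAddQuotientCoveringMap_of_comm _ (intLattice_isDiscrete n)).isCoveringMap

/-- The torus is compact. -/
lemma torus_compact (n : ℕ) : CompactSpace (Torus n) := by
  have h : IsCompact ((fun x : Fin n → ℝ => (x : Torus n)) '' Set.Icc 0 1) :=
    isCompact_Icc.image (torus_cov n).continuous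
  refine ⟨?_⟩
  convert h
  symm
  rw [Set.eq_univ_iff_forall]
  intro y
  obtain ⟨x, rfl⟩ := QuotientAddGroup.mk_surjective y
  refine ⟨fun i => Int.fract (x i), ⟨fun i => Int.fract_nonneg _, fun i => (Int.fract_lt_one _).le⟩, ?_⟩
  refine QuotientAddGroup.eq.2 fun i => ⟨⌊x i⌋, ?_⟩
  simp only [Pi.add_apply, Pi.neg_apply]
  linarith [Int.fract_add_floor (x i)]

/-- **Uniqueness of the translation to which maps homotopic to the identity
semi-conjugate a homeomorphism.**  Let `f` be a homeomorphism of `𝕋ⁿ` and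
`g, h : 𝕋ⁿ → 𝕋ⁿ` continuous maps homotopic to the identity satisfying
`g ∘ f = g + α` and `h ∘ f = h + β`.  Then `α = β`. -/
theorem translation_eq_of_semiconjugacies
    (n : ℕ) (f : Torus n ≃ₜ Torus n)
    (g h : C(Torus n, Torus n))
    (hg : g.Homotopic (ContinuousMap.id (Torus n)))
    (hh : h.Homotopic (ContinuousMap.id (Torus n)))
    (α β : Torus n)
    (hgf : ∀ x : Torus n, g (f x) = g x + α)
    (hhf : ∀ x : Torus n, h (f x) = h x + β) :
    α = β := by
  have := torus_compact n
  have : PreconnectedSpace (Torus n) :=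
    (QuotientAddGroup.mk_surjective (s := intLattice n)).denseRange.preconnectedSpace
      (torus_cov n).continuous
  have cov := torus_cov n
  obtain ⟨G⟩ := hg
  obtain ⟨H⟩ := hh
  -- the null-homotopy of `g - h`
  let K : C(unitInterval × Torus n, Torus n) :=
    ⟨fun p => G (unitInterval.symm p.1, p.2) - H (unitInterval.symm p.1, p.2), by fun_prop⟩
  have K0 : ∀ a, K (0, a) = ((0 : Fin n → ℝ) : Torus n) := by
    intro a
    simp [K]
  have K1 : ∀ a, K (1, a) = g a - h a := by
    intro a
    simp [K]
  let L := cov.liftHomotopy K (ContinuousMap.const _ 0) K0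
  have hL : ∀ p, ((L p : Fin n → ℝ) : Torus n) = K p := fun p =>
    congr_fun (cov.liftHomotopy_lifts K (ContinuousMap.const _ 0) K0) p
  let D : Torus n → Fin n → ℝ := fun x => L (1, x)
  have Dc : Continuous D := by fun_prop
  have hD : ∀ x, ((D x : Fin n → ℝ) : Torus n) = g x - h x := fun x => (hL _).trans (K1 x)
  have hc : ∀ x, ((D (f x) - D x : Fin n → ℝ) : Torus n) = α - β := by
    intro x
    rw [QuotientAddGroup.mk_sub, hD, hD, hgf, hhf]
    abel
  have hconst : ∀ x y, D (f x) - D x = D (f y) - D y := by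
    intro x y
    exact cov.const_of_comp (g := fun x => D (f x) - D x)
      ((Dc.comp f.continuous).sub Dc) (fun a b => (hc a).trans (hc b).symm) x y
  have hzero : D (f 0) - D 0 = 0 := by
    ext i
    have Dic : Continuous fun x => D x i := (continuous_apply i).comp Dc
    obtain ⟨a, -, ha⟩ := isCompact_univ.exists_isMaxOn (Set.univ_nonempty (α := Torus n))
      Dic.continuousOn
    obtain ⟨b, -, hb⟩ := isCompact_univ.exists_isMinOn (Set.univ_nonempty (α := Torus n))
      Dic.continuousOn
    have h1 : D (f a) i ≤ D a i := ha (Set.mem_univ _)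
    have h2 : D b i ≤ D (f b) i := hb (Set.mem_univ _)
    have h3 := congr_fun (hconst 0 a) i
    have h4 := congr_fun (hconst 0 b) i
    simp only [Pi.sub_apply, Pi.zero_apply] at *
    linarith
  have := hc 0
  rw [hzero] at this
  exact (sub_eq_zero.1 this.symm)
end
end

section
/- Let U ⊆ ℝⁿ, let c : U → ℝⁿ, and for each a ∈ U let u_a : ℝⁿ → ℝ be a differentiable ℤⁿ-periodic function; set η_a(q) = c(a) + ∇u_a(q). Let 𝒰 ⊆ ℝⁿ × ℝⁿ contain the graph {(q, η_a(q)) : q ∈ ℝⁿ} of every η_a, and let H : 𝒰 → ℝ be strictly convex in the fiber: whenever (q,p), (q,p') ∈ 𝒰 with p ≠ p', λ ∈ (0,1), and (q, λp + (1−λ)p') ∈ 𝒰, one has H(q, λp + (1−λ)p') < λH(q,p) + (1−λ)H(q,p'). Let A : ℝⁿ → ℝ satisfy H(q, η_a(q)) = A(c(a)) for all q ∈ ℝⁿ and a ∈ U. Suppose a₁, a₂, a₃ ∈ U and λ ∈ (0,1) are such that c(a₃) = λ c(a₁) + (1−λ) c(a₂), the graphs of η_{a₁} and η_{a₂} are disjoint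 (η_{a₁}(q) ≠ η_{a₂}(q) for all q), and (q, λη_{a₁}(q) + (1−λ)η_{a₂}(q)) ∈ 𝒰 for all q. Then A(c(a₃)) < λ A(c(a₁)) + (1−λ) A(c(a₂)). -/
/-- **Strict convexity of the `A`-function.**
Let `c : U → ℝⁿ`, and for each `a ∈ U` let `u a : ℝⁿ → ℝ` be a differentiable
`ℤⁿ`-periodic function; set `η a q = c a + ∇(u a) q`.  Let `𝒰 ⊆ ℝⁿ × ℝⁿ` contain the
graph of every `η a`, let `H : 𝒰 → ℝ` be strictly convex in the fiber, and let `A`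
satisfy the Hamilton–Jacobi identity `H (q, η a q) = A (c a)` for all `q` and `a ∈ U`.
If `a₁, a₂, a₃ ∈ U` and `λ ∈ (0,1)` satisfy `c a₃ = λ c a₁ + (1-λ) c a₂`, the graphs of
`η a₁` and `η a₂` are disjoint, and `(q, λ η a₁ q + (1-λ) η a₂ q) ∈ 𝒰` for all `q`,
then `A (c a₃) < λ A (c a₁) + (1-λ) A (c a₂)`. -/
theorem A_function_strictly_convex
    (n : ℕ) (U : Set (Fin n → ℝ))
    (c : (Fin n → ℝ) → (Fin n → ℝ))
    (u : (Fin n → ℝ) → (Fin n → ℝ) → ℝ)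
    (hu_diff : ∀ a ∈ U, Differentiable ℝ (u a))
    (hu_per : ∀ a ∈ U, ∀ (q : Fin n → ℝ) (m : Fin n → ℤ),
      u a (q + fun i => (m i : ℝ)) = u a q)
    (η : (Fin n → ℝ) → (Fin n → ℝ) → (Fin n → ℝ))
    (hη : ∀ a ∈ U, ∀ (q : Fin n → ℝ) (k : Fin n),
      η a q k = c a k + fderiv ℝ (u a) q (Pi.single k 1))
    (𝒰 : Set ((Fin n → ℝ) × (Fin n → ℝ)))
    (hgraph : ∀ a ∈ U, ∀ q : Fin n → ℝ, (q, η a q) ∈ 𝒰)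
    (H : (Fin n → ℝ) × (Fin n → ℝ) → ℝ)
    (hconv : ∀ (q p p' : Fin n → ℝ), (q, p) ∈ 𝒰 → (q, p') ∈ 𝒰 → p ≠ p' →
      ∀ l : ℝ, 0 < l → l < 1 → (q, l • p + (1 - l) • p') ∈ 𝒰 →
        H (q, l • p + (1 - l) • p') < l * H (q, p) + (1 - l) * H (q, p'))
    (A : (Fin n → ℝ) → ℝ)
    (hHJ : ∀ a ∈ U, ∀ q : Fin n → ℝ, H (q, η a q) = A (c a))
    (a₁ a₂ a₃ : Fin n → ℝ) (ha₁ : a₁ ∈ U) (ha₂ : a₂ ∈ U) (ha₃ : a₃ ∈ U)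
    (l : ℝ) (hl0 : 0 < l) (hl1 : l < 1)
    (hc3 : c a₃ = l • c a₁ + (1 - l) • c a₂)
    (hdisj : ∀ q : Fin n → ℝ, η a₁ q ≠ η a₂ q)
    (hmem : ∀ q : Fin n → ℝ, (q, l • η a₁ q + (1 - l) • η a₂ q) ∈ 𝒰) :
    A (c a₃) < l * A (c a₁) + (1 - l) * A (c a₂) := by
  set v : (Fin n → ℝ) → ℝ := fun q => l * u a₁ q + (1 - l) * u a₂ q - u a₃ q with hv
  have d1 := hu_diff a₁ ha₁
  have d2 := hu_diff a₂ ha₂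
  have d3 := hu_diff a₃ ha₃
  have hvd : Differentiable ℝ v := ((d1.const_mul l).add (d2.const_mul (1 - l))).sub d3
  obtain ⟨q, -, hq⟩ := (isCompact_Icc : IsCompact (Set.Icc (0 : Fin n → ℝ) 1)).exists_isMaxOn
    ⟨0, by simp⟩ hvd.continuous.continuousOn
  have hmax : ∀ x, v x ≤ v q := by
    intro x
    have h1 : v (x + fun i => ((-⌊x i⌋ : ℤ) : ℝ)) = v x := by
      simp only [hv]
      rw [hu_per a₁ ha₁ x (fun i => -⌊x i⌋), hu_per a₂ ha₂ x (fun i => -⌊x i⌋),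
        hu_per a₃ ha₃ x (fun i => -⌊x i⌋)]
    rw [← h1]
    apply hq
    constructor
    · intro i
      have := Int.floor_le (x i)
      simp only [Pi.zero_apply, Pi.add_apply]
      push_cast
      linarith
    · intro i
      have := Int.lt_floor_add_one (x i)
      simp only [Pi.one_apply, Pi.add_apply]
      push_cast
      linarith
  have hloc : IsLocalMax v q := Filter.Eventually.of_forall hmax
  have h0 := hloc.fderiv_eq_zero
  have hF := (((d1 q).hasFDerivAt.const_mul l).add ((d2 q).hasFDerivAt.const_mul (1 - l))).sub
    (d3 q).hasFDerivAt
  have hF0 := hF.fderiv.symm.trans h0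
  have key : η a₃ q = l • η a₁ q + (1 - l) • η a₂ q := by
    ext k
    have hk := DFunLike.congr_fun hF0 (Pi.single k 1)
    have hck := congrFun hc3 k
    simp at hk hck
    simp only [Pi.add_apply, Pi.smul_apply, smul_eq_mul, hη a₁ ha₁, hη a₂ ha₂, hη a₃ ha₃]
    linarith
  have := hconv q _ _ (hgraph a₁ ha₁ q) (hgraph a₂ ha₂ q) (hdisj q) l hl0 hl1 (hmem q)
  rw [← key, hHJ a₁ ha₁, hHJ a₂ ha₂, hHJ a₃ ha₃] at this
  exact this
end

section
/- Let H₁, …, Hₙ : ℝⁿ × ℝⁿ → ℝ be C¹ functions of (q,p) and let p : ℝⁿ → ℝⁿ be a C¹ map such that for each j the function q ↦ H_j(q, p(q)) is constant. For q ∈ ℝⁿ define the n×n matrices M(q) with entries M(q)_{jk} = ∂H_j/∂p_k(q, p(q)), Dp(q) with entries (Dp(q))_{jk} = ∂p_j/∂q_k(q), and P(q) with entries P(q)_{jk} = {H_j, H_k}(q, p(q)). Then M(q) · (Dp(q) − Dp(q)ᵀ) · M(q)ᵀ = −P(q) for every q ∈ ℝⁿ. -/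
open Matrix

noncomputable section

/-- Partial derivative `∂H/∂qᵢ` of a function `H(q,p)` on `ℝⁿ × ℝⁿ`. -/
def pdq (n : ℕ) (H : (Fin n → ℝ) × (Fin n → ℝ) → ℝ)
    (x : (Fin n → ℝ) × (Fin n → ℝ)) (i : Fin n) : ℝ :=
  fderiv ℝ H x (Pi.single i 1, 0)

/-- Partial derivative `∂H/∂pᵢ` of a function `H(q,p)` on `ℝⁿ × ℝⁿ`. -/
def pdp (n : ℕ) (H : (Fin n → ℝ) × (Fin n → ℝ) → ℝ)
    (x : (Fin n → ℝ) × (Fin n → ℝ)) (i : Fin n) : ℝ :=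
  fderiv ℝ H x (0, Pi.single i 1)

/-- The Poisson bracket `{F,G} = Σᵢ (∂F/∂qᵢ ∂G/∂pᵢ − ∂F/∂pᵢ ∂G/∂qᵢ)`. -/
def poissonBracket (n : ℕ) (F G : (Fin n → ℝ) × (Fin n → ℝ) → ℝ)
    (x : (Fin n → ℝ) × (Fin n → ℝ)) : ℝ :=
  ∑ i, (pdq n F x i * pdp n G x i - pdp n F x i * pdq n G x i)

/-- **The key matrix identity for commuting integrals along an invariant graph.**
Let `H₁, …, Hₙ` be `C¹` functions of `(q,p)` and `p : ℝⁿ → ℝⁿ` a `C¹` map such that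
each `q ↦ H_j (q, p q)` is constant.  With `M(q)_{jk} = ∂H_j/∂p_k (q, p q)`,
`Dp(q)_{jk} = ∂p_j/∂q_k (q)` and `P(q)_{jk} = {H_j, H_k} (q, p q)`, one has
`M(q) (Dp(q) − Dp(q)ᵀ) M(q)ᵀ = −P(q)` for every `q`. -/
theorem matrix_identity_of_constant_integrals
    (n : ℕ) (H : Fin n → (Fin n → ℝ) × (Fin n → ℝ) → ℝ)
    (hH : ∀ j, ContDiff ℝ 1 (H j))
    (p : (Fin n → ℝ) → (Fin n → ℝ)) (hp : ContDiff ℝ 1 p)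
    (hconst : ∀ (j : Fin n) (q q' : Fin n → ℝ), H j (q, p q) = H j (q', p q')) :
    ∀ q : Fin n → ℝ,
      (Matrix.of fun j k => pdp n (H j) (q, p q) k) *
        ((Matrix.of fun j k : Fin n => fderiv ℝ p q (Pi.single k 1) j) -
          (Matrix.of fun j k : Fin n => fderiv ℝ p q (Pi.single k 1) j)ᵀ) *
        (Matrix.of fun j k => pdp n (H j) (q, p q) k)ᵀ
      = -(Matrix.of fun j k => poissonBracket n (H j) (H k) (q, p q)) := by
  intro q
  have key : ∀ j i, pdq n (H j) (q, p q) i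
      = -∑ k, pdp n (H j) (q, p q) k * fderiv ℝ p q (Pi.single i 1) k := by
    intro j i
    have hpd : HasFDerivAt p (fderiv ℝ p q) q :=
      (hp.differentiable one_ne_zero q).hasFDerivAt
    have hHd : HasFDerivAt (H j) (fderiv ℝ (H j) (q, p q)) (q, p q) :=
      ((hH j).differentiable one_ne_zero (q, p q)).hasFDerivAt
    have hg : HasFDerivAt (fun x => (x, p x))
        ((ContinuousLinearMap.id ℝ (Fin n → ℝ)).prod (fderiv ℝ p q)) q :=
      (hasFDerivAt_id q).prodMk hpd
    have hc := HasFDerivAt.comp q hHd hg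
    have hc' : HasFDerivAt (H j ∘ fun x => (x, p x)) (0 : (Fin n → ℝ) →L[ℝ] ℝ) q := by
      have : (H j ∘ fun x => (x, p x)) = fun _ => H j (q, p q) := by
        funext x
        exact hconst j x q
      rw [this]
      exact hasFDerivAt_const _ _
    have h0 := congrArg (fun L => L (Pi.single i (1 : ℝ))) (hc.unique hc')
    simp only [ContinuousLinearMap.comp_apply, ContinuousLinearMap.prod_apply,
      ContinuousLinearMap.id_apply, ContinuousLinearMap.zero_apply] at h0
    have hlin : ∀ v : Fin n → ℝ, fderiv ℝ (H j) (q, p q) (0, v)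
        = ∑ k, pdp n (H j) (q, p q) k * v k := by
      intro v
      have := LinearMap.pi_apply_eq_sum_univ
        ((fderiv ℝ (H j) (q, p q)).comp
          (ContinuousLinearMap.inr ℝ (Fin n → ℝ) (Fin n → ℝ))).toLinearMap v
      simp only [ContinuousLinearMap.coe_coe, ContinuousLinearMap.comp_apply,
        ContinuousLinearMap.inr_apply, smul_eq_mul] at this
      rw [this]
      refine Finset.sum_congr rfl fun k _ => ?_
      rw [mul_comm, pdp]
      congr 3
      funext l
      simp [Pi.single_apply, eq_comm]
    have hsplit : ((Pi.single i (1 : ℝ), fderiv ℝ p q (Pi.single i 1)) :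
        (Fin n → ℝ) × (Fin n → ℝ))
        = (Pi.single i 1, 0) + (0, fderiv ℝ p q (Pi.single i 1)) := by simp
    rw [hsplit, map_add, hlin] at h0
    rw [pdq]
    linarith
  set M : Matrix (Fin n) (Fin n) ℝ := Matrix.of fun j k => pdp n (H j) (q, p q) k with hM
  set D : Matrix (Fin n) (Fin n) ℝ :=
    Matrix.of fun j k : Fin n => fderiv ℝ p q (Pi.single k 1) j with hD
  have hQ : (Matrix.of fun j k => pdq n (H j) (q, p q) k) = -(M * D) := by
    ext j k
    simp [key, hM, hD, Matrix.mul_apply]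
  have hP : (Matrix.of fun j k => poissonBracket n (H j) (H k) (q, p q))
      = (Matrix.of fun j k => pdq n (H j) (q, p q) k) * Mᵀ
        - M * (Matrix.of fun j k => pdq n (H j) (q, p q) k)ᵀ := by
    ext j k
    simp [poissonBracket, hM, Matrix.mul_apply, Finset.sum_sub_distrib]
  rw [hP, hQ, Matrix.transpose_neg, Matrix.transpose_mul]
  noncomm_ring
end
end

section
/- Let H₁, …, Hₙ : ℝⁿ × ℝⁿ → ℝ be C¹ functions of (q,p) that Poisson commute along the graph of a C¹ map p : ℝⁿ → ℝⁿ, i.e. {H_j, H_k}(q, p(q)) = 0 for all j, k and all q, and suppose for each j the function q ↦ H_j(q, p(q)) is constant. If for every q the n×n matrix M(q) with entries ∂H_j/∂p_k(q, p(q)) is invertible, then the Jacobian matrix Dp(q) = (∂p_j/∂q_k(q))_{jk} is symmetric for every q (i.e. the graph of p is Lagrangian). -/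
open Matrix

noncomputable section

/-- **Poisson-commuting integrals with nondegenerate momenta force the graph to be
Lagrangian.**  Let `H₁, …, Hₙ` be `C¹` functions of `(q,p)` Poisson commuting along the
graph of a `C¹` map `p : ℝⁿ → ℝⁿ`, each constant on this graph.  If the matrix
`M(q) = (∂H_j/∂p_k (q, p q))` is invertible for every `q`, then the Jacobian matrix
`Dp(q)` is symmetric for every `q` (i.e. the graph of `p` is Lagrangian). -/
theorem jacobian_symmetric_of_poisson_commuting
    (n : ℕ) (H : Fin n → (Fin n → ℝ) × (Fin n → ℝ) → ℝ)
    (hH : ∀ j, ContDiff ℝ 1 (H j))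
    (p : (Fin n → ℝ) → (Fin n → ℝ)) (hp : ContDiff ℝ 1 p)
    (hcomm : ∀ (j k : Fin n) (q : Fin n → ℝ),
      poissonBracket n (H j) (H k) (q, p q) = 0)
    (hconst : ∀ (j : Fin n) (q q' : Fin n → ℝ), H j (q, p q) = H j (q', p q'))
    (hM : ∀ q : Fin n → ℝ,
      IsUnit (Matrix.of fun j k => pdp n (H j) (q, p q) k)) :
    ∀ (q : Fin n → ℝ) (j k : Fin n),
      fderiv ℝ p q (Pi.single k 1) j = fderiv ℝ p q (Pi.single j 1) k := by
  intro q
  set M : Matrix (Fin n) (Fin n) ℝ := Matrix.of fun j k => pdp n (H j) (q, p q) k with hMdef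
  set A : Matrix (Fin n) (Fin n) ℝ := Matrix.of fun j k => pdq n (H j) (q, p q) k with hAdef
  set P : Matrix (Fin n) (Fin n) ℝ :=
    Matrix.of fun j k => fderiv ℝ p q (Pi.single k 1) j with hPdef
  have hu : IsUnit M := hM q
  have hchain : A = -(M * P) := by
    ext j k
    have hHd : HasFDerivAt (H j) (fderiv ℝ (H j) (q, p q)) (q, p q) :=
      ((hH j).differentiable (by norm_num) _).hasFDerivAt
    have hpd : HasFDerivAt p (fderiv ℝ p q) q :=
      (hp.differentiable (by norm_num) _).hasFDerivAt
    have hg : HasFDerivAt (fun x => (x, p x))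
        ((ContinuousLinearMap.id ℝ (Fin n → ℝ)).prod (fderiv ℝ p q)) q :=
      (hasFDerivAt_id q).prodMk hpd
    have hc := HasFDerivAt.comp (g := H j) q hHd hg
    have hfun : (H j ∘ fun x => (x, p x)) = fun _ => H j (q, p q) := by
      funext x
      exact hconst j x q
    rw [hfun] at hc
    have h0 := hc.unique (hasFDerivAt_const (H j (q, p q)) q)
    have h1 := congrArg (fun L => L (Pi.single k (1 : ℝ))) h0
    simp only [ContinuousLinearMap.comp_apply, ContinuousLinearMap.prod_apply,
      ContinuousLinearMap.id_apply, ContinuousLinearMap.zero_apply] at h1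
    have hsplit : ∀ v w : Fin n → ℝ, fderiv ℝ (H j) (q, p q) (v, w)
        = fderiv ℝ (H j) (q, p q) (v, 0) + fderiv ℝ (H j) (q, p q) (0, w) := by
      intro v w
      rw [← map_add]
      simp
    have hlin : ∀ w : Fin n → ℝ, fderiv ℝ (H j) (q, p q) (0, w)
        = ∑ i, pdp n (H j) (q, p q) i * w i := by
      intro w
      have h2 := LinearMap.pi_apply_eq_sum_univ
        ((fderiv ℝ (H j) (q, p q)).comp
          (ContinuousLinearMap.inr ℝ (Fin n → ℝ) (Fin n → ℝ))).toLinearMap w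
      simp only [ContinuousLinearMap.coe_coe, ContinuousLinearMap.comp_apply,
        ContinuousLinearMap.inr_apply, smul_eq_mul] at h2
      rw [h2]
      refine Finset.sum_congr rfl fun i _ => ?_
      rw [mul_comm, pdp]
      congr 3
      ext l
      simp [Pi.single_apply, eq_comm]
    rw [hsplit, hlin] at h1
    simp only [Matrix.neg_apply, Matrix.mul_apply, hAdef, hMdef, hPdef, Matrix.of_apply, pdq]
    linarith
  have hbr : A * Mᵀ = M * Aᵀ := by
    ext j k
    have h := hcomm j k q
    rw [poissonBracket, Finset.sum_sub_distrib, sub_eq_zero] at h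
    simpa [Matrix.mul_apply, hAdef, hMdef] using h
  have hsym : P = Pᵀ := by
    rw [hchain, Matrix.transpose_neg, Matrix.transpose_mul, Matrix.neg_mul, Matrix.mul_neg,
      neg_inj, Matrix.mul_assoc] at hbr
    have h1 := hu.mul_left_cancel hbr
    have hut : IsUnit Mᵀ := Matrix.isUnit_transpose M |>.mpr hu
    exact hut.mul_right_cancel h1
  intro j k
  exact congrFun (congrFun hsym j) k
end
end

section
/- Let p_i : ℝⁿ → ℝⁿ be a sequence of C¹, ℤⁿ-periodic maps converging uniformly to a map p : ℝⁿ → ℝⁿ, and suppose sup_q ‖Dp_i(q) − Dp_i(q)ᵀ‖ → 0 as i → ∞. Then the limit 1-form Σ_j p^{(j)} dq_j is closed in the distribution sense: for every C¹ ℤⁿ-periodic function ψ : ℝⁿ → ℝ and all indices j, k, ∫_{[0,1]ⁿ} ( p^{(j)}(q) · ∂ψ/∂q_k(q) − p^{(k)}(q) · ∂ψ/∂q_j(q) ) dq = 0. -/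
open Filter

theorem aux_integral_partial_periodic (n : ℕ) (g : (Fin n → ℝ) → ℝ) (hg : ContDiff ℝ 1 g)
    (hper : ∀ (q : Fin n → ℝ) (m : Fin n → ℤ), g (q + fun j => (m j : ℝ)) = g q) (k : Fin n) :
    ∫ q in Set.Icc (0 : Fin n → ℝ) 1, fderiv ℝ g q (Pi.single k 1) = 0 := by
  obtain _ | n := n
  · exact k.elim0
  have hcont : Continuous fun q => fderiv ℝ g q (Pi.single k 1) :=
    (hg.continuous_fderiv one_ne_zero).clm_apply continuous_const
  have hsum : ∀ x, ∑ i, (if i = k then fderiv ℝ g x else 0) (Pi.single i (1:ℝ))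
      = fderiv ℝ g x (Pi.single k 1) := by
    intro x
    rw [Finset.sum_eq_single k]
    · simp
    · intro b _ hb; simp [hb]
    · simp
  have key := MeasureTheory.integral_divergence_of_hasFDerivAt_off_countable'
    (0 : Fin (n+1) → ℝ) 1 (fun _ => zero_le_one)
    (fun i => if i = k then g else fun _ => 0)
    (fun i x => if i = k then fderiv ℝ g x else 0) ∅ Set.countable_empty
    (by
      intro i
      by_cases h : i = k
      · simpa [h] using hg.continuous.continuousOn
      · simpa [h] using continuousOn_const)
    (by
      intro x _ i
      by_cases h : i = k
      · simpa [h] using (hg.differentiable one_ne_zero x).hasFDerivAt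
      · simpa [h] using hasFDerivAt_const (0:ℝ) x)
    (by
      simp only [hsum]
      exact hcont.continuousOn.integrableOn_compact isCompact_Icc)
  simp only [hsum] at key
  rw [key]
  apply Finset.sum_eq_zero
  intro i _
  by_cases h : i = k
  · subst h
    simp only [if_true]
    rw [sub_eq_zero]
    congr 1
    funext x
    rw [← hper (i.insertNth ((0 : Fin (n+1) → ℝ) i) x) (Pi.single i 1)]
    congr 1
    funext l
    refine Fin.succAboveCases i ?_ (fun l => ?_) l
    · simp
    · simp
  · simp [h]



/-- **Closedness in the distribution sense of the limit one-form.**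
Let `pᵢ : ℝⁿ → ℝⁿ` be `C¹`, `ℤⁿ`-periodic maps converging uniformly to `p`, with
`sup_q ‖Dpᵢ(q) − Dpᵢ(q)ᵀ‖ → 0` (entrywise).  Then the limit `1`-form `Σⱼ p⁽ʲ⁾ dqⱼ` is
closed in the distribution sense: for every `C¹` `ℤⁿ`-periodic test function `ψ` and all
indices `j, k`, `∫_{[0,1]ⁿ} (p⁽ʲ⁾ ∂ψ/∂q_k − p⁽ᵏ⁾ ∂ψ/∂q_j) dq = 0`. -/
theorem limit_one_form_closed_in_distribution_sense
    (n : ℕ) (p : ℕ → (Fin n → ℝ) → (Fin n → ℝ))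
    (plim : (Fin n → ℝ) → (Fin n → ℝ))
    (hC1 : ∀ i, ContDiff ℝ 1 (p i))
    (hper : ∀ (i : ℕ) (q : Fin n → ℝ) (m : Fin n → ℤ),
      p i (q + fun j => (m j : ℝ)) = p i q)
    (hconv : TendstoUniformly p plim atTop)
    (hsym : ∀ ε : ℝ, 0 < ε → ∃ N : ℕ, ∀ i ≥ N, ∀ (q : Fin n → ℝ) (j k : Fin n),
      |fderiv ℝ (p i) q (Pi.single k 1) j - fderiv ℝ (p i) q (Pi.single j 1) k| ≤ ε)
    (ψ : (Fin n → ℝ) → ℝ) (hψ : ContDiff ℝ 1 ψ)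
    (hψper : ∀ (q : Fin n → ℝ) (m : Fin n → ℤ), ψ (q + fun j => (m j : ℝ)) = ψ q)
    (j k : Fin n) :
    ∫ q in Set.univ.pi fun _ : Fin n => Set.Icc (0:ℝ) 1,
      (plim q j * fderiv ℝ ψ q (Pi.single k 1) -
        plim q k * fderiv ℝ ψ q (Pi.single j 1)) = 0 := by

  have hbox : (Set.univ.pi fun _ : Fin n => Set.Icc (0:ℝ) 1) = Set.Icc (0 : Fin n → ℝ) 1 := by
    rw [Set.pi_univ_Icc]; rfl
  rw [hbox]
  have hpd : ∀ l, Continuous fun q => fderiv ℝ ψ q (Pi.single l 1) := fun l =>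
    (hψ.continuous_fderiv one_ne_zero).clm_apply continuous_const
  have hbd : ∀ f : (Fin n → ℝ) → ℝ, Continuous f →
      ∃ C, 0 ≤ C ∧ ∀ q ∈ Set.Icc (0 : Fin n → ℝ) 1, |f q| ≤ C := by
    intro f hf
    obtain ⟨C, hC⟩ := isCompact_Icc.exists_bound_of_continuousOn
      (s := Set.Icc (0 : Fin n → ℝ) 1) hf.continuousOn
    exact ⟨|C|, abs_nonneg _, fun q hq => (hC q hq).trans (le_abs_self C)⟩
  obtain ⟨A, hA0, hA⟩ := hbd ψ hψ.continuous
  obtain ⟨B, hB0, hB⟩ := hbd _ (hpd k)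
  obtain ⟨C, hC0, hC⟩ := hbd _ (hpd j)
  have hplim : Continuous plim :=
    hconv.continuous (Frequently.of_forall fun i => (hC1 i).continuous)
  have hvol : (MeasureTheory.volume (Set.Icc (0 : Fin n → ℝ) 1)) = 1 := by
    rw [Real.volume_Icc_pi]; simp
  have hcomp : ∀ i l, ContDiff ℝ 1 fun q => p i q l := fun i l => contDiff_pi.1 (hC1 i) l
  have hprod : ∀ i l, ContDiff ℝ 1 fun q => p i q l * ψ q := fun i l => (hcomp i l).mul hψ
  have hzero : ∀ i l m, ∫ q in Set.Icc (0 : Fin n → ℝ) 1,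
      fderiv ℝ (fun q => p i q l * ψ q) q (Pi.single m 1) = 0 := fun i l m =>
    aux_integral_partial_periodic n _ (hprod i l)
      (fun q m => by simp only [hper, hψper]) m
  have hder : ∀ i l m q, fderiv ℝ (fun q => p i q l * ψ q) q (Pi.single m 1)
      = p i q l * fderiv ℝ ψ q (Pi.single m 1) + ψ q * fderiv ℝ (p i) q (Pi.single m 1) l := by
    intro i l m q
    have h1 : HasFDerivAt (fun q => p i q l)
        ((ContinuousLinearMap.proj (R := ℝ) (φ := fun _ : Fin n => ℝ) l).comp
          (fderiv ℝ (p i) q)) q :=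
      hasFDerivAt_pi'.1 ((hC1 i).differentiable one_ne_zero q).hasFDerivAt l
    have h2 := h1.mul (hψ.differentiable one_ne_zero q).hasFDerivAt
    have h3 := h2.fderiv
    change fderiv ℝ (fun q => p i q l * ψ q) q = _ at h3
    rw [h3]
    simp
  have hIntOn : ∀ f : (Fin n → ℝ) → ℝ, Continuous f →
      MeasureTheory.IntegrableOn f (Set.Icc (0 : Fin n → ℝ) 1) := fun f hf =>
    hf.continuousOn.integrableOn_compact isCompact_Icc
  have hHc : ∀ i l m, Continuous fun q =>
      fderiv ℝ (fun q => p i q l * ψ q) q (Pi.single m 1) := fun i l m =>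
    ((hprod i l).continuous_fderiv one_ne_zero).clm_apply continuous_const
  have hcl : ∀ l, Continuous fun q => plim q l := fun l => (continuous_apply l).comp hplim
  have main : ∀ ε : ℝ, 0 < ε → |∫ q in Set.Icc (0 : Fin n → ℝ) 1,
      (plim q j * fderiv ℝ ψ q (Pi.single k 1) -
        plim q k * fderiv ℝ ψ q (Pi.single j 1))| ≤ ε * (A + B + C) := by
    intro ε hε
    obtain ⟨N, hN⟩ := hsym ε hε
    obtain ⟨i, hi, hiN⟩ :=
      ((Metric.tendstoUniformly_iff.1 hconv ε hε).and (eventually_ge_atTop N)).exists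
    have hle : ∀ q l, |plim q l - p i q l| ≤ ε := fun q l => by
      have := (dist_le_pi_dist (plim q) (p i q) l).trans (hi q).le
      rwa [Real.dist_eq] at this
    have hH1 := hIntOn _ (hHc i j k)
    have hH2 := hIntOn _ (hHc i k j)
    have hF := hIntOn _ (((hcl j).mul (hpd k)).sub ((hcl k).mul (hpd j)))
    have e1 := MeasureTheory.integral_sub hF (hH1.sub hH2)
    have e2 := MeasureTheory.integral_sub hH1 hH2
    rw [hzero, hzero, sub_zero] at e2
    simp only [Pi.sub_apply, Pi.mul_apply] at e1
    rw [e2, sub_zero] at e1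
    rw [← e1]
    have hb := MeasureTheory.norm_setIntegral_le_of_norm_le_const
      (μ := MeasureTheory.volume) (s := Set.Icc (0 : Fin n → ℝ) 1) (C := ε * (A + B + C))
      (f := fun q => (plim q j * fderiv ℝ ψ q (Pi.single k 1) -
        plim q k * fderiv ℝ ψ q (Pi.single j 1)) -
        (fderiv ℝ (fun q => p i q j * ψ q) q (Pi.single k 1) -
          fderiv ℝ (fun q => p i q k * ψ q) q (Pi.single j 1)))
      (by rw [hvol]; exact ENNReal.one_lt_top) (by
        intro q hq
        rw [hder, hder, Real.norm_eq_abs]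
        have t : ∀ a b c d e f g h s : ℝ, (a * b - c * d) - (e * b + s * f - (g * d + s * h))
          = (a - e) * b - (c - g) * d - s * (f - h) := by intros; ring
        rw [t]
        have x1 := mul_le_mul (hle q j) (hB q hq) (abs_nonneg _) hε.le
        have x2 := mul_le_mul (hle q k) (hC q hq) (abs_nonneg _) hε.le
        have x3 := mul_le_mul (hA q hq) (hN i hiN q j k) (abs_nonneg _) hA0
        rw [← abs_mul] at x1 x2 x3
        refine (abs_sub _ _).trans ?_
        refine (add_le_add_left (abs_sub _ _) _).trans ?_
        linarith)
    simpa [MeasureTheory.Measure.real, hvol] using hb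
  by_contra hne
  have hpos := abs_pos.2 hne
  have hM : 0 < A + B + C + 1 := by positivity
  have := main _ (div_pos hpos hM)
  rw [div_mul_eq_mul_div, le_div_iff₀ hM] at this
  nlinarith
end

section
/- Let U ⊆ ℝⁿ be open, H : ℝⁿ × ℝⁿ → ℝ a C¹ function of (q,p), c : U → ℝⁿ differentiable, A : ℝⁿ → ℝ differentiable, and S : ℝⁿ × U → ℝ a C¹ function whose mixed second partial derivatives ∂²S/∂a_j∂q_k and ∂²S/∂q_k∂a_j exist, are continuous, and are equal. Assume the Hamilton–Jacobi equation H(q, c(a) + ∂S/∂q(q,a)) = A(c(a)) holds for all q ∈ ℝⁿ and a ∈ U. Fix a ∈ U and let γ : ℝ → ℝⁿ be a C¹ curve with γ'(t) = ∂H/∂p(γ(t), c(a) + ∂S/∂q(γ(t),a)) for all t ∈ ℝ. Then for every t ∈ ℝ and every j ∈ {1,…,n}: Σ_k ∂c_k/∂a_j(a) · ( γ_k(t) − γ_k(0) − t · ∂A/∂x_k(c(a)) ) + ∂S/∂a_j(γ(t), a) − ∂S/∂a_j(γ(0), a) = 0. -/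
noncomputable section

/-- The partial gradient `∂S/∂q (q,a)` of a function `S(q,a)` on `ℝⁿ × ℝⁿ`. -/
def partialQ (n : ℕ) (S : (Fin n → ℝ) × (Fin n → ℝ) → ℝ)
    (x : (Fin n → ℝ) × (Fin n → ℝ)) : Fin n → ℝ :=
  fun k => fderiv ℝ S x (Pi.single k 1, 0)

/-- The partial gradient `∂S/∂a (q,a)` of a function `S(q,a)` on `ℝⁿ × ℝⁿ`. -/
def partialA (n : ℕ) (S : (Fin n → ℝ) × (Fin n → ℝ) → ℝ)
    (x : (Fin n → ℝ) × (Fin n → ℝ)) : Fin n → ℝ :=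
  fun j => fderiv ℝ S x (0, Pi.single j 1)

theorem hasFDerivAt_of_cont_partials : ∀ (n : ℕ) (g : (Fin n → ℝ) → ℝ)
    (T : (Fin n → ℝ) → Fin n → ℝ) (_ : ∀ k, Continuous fun q => T q k)
    (_ : ∀ q k, HasDerivAt (fun s : ℝ => g (q + s • (Pi.single k 1 : Fin n → ℝ))) (T q k) 0)
    (q : Fin n → ℝ),
    HasFDerivAt g (∑ k, T q k • (ContinuousLinearMap.proj k : (Fin n → ℝ) →L[ℝ] ℝ)) q := by
  intro n
  induction n with
  | zero =>
    intro g T _ _ q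
    exact hasFDerivAt_of_subsingleton g q |>.congr_fderiv (by simp)
  | succ n ih =>
    intro g T hT hg q
    have hcons : Continuous fun v : ℝ × (Fin n → ℝ) =>
        (Fin.cons v.1 v.2 : Fin (n + 1) → ℝ) := by
      refine continuous_pi fun i => ?_
      refine Fin.cases ?_ (fun i => ?_) i
      · simpa using continuous_fst
      · simp only [Fin.cons_succ]; fun_prop
    let f : ℝ → (Fin n → ℝ) → ℝ := fun x y => g (Fin.cons x y)
    let f₁ : ℝ → (Fin n → ℝ) → ℝ →L[ℝ] ℝ := fun x y =>
      T (Fin.cons x y) 0 • (ContinuousLinearMap.id ℝ ℝ)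
    let f₂ : ℝ → (Fin n → ℝ) → (Fin n → ℝ) →L[ℝ] ℝ := fun x y =>
      ∑ k, T (Fin.cons x y) (Fin.succ k) • (ContinuousLinearMap.proj k : (Fin n → ℝ) →L[ℝ] ℝ)
    have d1 : ∀ v : ℝ × (Fin n → ℝ), HasFDerivAt (fun x => f x v.2) (f₁ v.1 v.2) v.1 := by
      rintro ⟨x, y⟩
      have h := hg (Fin.cons x y) 0
      have h2 : HasDerivAt (fun x' : ℝ => f x' y) (T (Fin.cons x y) 0) x := by
        have h3 : HasDerivAt (fun x' : ℝ => x' - x) 1 x := (hasDerivAt_id x).sub_const x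
        have h' : HasDerivAt (fun s : ℝ => g ((Fin.cons x y : Fin (n + 1) → ℝ) +
            s • (Pi.single 0 1 : Fin (n + 1) → ℝ))) (T (Fin.cons x y) 0) (x - x) := by
          simpa using h
        have h4 := HasDerivAt.comp (h := fun x' : ℝ => x' - x) x h' h3
        rw [mul_one] at h4
        refine h4.congr_of_eventuallyEq (Filter.Eventually.of_forall fun x' => ?_)
        show g _ = g _
        congr 1
        ext i
        refine Fin.cases ?_ (fun i => ?_) i <;> simp
      refine h2.hasFDerivAt.congr_fderiv ?_
      ext; simp [f₁]
    have d2 : ∀ v : ℝ × (Fin n → ℝ), HasFDerivAt (fun y => f v.1 y) (f₂ v.1 v.2) v.2 := by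
      rintro ⟨x, y⟩
      refine ih (fun y => g (Fin.cons x y)) (fun y k => T (Fin.cons x y) (Fin.succ k)) ?_ ?_ y
      · intro k
        exact (hT k.succ).comp (hcons.comp (by fun_prop : Continuous fun y => (x, y)))
      · intro y k
        convert hg (Fin.cons x y) k.succ using 3 with s
        ext i
        refine Fin.cases ?_ (fun i => ?_) i
        · simp
        · simp [Pi.single_apply]
    have c1 : Continuous (Function.HasUncurry.uncurry f₁) := by
      have : Continuous fun v : ℝ × (Fin n → ℝ) =>
        T (Fin.cons v.1 v.2) 0 • (ContinuousLinearMap.id ℝ ℝ) :=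
        ((hT 0).comp hcons).smul continuous_const
      exact this
    have c2 : Continuous (Function.HasUncurry.uncurry f₂) := by
      have : Continuous fun v : ℝ × (Fin n → ℝ) =>
        ∑ k, T (Fin.cons v.1 v.2) (Fin.succ k) •
          (ContinuousLinearMap.proj k : (Fin n → ℝ) →L[ℝ] ℝ) :=
        continuous_finsetSum _ fun k _ => ((hT k.succ).comp hcons).smul continuous_const
      exact this
    have key := (hasStrictFDerivAt_uncurry_coprod (u := (q 0, Fin.tail q)) (f := f) (f₁ := f₁)
      (f₂ := f₂) (Filter.Eventually.of_forall d1) (Filter.Eventually.of_forall d2)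
      c1.continuousAt c2.continuousAt).hasFDerivAt
    let L : (Fin (n + 1) → ℝ) →L[ℝ] ℝ × (Fin n → ℝ) :=
      (ContinuousLinearMap.proj 0).prod
        (ContinuousLinearMap.pi fun k => ContinuousLinearMap.proj (Fin.succ k))
    have hL : HasFDerivAt L L q := L.hasFDerivAt
    have h5 := HasFDerivAt.comp (f := L) q key hL
    have h6 : (Function.HasUncurry.uncurry f) ∘ L = g := by
      ext q
      show g (Fin.cons (q 0) (Fin.tail q)) = g q
      rw [Fin.cons_self_tail]
    rw [h6] at h5
    refine h5.congr_fderiv ?_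
    ext v
    simp [L, Function.HasUncurry.uncurry, f₁, f₂, Fin.sum_univ_succ]

/-- **Differentiating the Hamilton–Jacobi equation along an orbit.**
Let `H(q,p)` be `C¹`, `c : U → ℝⁿ` and `A : ℝⁿ → ℝ` differentiable, and `S(q,a)` a `C¹`
function (on `ℝⁿ × U`, `U` open) whose mixed second partial derivatives
`∂²S/∂a_j∂q_k = T(·)_{jk} = ∂²S/∂q_k∂a_j` exist, are continuous, and are equal.
Assume the Hamilton–Jacobi equation `H (q, c a + ∂S/∂q (q,a)) = A (c a)` on `ℝⁿ × U`.
Fix `a ∈ U` and a `C¹` curve `γ` with `γ' t = ∂H/∂p (γ t, c a + ∂S/∂q (γ t, a))`.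
Then for every `t` and `j`:
`Σ_k ∂c_k/∂a_j (a) (γ_k t − γ_k 0 − t ∂A/∂x_k (c a)) + ∂S/∂a_j (γ t, a) − ∂S/∂a_j (γ 0, a) = 0`. -/
theorem hamilton_jacobi_orbit_identity
    (n : ℕ) (U : Set (Fin n → ℝ)) (hU : IsOpen U)
    (H : (Fin n → ℝ) × (Fin n → ℝ) → ℝ) (hH : ContDiff ℝ 1 H)
    (c : (Fin n → ℝ) → (Fin n → ℝ)) (hc : ∀ a ∈ U, DifferentiableAt ℝ c a)
    (A : (Fin n → ℝ) → ℝ) (hA : Differentiable ℝ A)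
    (S : (Fin n → ℝ) × (Fin n → ℝ) → ℝ)
    (hS : ContDiffOn ℝ 1 S (Set.univ ×ˢ U))
    (T : (Fin n → ℝ) × (Fin n → ℝ) → Fin n → Fin n → ℝ)
    (hT_aq : ∀ (q : Fin n → ℝ), ∀ a ∈ U, ∀ (j k : Fin n),
      HasDerivAt (fun s : ℝ => partialQ n S (q, a + s • (Pi.single j 1 : Fin n → ℝ)) k)
        (T (q, a) j k) 0)
    (hT_qa : ∀ (q : Fin n → ℝ), ∀ a ∈ U, ∀ (j k : Fin n),
      HasDerivAt (fun s : ℝ => partialA n S (q + s • (Pi.single k 1 : Fin n → ℝ), a) j)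
        (T (q, a) j k) 0)
    (hT_cont : ∀ j k : Fin n,
      ContinuousOn (fun x : (Fin n → ℝ) × (Fin n → ℝ) => T x j k) (Set.univ ×ˢ U))
    (hHJ : ∀ (q : Fin n → ℝ), ∀ a ∈ U, H (q, c a + partialQ n S (q, a)) = A (c a))
    (a : Fin n → ℝ) (ha : a ∈ U)
    (γ : ℝ → Fin n → ℝ)
    (hγ : ∀ t : ℝ, HasDerivAt γ
      (fun i => fderiv ℝ H (γ t, c a + partialQ n S (γ t, a)) (0, Pi.single i 1)) t) :
    ∀ (t : ℝ) (j : Fin n),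
      (∑ k, fderiv ℝ c a (Pi.single j 1) k *
          (γ t k - γ 0 k - t * fderiv ℝ A (c a) (Pi.single k 1))) +
        partialA n S (γ t, a) j - partialA n S (γ 0, a) j = 0 := by
  have hp : ∀ (φ : (Fin n → ℝ) →ₗ[ℝ] ℝ) (v : Fin n → ℝ),
      φ v = ∑ k, v k * φ (Pi.single k 1) := by
    intro φ v
    conv_lhs => rw [← Finset.univ_sum_single v]
    rw [map_sum]
    refine Finset.sum_congr rfl fun k _ => ?_
    rw [← smul_eq_mul, ← map_smul]
    congr 1
    rw [← Pi.single_smul]; simp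
  intro t j
  -- differentiate the Hamilton-Jacobi equation in `a_j`
  have hline : HasDerivAt (fun s : ℝ => a + s • (Pi.single j 1 : Fin n → ℝ)) (Pi.single j 1) 0 := by
    simpa using ((hasDerivAt_id (0 : ℝ)).smul_const (Pi.single j 1 : Fin n → ℝ)).const_add a
  have hcl : HasDerivAt (fun s : ℝ => c (a + s • (Pi.single j 1 : Fin n → ℝ)))
      (fderiv ℝ c a (Pi.single j 1)) 0 := by
    have h : HasFDerivAt c (fderiv ℝ c a) (a + (0 : ℝ) • (Pi.single j 1 : Fin n → ℝ)) := by
      simpa using (hc a ha).hasFDerivAt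
    exact h.comp_hasDerivAt (0 : ℝ) hline
  have hmem : ∀ᶠ s : ℝ in nhds 0, a + s • (Pi.single j 1 : Fin n → ℝ) ∈ U := by
    have := hline.continuousAt
    apply this.eventually_mem
    simpa using hU.mem_nhds ha
  have hdiff : ∀ q, fderiv ℝ H (q, c a + partialQ n S (q, a))
      (0, fderiv ℝ c a (Pi.single j 1) + T (q, a) j) =
      fderiv ℝ A (c a) (fderiv ℝ c a (Pi.single j 1)) := by
    intro q
    have h1 : HasDerivAt (fun s : ℝ => partialQ n S (q, a + s • (Pi.single j 1 : Fin n → ℝ)))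
        (T (q, a) j) 0 := hasDerivAt_pi.2 fun k => hT_aq q a ha j k
    have h2 := (hasDerivAt_const (0 : ℝ) q).prodMk (hcl.add h1)
    have h3 : HasFDerivAt H (fderiv ℝ H (q, c a + partialQ n S (q, a)))
        (q, c (a + (0 : ℝ) • (Pi.single j 1 : Fin n → ℝ)) +
          partialQ n S (q, a + (0 : ℝ) • (Pi.single j 1 : Fin n → ℝ))) := by
      simpa using ((hH.differentiable (by norm_num)) _).hasFDerivAt
    have h4 := h3.comp_hasDerivAt (0 : ℝ) h2
    have h5 : HasFDerivAt A (fderiv ℝ A (c a))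
        (c (a + (0 : ℝ) • (Pi.single j 1 : Fin n → ℝ))) := by
      simpa using (hA (c a)).hasFDerivAt
    have h6 := h5.comp_hasDerivAt (0 : ℝ) hcl
    refine h4.unique (h6.congr_of_eventuallyEq ?_)
    filter_upwards [hmem] with s hs
    exact hHJ q _ hs
  have hPA := hasFDerivAt_of_cont_partials n (fun q => partialA n S (q, a) j)
    (fun q k => T (q, a) j k)
    (fun k => (hT_cont j k).comp_continuous (by fun_prop) (by simp [ha]))
    (fun q k => hT_qa q a ha j k)
  have hder : ∀ t, HasDerivAt (fun t => (∑ k, fderiv ℝ c a (Pi.single j 1) k *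
          (γ t k - γ 0 k - t * fderiv ℝ A (c a) (Pi.single k 1))) +
        partialA n S (γ t, a) j - partialA n S (γ 0, a) j) 0 t := by
    intro t
    have h1 := (hPA (γ t)).comp_hasDerivAt t (hγ t)
    have h2 : ∀ k, HasDerivAt (fun t => fderiv ℝ c a (Pi.single j 1) k *
          (γ t k - γ 0 k - t * fderiv ℝ A (c a) (Pi.single k 1))) _ t := fun k =>
      ((((hasDerivAt_pi.1 (hγ t)) k).sub_const (γ 0 k)).sub
        ((hasDerivAt_id t).mul_const (fderiv ℝ A (c a) (Pi.single k 1)))).const_mul _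
    have h3 := ((HasDerivAt.fun_sum fun k (_ : k ∈ Finset.univ) => h2 k).add h1).sub_const
      (partialA n S (γ 0, a) j)
    refine h3.congr_deriv ?_
    have e := hdiff (γ t)
    have e1 := hp ((fderiv ℝ H (γ t, c a + partialQ n S (γ t, a))).toLinearMap ∘ₗ
      LinearMap.inr ℝ _ _) (fderiv ℝ c a (Pi.single j 1) + T (γ t, a) j)
    have e2 := hp (fderiv ℝ A (c a)).toLinearMap (fderiv ℝ c a (Pi.single j 1))
    simp only [LinearMap.comp_apply, LinearMap.inr_apply, ContinuousLinearMap.coe_coe,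
      Pi.add_apply, add_mul, Finset.sum_add_distrib] at e1 e2
    rw [e1, e2] at e
    simp only [ContinuousLinearMap.sum_apply, ContinuousLinearMap.smul_apply,
      ContinuousLinearMap.proj_apply, smul_eq_mul, mul_sub, one_mul, Finset.sum_sub_distrib]
    linarith
  have hconst := is_const_of_deriv_eq_zero (fun t => (hder t).differentiableAt)
    (fun t => (hder t).deriv) t 0
  rw [hconst]
  simp
end
end

section
/- Let p : ℝⁿ → ℝⁿ be continuous and ℤⁿ-periodic, and suppose that for every C¹ loop γ : [0,1] → ℝⁿ with γ(0) = γ(1) one has ∫₀¹ ⟨p(γ(t)), γ'(t)⟩ dt = 0 (i.e. the 1-form p dq on 𝕋ⁿ is closed in the distribution sense). Then there exist a unique c ∈ ℝⁿ and a C¹ ℤⁿ-periodic function u : ℝⁿ → ℝ such that p(q) = c + ∇u(q) for all q ∈ ℝⁿ; moreover c = ∫_{[0,1]ⁿ} p(q) dq. -/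
open MeasureTheory in
/-- The integral of a one-form along a straight segment. -/
noncomputable def segInt {E : Type*} [NormedAddCommGroup E] [NormedSpace ℝ E]
    (P : E → E →L[ℝ] ℝ) (a b : E) : ℝ :=
  ∫ t in (0:ℝ)..1, P (AffineMap.lineMap a b t) (b - a)

lemma deriv_smoothTransition_zero {x : ℝ} (h : x < 0 ∨ 1 < x) :
    deriv Real.smoothTransition x = 0 := by
  rcases h with h | h
  · have : Real.smoothTransition =ᶠ[nhds x] fun _ => (0:ℝ) := by
      filter_upwards [Iio_mem_nhds h] with y hy
      exact Real.smoothTransition.zero_of_nonpos (le_of_lt hy)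
    rw [this.deriv_eq]; simp
  · have : Real.smoothTransition =ᶠ[nhds x] fun _ => (1:ℝ) := by
      filter_upwards [Ioi_mem_nhds h] with y hy
      exact Real.smoothTransition.one_of_one_le (le_of_lt hy)
    rw [this.deriv_eq]; simp

lemma hasDerivAt_st (x : ℝ) :
    HasDerivAt Real.smoothTransition (deriv Real.smoothTransition x) x :=
  ((Real.smoothTransition.contDiff (n := 1)).differentiable (by simp) x).hasDerivAt

lemma hasDerivAt_st_comp (j t : ℝ) :
    HasDerivAt (fun t => Real.smoothTransition (3 * t - j))
      (3 * deriv Real.smoothTransition (3 * t - j)) t := by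
  have h1 : HasDerivAt (fun t : ℝ => 3 * t - j) 3 t := by
    simpa using ((hasDerivAt_id t).const_mul 3).sub_const j
  have := (hasDerivAt_st (3 * t - j)).comp t h1
  simpa [mul_comm, Function.comp_def] using this

lemma triangle {E : Type*} [NormedAddCommGroup E] [NormedSpace ℝ E]
    (P : E → E →L[ℝ] ℝ) (hP : Continuous P)
    (hc : ∀ γ : ℝ → E, ContDiff ℝ 1 γ → γ 0 = γ 1 →
      ∫ t in (0:ℝ)..1, P (γ t) (deriv γ t) = 0) (a b : E) :
    segInt P 0 a + segInt P a b + segInt P b 0 = 0 := by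
  set φ := Real.smoothTransition with hφ
  set ψ := deriv φ with hψ
  let γ : ℝ → E := fun t => φ (3 * t - 0) • (a - 0) + φ (3 * t - 1) • (b - a)
    + φ (3 * t - 2) • (0 - b)
  have hφC : ContDiff ℝ 1 φ := Real.smoothTransition.contDiff (n := 1)
  have hγC : ContDiff ℝ 1 γ := by
    have h : ∀ j : ℝ, ContDiff ℝ 1 (fun t : ℝ => φ (3 * t - j)) := fun j =>
      hφC.comp (by fun_prop)
    exact (((h 0).smul contDiff_const).add ((h 1).smul contDiff_const)).add
      ((h 2).smul contDiff_const)
  have hd : ∀ t, HasDerivAt γ ((3 * ψ (3 * t - 0)) • (a - 0) + (3 * ψ (3 * t - 1)) • (b - a)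
    + (3 * ψ (3 * t - 2)) • (0 - b)) t := fun t =>
    (((hasDerivAt_st_comp 0 t).smul_const _).add ((hasDerivAt_st_comp 1 t).smul_const _)).add
      ((hasDerivAt_st_comp 2 t).smul_const _)
  have e0 : ∀ x : ℝ, x ≤ 0 → φ x = 0 := fun x hx => Real.smoothTransition.zero_of_nonpos hx
  have e1 : ∀ x : ℝ, 1 ≤ x → φ x = 1 := fun x hx => Real.smoothTransition.one_of_one_le hx
  have hloop : γ 0 = γ 1 := by
    simp only [γ]
    rw [e0 (3 * 0 - 0) (by norm_num), e0 (3 * 0 - 1) (by norm_num), e0 (3 * 0 - 2) (by norm_num),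
      e1 (3 * 1 - 0) (by norm_num), e1 (3 * 1 - 1) (by norm_num), e1 (3 * 1 - 2) (by norm_num)]
    simp
  have key := hc γ hγC hloop
  -- primitive along segments
  let F : E → E → ℝ → ℝ := fun x y s => ∫ r in (0:ℝ)..s, P (AffineMap.lineMap x y r) (y - x)
  have hcF : ∀ x y : E, Continuous fun r : ℝ => P (AffineMap.lineMap x y r) (y - x) := by
    intro x y
    exact (hP.comp AffineMap.lineMap_continuous).clm_apply continuous_const
  have hF : ∀ x y s, HasDerivAt (F x y) (P (AffineMap.lineMap x y s) (y - x)) s := by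
    intro x y s
    exact intervalIntegral.integral_hasDerivAt_right ((hcF x y).intervalIntegrable _ _)
      ((hcF x y).stronglyMeasurableAtFilter _ _) (hcF x y).continuousAt
  let H : ℝ → ℝ := fun t => F 0 a (φ (3 * t - 0)) + F a b (φ (3 * t - 1)) + F b 0 (φ (3 * t - 2))
  have hz : ∀ x : ℝ, x < 0 ∨ 1 < x → ψ x = 0 := fun x hx => deriv_smoothTransition_zero hx
  have hH : ∀ t, HasDerivAt H (P (γ t) (deriv γ t)) t := by
    intro t
    have h0 := (hF 0 a _).comp t (hasDerivAt_st_comp 0 t)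
    have h1 := (hF a b _).comp t (hasDerivAt_st_comp 1 t)
    have h2 := (hF b 0 _).comp t (hasDerivAt_st_comp 2 t)
    have h := (h0.add h1).add h2
    refine HasDerivAt.congr_deriv (f := H) h ?_
    rw [(hd t).deriv, map_add, map_add, map_smul, map_smul, map_smul, smul_eq_mul, smul_eq_mul,
      smul_eq_mul, mul_comm (3 * ψ _), mul_comm (3 * ψ _), mul_comm (3 * ψ _)]
    have c0 : (P (AffineMap.lineMap 0 a (φ (3 * t - 0)))) (a - 0) * (3 * ψ (3 * t - 0))
        = P (γ t) (a - 0) * (3 * ψ (3 * t - 0)) := by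
      by_cases hh : 3 * t - 0 < 0 ∨ 1 < 3 * t - 0
      · rw [hz _ hh]; simp
      · push Not at hh
        congr 3
        simp only [γ]
        rw [e0 (3 * t - 1) (by linarith), e0 (3 * t - 2) (by linarith), AffineMap.lineMap_apply_module']
        module
    have c1 : (P (AffineMap.lineMap a b (φ (3 * t - 1)))) (b - a) * (3 * ψ (3 * t - 1))
        = P (γ t) (b - a) * (3 * ψ (3 * t - 1)) := by
      by_cases hh : 3 * t - 1 < 0 ∨ 1 < 3 * t - 1
      · rw [hz _ hh]; simp
      · push Not at hh
        congr 3
        simp only [γ]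
        rw [e1 (3 * t - 0) (by linarith), e0 (3 * t - 2) (by linarith), AffineMap.lineMap_apply_module']
        module
    have c2 : (P (AffineMap.lineMap b 0 (φ (3 * t - 2)))) (0 - b) * (3 * ψ (3 * t - 2))
        = P (γ t) (0 - b) * (3 * ψ (3 * t - 2)) := by
      by_cases hh : 3 * t - 2 < 0 ∨ 1 < 3 * t - 2
      · rw [hz _ hh]; simp
      · push Not at hh
        congr 3
        simp only [γ]
        rw [e1 (3 * t - 0) (by linarith), e1 (3 * t - 1) (by linarith), AffineMap.lineMap_apply_module']
        module
    exact congrArg₂ (· + ·) (congrArg₂ (· + ·) c0 c1) c2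
  have hcont : Continuous fun t => P (γ t) (deriv γ t) :=
    (hP.comp hγC.continuous).clm_apply (hγC.continuous_deriv (by simp))
  rw [intervalIntegral.integral_eq_sub_of_hasDerivAt (fun t _ => hH t)
    (hcont.intervalIntegrable _ _)] at key
  simp only [H] at key
  rw [e0 (3 * 0 - 0) (by norm_num), e0 (3 * 0 - 1) (by norm_num), e0 (3 * 0 - 2) (by norm_num),
      e1 (3 * 1 - 0) (by norm_num), e1 (3 * 1 - 1) (by norm_num), e1 (3 * 1 - 2) (by norm_num)] at key
  simpa [F, segInt] using key

lemma segInt_symm {E : Type*} [NormedAddCommGroup E] [NormedSpace ℝ E]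
    (P : E → E →L[ℝ] ℝ) (a b : E) : segInt P b a = - segInt P a b := by
  unfold segInt
  have h := intervalIntegral.integral_comp_sub_left (a := 0) (b := 1)
    (fun t : ℝ => P (AffineMap.lineMap a b t) (b - a)) 1
  simp only [sub_zero, sub_self] at h
  rw [← h, ← intervalIntegral.integral_neg]
  congr 1
  ext t
  rw [AffineMap.lineMap_apply_one_sub, ← map_neg, neg_sub]

lemma primitive {E : Type*} [NormedAddCommGroup E] [NormedSpace ℝ E]
    (P : E → E →L[ℝ] ℝ) (hP : Continuous P)
    (hc : ∀ γ : ℝ → E, ContDiff ℝ 1 γ → γ 0 = γ 1 →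
      ∫ t in (0:ℝ)..1, P (γ t) (deriv γ t) = 0) :
    ∃ S : E → ℝ, S 0 = 0 ∧ ∀ a, HasFDerivAt S (P a) a := by
  refine ⟨segInt P 0, by simp [segInt], fun a => ?_⟩
  have h := (HasFDerivAt.curveIntegral_segment_source (a := a) hP).const_add (segInt P 0 a)
  refine h.congr_of_eventuallyEq (Filter.Eventually.of_forall fun b => ?_)
  simp only [curveIntegral_segment]
  have := triangle P hP hc a b
  rw [segInt_symm P 0 b] at this
  change _ = _ + segInt P a b
  linarith

lemma exists_part (n : ℕ) (p : (Fin n → ℝ) → (Fin n → ℝ))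
    (hcont : Continuous p)
    (hper : ∀ (q : Fin n → ℝ) (m : Fin n → ℤ), p (q + fun i => (m i : ℝ)) = p q)
    (hclosed : ∀ γ : ℝ → (Fin n → ℝ), ContDiff ℝ 1 γ → γ 0 = γ 1 →
      ∫ t in (0:ℝ)..1, ∑ i, p (γ t) i * deriv γ t i = 0) :
    ∃ c : Fin n → ℝ,
      (∃ u : (Fin n → ℝ) → ℝ, ContDiff ℝ 1 u ∧
        (∀ (q : Fin n → ℝ) (m : Fin n → ℤ), u (q + fun i => (m i : ℝ)) = u q) ∧
        ∀ (q : Fin n → ℝ) (k : Fin n), p q k = c k + fderiv ℝ u q (Pi.single k 1)) := by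
  let D : (Fin n → ℝ) → (Fin n → ℝ) →L[ℝ] ℝ := fun v =>
    ∑ i, v i • ContinuousLinearMap.proj (R := ℝ) (φ := fun _ : Fin n => ℝ) i
  have hDa : ∀ v w, D v w = ∑ i, v i * w i := by
    intro v w; simp [D]
  have hDc : Continuous D := by
    refine continuous_finsetSum _ fun i _ => ?_
    exact (continuous_apply i).smul continuous_const
  obtain ⟨S, hS0, hS⟩ := primitive (fun q => D (p q)) (hDc.comp hcont) (by
    intro γ h1 h2
    simpa only [hDa] using hclosed γ h1 h2)
  let c : Fin n → ℝ := fun k => S (Pi.single k 1)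
  let u : (Fin n → ℝ) → ℝ := fun q => S q - D c q
  have hu : ∀ q, HasFDerivAt u (D (p q) - D c) q := fun q =>
    (hS q).sub (D c).hasFDerivAt
  have hu0 : u 0 = 0 := by simp [u, hS0]
  have hadd : ∀ (q : Fin n → ℝ) (m : Fin n → ℤ),
      u (q + fun i => (m i : ℝ)) = u q + u (fun i => (m i : ℝ)) := by
    intro q m
    have hd : ∀ x, HasFDerivAt (𝕜 := ℝ)
        (fun x : Fin n → ℝ => u (x + fun i => (m i : ℝ)) - u x) 0 x := by
      intro x
      have h1 := (hasFDerivAt_comp_add_right (fun i => (m i : ℝ))).2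
        (hu (x + fun i => (m i : ℝ)))
      have := h1.sub (hu x)
      rw [hper, sub_self] at this
      exact this
    have := is_const_of_fderiv_eq_zero (𝕜 := ℝ) (fun x => (hd x).differentiableAt)
      (fun x => (hd x).fderiv) q 0
    simp only [zero_add, hu0] at this
    linarith
  let U : (Fin n → ℤ) →+ ℝ :=
    { toFun := fun m => u (fun i => (m i : ℝ))
      map_zero' := by
        rw [← hu0]
        congr 1
        ext i
        simp
      map_add' := by
        intro a b
        rw [← hadd]
        congr 1
        ext i
        simp }
  have hU : U = 0 := by
    ext k
    have : (fun i => ((Pi.single k (1:ℤ) : Fin n → ℤ) i : ℝ)) = Pi.single k (1:ℝ) := by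
      ext i
      by_cases h : i = k
      · subst h; simp
      · simp [h]
    have h2 : u (Pi.single k (1:ℝ)) = 0 := by
      have : D c (Pi.single k (1:ℝ)) = c k := by simp [hDa, Pi.single_apply]
      simp only [u, this]
      simp [c]
    rw [← this] at h2
    simpa [U] using h2
  refine ⟨c, u, ?_, ?_, ?_⟩
  · rw [contDiff_one_iff_fderiv]
    refine ⟨fun q => (hu q).differentiableAt, ?_⟩
    have : fderiv ℝ u = fun q => D (p q) - D c := funext fun q => (hu q).fderiv
    rw [this]
    exact (hDc.comp hcont).sub continuous_const
  · intro q m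
    rw [hadd]
    have : u (fun i => (m i : ℝ)) = 0 := DFunLike.congr_fun hU m
    rw [this, add_zero]
  · intro q k
    rw [(hu q).fderiv]
    simp [hDa, Pi.single_apply]

open MeasureTheory in
lemma integral_partial_zero (n : ℕ) (u : (Fin n → ℝ) → ℝ) (hu : ContDiff ℝ 1 u)
    (hper : ∀ (q : Fin n → ℝ) (m : Fin n → ℤ), u (q + fun i => (m i : ℝ)) = u q) (k : Fin n) :
    ∫ q in Set.Icc (0 : Fin n → ℝ) 1, fderiv ℝ u q (Pi.single k 1) = 0 := by
  cases n with
  | zero => exact k.elim0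
  | succ n =>
    have hcd : Continuous fun q => fderiv ℝ u q (Pi.single k 1) :=
      (hu.continuous_fderiv (by simp)).clm_apply continuous_const
    have hsum : ∀ q, ∑ i, (if i = k then fderiv ℝ u q else 0) (Pi.single i 1)
        = fderiv ℝ u q (Pi.single k 1) := by
      intro q
      rw [Finset.sum_eq_single k]
      · simp
      · intro b _ hb; simp [hb]
      · simp
    have h := integral_divergence_of_hasFDerivAt_off_countable' (0 : Fin (n+1) → ℝ) 1
      zero_le_one (fun i => if i = k then u else 0)
      (fun i q => if i = k then fderiv ℝ u q else 0) ∅ Set.countable_empty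
      (by
        intro i
        by_cases hi : i = k
        · simpa [hi] using hu.continuous.continuousOn
        · simp only [hi, if_false]
          exact continuousOn_const)
      (by
        intro x _ i
        by_cases hi : i = k
        · simpa [hi] using (hu.differentiable (by simp) x).hasFDerivAt
        · simp only [hi, if_false]
          exact hasFDerivAt_const (0:ℝ) x)
      (by
        simp only [hsum]
        exact hcd.continuousOn.integrableOn_compact isCompact_Icc)
    simp only [hsum] at h
    rw [h]
    refine Finset.sum_eq_zero fun i _ => ?_
    by_cases hi : i = k
    · subst hi
      simp only [if_true, sub_eq_zero]
      congr 1
      ext x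
      rw [← hper (i.insertNth ((0 : Fin (n+1) → ℝ) i) x) (Pi.single i 1)]
      congr 1
      ext j
      refine Fin.succAboveCases i ?_ (fun j => ?_) j
      · simp
      · simp [Fin.succAbove_ne]
    · simp [hi]

open MeasureTheory in
lemma const_eq (n : ℕ) (p : (Fin n → ℝ) → (Fin n → ℝ)) (hcont : Continuous p)
    (c : Fin n → ℝ) (u : (Fin n → ℝ) → ℝ) (hu : ContDiff ℝ 1 u)
    (hper : ∀ (q : Fin n → ℝ) (m : Fin n → ℤ), u (q + fun i => (m i : ℝ)) = u q)
    (h : ∀ (q : Fin n → ℝ) (k : Fin n), p q k = c k + fderiv ℝ u q (Pi.single k 1)) :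
    c = ∫ q in Set.univ.pi fun _ : Fin n => Set.Icc (0:ℝ) 1, p q := by
  have hI : (Set.univ.pi fun _ : Fin n => Set.Icc (0:ℝ) 1) = Set.Icc (0 : Fin n → ℝ) 1 := by
    rw [← Set.pi_univ_Icc]; rfl
  rw [hI]
  ext k
  rw [eval_integral (f := p) (μ := volume.restrict (Set.Icc 0 1)) (fun i => ((continuous_apply i).comp hcont).continuousOn.integrableOn_compact
    isCompact_Icc)]
  have hcd : Continuous fun q => fderiv ℝ u q (Pi.single k 1) :=
    (hu.continuous_fderiv (by simp)).clm_apply continuous_const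
  simp only [h]
  rw [integral_add (continuous_const.continuousOn.integrableOn_compact isCompact_Icc)
    (hcd.continuousOn.integrableOn_compact isCompact_Icc), integral_partial_zero n u hu hper k]
  simp [Measure.real, Real.volume_Icc_pi]

/-- **A closed continuous one-form on the torus is `c + du`.**
Let `p : ℝⁿ → ℝⁿ` be continuous and `ℤⁿ`-periodic, and suppose that the integral of the
`1`-form `p dq` along every `C¹` loop vanishes (i.e. `p dq` is closed on `𝕋ⁿ` in the
distribution sense).  Then there are a unique `c ∈ ℝⁿ` and a `C¹` `ℤⁿ`-periodic function
`u` with `p = c + ∇u`; moreover `c = ∫_{[0,1]ⁿ} p (q) dq`. -/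
theorem closed_one_form_eq_const_add_gradient
    (n : ℕ) (p : (Fin n → ℝ) → (Fin n → ℝ))
    (hcont : Continuous p)
    (hper : ∀ (q : Fin n → ℝ) (m : Fin n → ℤ), p (q + fun i => (m i : ℝ)) = p q)
    (hclosed : ∀ γ : ℝ → (Fin n → ℝ), ContDiff ℝ 1 γ → γ 0 = γ 1 →
      ∫ t in (0:ℝ)..1, ∑ i, p (γ t) i * deriv γ t i = 0) :
    ∃ c : Fin n → ℝ,
      (∃ u : (Fin n → ℝ) → ℝ, ContDiff ℝ 1 u ∧
        (∀ (q : Fin n → ℝ) (m : Fin n → ℤ), u (q + fun i => (m i : ℝ)) = u q) ∧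
        ∀ (q : Fin n → ℝ) (k : Fin n), p q k = c k + fderiv ℝ u q (Pi.single k 1)) ∧
      (∀ c' : Fin n → ℝ,
        (∃ u' : (Fin n → ℝ) → ℝ, ContDiff ℝ 1 u' ∧
          (∀ (q : Fin n → ℝ) (m : Fin n → ℤ), u' (q + fun i => (m i : ℝ)) = u' q) ∧
          ∀ (q : Fin n → ℝ) (k : Fin n),
            p q k = c' k + fderiv ℝ u' q (Pi.single k 1)) → c' = c) ∧
      c = ∫ q in Set.univ.pi fun _ : Fin n => Set.Icc (0:ℝ) 1, p q := by
  obtain ⟨c, u, hu, hup, h⟩ := exists_part n p hcont hper hclosed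
  have hc := const_eq n p hcont c u hu hup h
  refine ⟨c, ⟨u, hu, hup, h⟩, ?_, hc⟩
  rintro c' ⟨u', hu', hup', h'⟩
  rw [hc]
  exact const_eq n p hcont c' u' hu' hup' h'
end

section
/- Let U ⊆ ℝⁿ be open and η : ℝⁿ × U → ℝⁿ a C¹ map that is ℤⁿ-periodic in the first variable. Set c(a) = ∫_{[0,1]ⁿ} η(q,a) dq, and assume that for each a ∈ U there is a differentiable ℤⁿ-periodic function u_a : ℝⁿ → ℝ with ∇u_a(q) = η(q,a) − c(a) for all q. Define S(q,a) = u_a(q) − u_a(0). Then: (i) S : ℝⁿ × U → ℝ is C¹ with ∂S/∂q(q,a) = η(q,a) − c(a), so ∂S/∂q is C¹ in (q,a); and (ii) ∂S/∂a is differentiable with respect to q, with ∂/∂q(∂S/∂a)(q,a) = ∂η/∂a(q,a) − Dc(a), which is continuous; in particular ∂S/∂a is C¹ in the variable q. -/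
open MeasureTheory Set Filter Topology in
/-- Differentiation under the integral sign over a compact set, for a `C¹` integrand. -/
theorem param_integral_aux {X H F : Type*} [NormedAddCommGroup X] [NormedSpace ℝ X]
    [FiniteDimensional ℝ X] [MeasurableSpace X] [BorelSpace X]
    [NormedAddCommGroup H] [NormedSpace ℝ H] [FiniteDimensional ℝ H]
    [NormedAddCommGroup F] [NormedSpace ℝ F] 
    (μ : Measure X) [IsLocallyFiniteMeasure μ] {K : Set X} (hK : IsCompact K)
    {U : Set H} (hU : IsOpen U) {f : X × H → F} (hf : ContDiffOn ℝ 1 f (univ ×ˢ U)) :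
    (∀ a ∈ U, HasFDerivAt (fun a' => ∫ x in K, f (x, a') ∂μ)
      (∫ x in K, (fderiv ℝ f (x, a)).comp (ContinuousLinearMap.inr ℝ X H) ∂μ) a) ∧
    ContDiffOn ℝ 1 (fun a' => ∫ x in K, f (x, a') ∂μ) U ∧
    (∀ a ∈ U, IntegrableOn (fun x => (fderiv ℝ f (x, a)).comp
      (ContinuousLinearMap.inr ℝ X H)) K μ) := by
  have : ProperSpace H := FiniteDimensional.proper ℝ H
  have : ProperSpace X := FiniteDimensional.proper ℝ X
  have hO : IsOpen ((univ : Set X) ×ˢ U) := isOpen_univ.prod hU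
  set D : X × H → (H →L[ℝ] F) :=
    fun p => (fderiv ℝ f p).comp (ContinuousLinearMap.inr ℝ X H) with hD
  have hDc : ContinuousOn D (univ ×ˢ U) :=
    (hf.continuousOn_fderiv_of_isOpen hO le_rfl).clm_comp continuousOn_const
  have hDx : ∀ a ∈ U, Continuous fun x => D (x, a) := fun a ha =>
    hDc.comp_continuous (by fun_prop) (fun x => ⟨mem_univ _, ha⟩)
  have hfx : ∀ a ∈ U, Continuous fun x => f (x, a) := fun a ha =>
    hf.continuousOn.comp_continuous (by fun_prop) (fun x => ⟨mem_univ _, ha⟩)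
  have hbd : ∀ a ∈ U, ∃ V ∈ 𝓝 a, V ⊆ U ∧ ∃ C : ℝ, ∀ x ∈ K, ∀ b ∈ V, ‖D (x, b)‖ ≤ C := by
    intro a ha
    obtain ⟨V, hV, hVU, hVc⟩ := local_compact_nhds (hU.mem_nhds ha)
    obtain ⟨C, hC⟩ := (hK.prod hVc).exists_bound_of_continuousOn
      (hDc.mono (prod_mono (subset_univ _) hVU))
    exact ⟨V, hV, hVU, C, fun x hx b hb => hC (x, b) ⟨hx, hb⟩⟩
  have hfin : IsFiniteMeasure (μ.restrict K) := ⟨by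
    rw [Measure.restrict_apply_univ]; exact hK.measure_lt_top⟩
  have hmain : ∀ a ∈ U, HasFDerivAt (fun a' => ∫ x in K, f (x, a') ∂μ)
      (∫ x in K, D (x, a) ∂μ) a := by
    intro a ha
    obtain ⟨V, hV, hVU, C, hC⟩ := hbd a ha
    refine hasFDerivAt_integral_of_dominated_of_fderiv_le (F := fun b x => f (x, b))
      (F' := fun b x => D (x, b)) (bound := fun _ => C) hV ?_ ?_ ?_ ?_ ?_ ?_
    · filter_upwards [hV] with b hb
      exact (hfx b (hVU hb)).continuousOn.aestronglyMeasurable_of_isCompact hK hK.measurableSet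
    · exact (hfx a ha).continuousOn.integrableOn_compact hK
    · exact (hDx a ha).continuousOn.aestronglyMeasurable_of_isCompact hK hK.measurableSet
    · filter_upwards [ae_restrict_mem hK.measurableSet] with x hx b hb using hC x hx b hb
    · exact integrable_const _
    · refine Eventually.of_forall fun x b hb => ?_
      have h1 : HasFDerivAt f (fderiv ℝ f (x, b)) (x, b) :=
        ((hf.differentiableOn one_ne_zero).differentiableAt
          (hO.mem_nhds ⟨mem_univ _, hVU hb⟩)).hasFDerivAt
      exact h1.comp b (hasFDerivAt_prodMk_right x b)
  refine ⟨hmain, ?_, fun a ha => (hDx a ha).continuousOn.integrableOn_compact hK⟩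
  have hcont : ContinuousOn (fun a => ∫ x in K, D (x, a) ∂μ) U := by
    intro a ha
    obtain ⟨V, hV, hVU, C, hC⟩ := hbd a ha
    have : ContinuousOn (fun a => ∫ x in K, D (x, a) ∂μ) V := by
      refine continuousOn_of_dominated (bound := fun _ => C) ?_ ?_ (integrable_const _) ?_
      · intro b hb
        exact (hDx b (hVU hb)).continuousOn.aestronglyMeasurable_of_isCompact hK hK.measurableSet
      · intro b hb
        filter_upwards [ae_restrict_mem hK.measurableSet] with x hx using hC x hx b hb
      · refine Eventually.of_forall fun x => ?_
        exact hDc.comp (by fun_prop) (fun b hb => ⟨mem_univ _, hVU hb⟩)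
    exact (this.continuousAt hV).continuousWithinAt
  rw [show (1 : WithTop ℕ∞) = 0 + 1 by simp, contDiffOn_succ_iff_fderiv_of_isOpen hU]
  refine ⟨fun a ha => (hmain a ha).differentiableAt.differentiableWithinAt, by simp, ?_⟩
  rw [contDiffOn_zero]
  exact hcont.congr fun a ha => (hmain a ha).fderiv

open MeasureTheory Set Filter Topology in
theorem gen_fun_abstract {E H : Type*} [NormedAddCommGroup E] [NormedSpace ℝ E]
    [FiniteDimensional ℝ E] [NormedAddCommGroup H] [NormedSpace ℝ H] [FiniteDimensional ℝ H]
    {U : Set H} (hU : IsOpen U) (P : E × H → (E →L[ℝ] ℝ))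
    (hP : ContDiffOn ℝ 1 P (univ ×ˢ U)) (S : E × H → ℝ)
    (hS : ∀ a ∈ U, ∀ q, HasFDerivAt (fun q' => S (q', a)) (P (q, a)) q)
    (hS0 : ∀ a ∈ U, S (0, a) = 0) :
    ContDiffOn ℝ 1 S (univ ×ˢ U) ∧
    (∀ q, ∀ a ∈ U, ∀ v, fderiv ℝ S (q, a) (v, 0) = P (q, a) v) ∧
    (∀ a ∈ U, ∀ q, HasFDerivAt (fun a' => P (q, a'))
      ((fderiv ℝ P (q, a)).comp (ContinuousLinearMap.inr ℝ E H)) a) ∧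
    ContinuousOn (fderiv ℝ P) (univ ×ˢ U) ∧
    (∀ a ∈ U, ∀ w q, HasFDerivAt (fun q' => fderiv ℝ S (q', a) (0, w))
      (fderiv ℝ P (q, a) (0, w)) q) := by
  have hO : IsOpen ((univ : Set E) ×ˢ U) := isOpen_univ.prod hU
  have hPx : ∀ a ∈ U, Continuous fun x => P (x, a) := fun a ha =>
    hP.continuousOn.comp_continuous (by fun_prop) (fun x => ⟨mem_univ _, ha⟩)
  have hPd : ∀ a ∈ U, ∀ q, HasFDerivAt P (fderiv ℝ P (q, a)) (q, a) := fun a ha q =>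
    ((hP.differentiableOn one_ne_zero).differentiableAt
          (hO.mem_nhds ⟨mem_univ _, ha⟩)).hasFDerivAt
  have hPc := hP.continuousOn_fderiv_of_isOpen hO le_rfl
  -- fundamental theorem of calculus along segments
  have key : ∀ a ∈ U, ∀ q h : E,
      S (q + h, a) - S (q, a) = ∫ t in Icc (0:ℝ) 1, P (q + t • h, a) h := by
    intro a ha q h
    have h1 : ∀ t : ℝ, HasDerivAt (fun t : ℝ => S (q + t • h, a)) (P (q + t • h, a) h) t := by
      intro t
      have h2 : HasDerivAt (fun t : ℝ => q + t • h) h t := by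
        simpa using ((hasDerivAt_id t).smul_const h).const_add q
      exact (hS a ha (q + t • h)).comp_hasDerivAt t h2
    have hc : Continuous fun t : ℝ => P (q + t • h, a) h :=
      ((hPx a ha).comp (by fun_prop : Continuous fun t : ℝ => q + t • h)).clm_apply
        continuous_const
    have := intervalIntegral.integral_eq_sub_of_hasDerivAt (a := 0) (b := 1)
      (fun t _ => h1 t) (hc.intervalIntegrable _ _)
    rw [integral_Icc_eq_integral_Ioc, ← intervalIntegral.integral_of_le zero_le_one, this]
    simp
  have hSC : ContDiffOn ℝ 1 S (univ ×ˢ U) := by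
    have hf : ContDiffOn ℝ 1 (fun x : ℝ × (E × H) => P (x.1 • x.2.1, x.2.2) x.2.1)
        (univ ×ˢ ((univ : Set E) ×ˢ U)) := by
      refine ContDiffOn.clm_apply (hP.comp (ContDiff.contDiffOn (by fun_prop)) ?_)
        (ContDiff.contDiffOn (by fun_prop))
      rintro ⟨t, q, a⟩ ⟨-, -, ha⟩
      exact ⟨mem_univ _, ha⟩
    refine (param_integral_aux volume (isCompact_Icc (a := (0:ℝ)) (b := 1)) hO hf).2.1.congr ?_
    rintro ⟨q, a⟩ ⟨-, ha⟩
    have := key a ha 0 q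
    simpa [hS0 a ha] using this
  have hSd : ∀ a ∈ U, ∀ q, HasFDerivAt S (fderiv ℝ S (q, a)) (q, a) := fun a ha q =>
    ((hSC.differentiableOn one_ne_zero).differentiableAt
          (hO.mem_nhds ⟨mem_univ _, ha⟩)).hasFDerivAt
  refine ⟨hSC, ?_, ?_, hPc, ?_⟩
  · intro q a ha v
    have h1 : HasFDerivAt (fun q' => S (q', a))
        ((fderiv ℝ S (q, a)).comp (ContinuousLinearMap.inl ℝ E H)) q :=
      (hSd a ha q).comp q (hasFDerivAt_prodMk_left q a)
    have h2 := h1.unique (hS a ha q)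
    rw [← h2]
    simp
  · intro a ha q
    exact (hPd a ha q).comp a (hasFDerivAt_prodMk_right q a)
  · intro a ha w q
    -- difference formula
    have diff : ∀ h : E, fderiv ℝ S (q + h, a) (0, w) - fderiv ℝ S (q, a) (0, w)
        = ∫ t in Icc (0:ℝ) 1, fderiv ℝ P (q + t • h, a) (0, w) h := by
      intro h
      have hf : ContDiffOn ℝ 1 (fun x : ℝ × H => P (q + x.1 • h, x.2) h) (univ ×ˢ U) := by
        refine ContDiffOn.clm_apply (hP.comp (ContDiff.contDiffOn (by fun_prop)) ?_)
          (ContDiff.contDiffOn (by fun_prop))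
        rintro ⟨t, a⟩ ⟨-, ha⟩
        exact ⟨mem_univ _, ha⟩
      obtain ⟨hA, -, hI⟩ :=
        param_integral_aux volume (isCompact_Icc (a := (0:ℝ)) (b := 1)) hU hf
      have h1 := ((hSd a ha (q + h)).comp a (hasFDerivAt_prodMk_right (q + h) a)).sub
        ((hSd a ha q).comp a (hasFDerivAt_prodMk_right q a))
      have h2 := (hA a ha).congr_of_eventuallyEq (f₁ := fun a' => S (q + h, a') - S (q, a')) (by
        filter_upwards [hU.mem_nhds ha] with b hb using key b hb q h)
      have h3 := congrArg (fun L => L w) (h1.unique h2)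
      simp only [ContinuousLinearMap.integral_apply (hI a ha) w] at h3
      have h4 : ∀ t : ℝ, ((fderiv ℝ (fun x : ℝ × H => P (q + x.1 • h, x.2) h) (t, a)).comp
          (ContinuousLinearMap.inr ℝ ℝ H)) w = fderiv ℝ P (q + t • h, a) (0, w) h := by
        intro t
        have e1 : HasFDerivAt (fun x : ℝ × H => P (q + x.1 • h, x.2) h) _ (t, a) :=
          ((hf.differentiableOn one_ne_zero).differentiableAt
            ((isOpen_univ.prod hU).mem_nhds ⟨mem_univ _, ha⟩)).hasFDerivAt
        have e2 := e1.comp a (hasFDerivAt_prodMk_right t a)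
        have e3 := ((hPd a ha (q + t • h)).comp a
          (hasFDerivAt_prodMk_right (q + t • h) a)).clm_apply (hasFDerivAt_const h a)
        have e4 := congrArg (fun L => L w) (e2.unique e3)
        simpa using e4
      simp only [h4] at h3
      simpa using h3
    have hLc : Continuous fun x => fderiv ℝ P (x, a) (0, w) :=
      (hPc.comp_continuous (by fun_prop : Continuous fun x : E => (x, a))
        (fun x => ⟨mem_univ _, ha⟩)).clm_apply continuous_const
    rw [hasFDerivAt_iff_isLittleO_nhds_zero, Asymptotics.isLittleO_iff]
    intro ε hε
    obtain ⟨δ, hδ, hball⟩ := Metric.continuousAt_iff.1 (hLc.continuousAt (x := q)) ε hε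
    filter_upwards [Metric.ball_mem_nhds (0 : E) hδ] with h hh
    rw [diff h, integral_Icc_eq_integral_Ioc, ← intervalIntegral.integral_of_le zero_le_one]
    have hconst : fderiv ℝ P (q, a) (0, w) h
        = ∫ t in (0:ℝ)..1, fderiv ℝ P (q, a) (0, w) h := by simp
    have hi : Continuous fun t : ℝ => fderiv ℝ P (q + t • h, a) (0, w) h :=
      (hLc.comp (by fun_prop : Continuous fun t : ℝ => q + t • h)).clm_apply continuous_const
    rw [hconst, ← intervalIntegral.integral_sub (hi.intervalIntegrable _ _)
      (continuous_const.intervalIntegrable _ _)]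
    have := intervalIntegral.norm_integral_le_of_norm_le_const (a := 0) (b := 1)
      (C := ε * ‖h‖) (f := fun t : ℝ => fderiv ℝ P (q + t • h, a) (0, w) h
        - fderiv ℝ P (q, a) (0, w) h) (by
      intro t ht
      rw [uIoc_of_le zero_le_one] at ht
      rw [← sub_apply]
      refine (ContinuousLinearMap.le_opNorm _ _).trans ?_
      gcongr
      rw [← dist_eq_norm]
      refine (hball ?_).le
      rw [dist_eq_norm, add_sub_cancel_left, norm_smul, Real.norm_eq_abs, abs_of_pos ht.1]
      have : ‖h‖ < δ := by simpa using hh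
      nlinarith [norm_nonneg h, ht.2])
    simpa using this

/-- **The generating function of a `C¹` Lagrangian foliation.**
Let `U ⊆ ℝⁿ` be open and `η(q,a)` a `C¹` map on `ℝⁿ × U`, `ℤⁿ`-periodic in `q`.  Set
`c a = ∫_{[0,1]ⁿ} η (q,a) dq`, and assume that for each `a ∈ U` there is a differentiable
`ℤⁿ`-periodic `u_a` with `∇u_a = η(·,a) − c a`.  Define `S (q,a) = u_a q − u_a 0`.  Then:
(i) `S` is `C¹` on `ℝⁿ × U` with `∂S/∂q (q,a) = η (q,a) − c a`, so `∂S/∂q` is `C¹` in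
`(q,a)`; and (ii) `∂S/∂a` is differentiable with respect to `q` with
`∂/∂q (∂S/∂a) (q,a) = ∂η/∂a (q,a) − Dc (a)`, which is continuous; in particular
`∂S/∂a` is `C¹` in the variable `q`. -/
theorem generating_function_of_foliation
    (n : ℕ) (U : Set (Fin n → ℝ)) (hU : IsOpen U)
    (η : (Fin n → ℝ) × (Fin n → ℝ) → (Fin n → ℝ))
    (hηC1 : ContDiffOn ℝ 1 η (Set.univ ×ˢ U))
    (hηper : ∀ (q a : Fin n → ℝ) (m : Fin n → ℤ),
      η (q + (fun i => (m i : ℝ)), a) = η (q, a))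
    (c : (Fin n → ℝ) → (Fin n → ℝ))
    (hc : ∀ a : Fin n → ℝ,
      c a = ∫ q in Set.univ.pi fun _ : Fin n => Set.Icc (0:ℝ) 1, η (q, a))
    (u : (Fin n → ℝ) → (Fin n → ℝ) → ℝ)
    (hu_diff : ∀ a ∈ U, Differentiable ℝ (u a))
    (hu_per : ∀ a ∈ U, ∀ (q : Fin n → ℝ) (m : Fin n → ℤ),
      u a (q + fun i => (m i : ℝ)) = u a q)
    (hu_grad : ∀ a ∈ U, ∀ (q : Fin n → ℝ) (k : Fin n),
      fderiv ℝ (u a) q (Pi.single k 1) = η (q, a) k - c a k)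
    (S : (Fin n → ℝ) × (Fin n → ℝ) → ℝ)
    (hS : ∀ q a : Fin n → ℝ, S (q, a) = u a q - u a 0) :
    -- (i) `S` is `C¹` on `ℝⁿ × U`, with `∂S/∂q = η − c`, which is `C¹` in `(q,a)`
    (ContDiffOn ℝ 1 S (Set.univ ×ˢ U)) ∧
    (∀ q : Fin n → ℝ, ∀ a ∈ U, ∀ k : Fin n,
      fderiv ℝ S (q, a) ((Pi.single k 1 : Fin n → ℝ), (0 : Fin n → ℝ))
        = η (q, a) k - c a k) ∧
    (ContDiffOn ℝ 1
      (fun x : (Fin n → ℝ) × (Fin n → ℝ) =>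
        fun k : Fin n => fderiv ℝ S x ((Pi.single k 1 : Fin n → ℝ), (0 : Fin n → ℝ)))
      (Set.univ ×ˢ U)) ∧
    -- (ii) `∂S/∂a` is differentiable in `q`, with `∂/∂q(∂S/∂a) = ∂η/∂a − Dc`
    (∀ a ∈ U, ∀ j : Fin n,
      Differentiable ℝ
        (fun q : Fin n → ℝ =>
          fderiv ℝ S (q, a) ((0 : Fin n → ℝ), (Pi.single j 1 : Fin n → ℝ)))) ∧
    (∀ a ∈ U, ∀ (j : Fin n) (q : Fin n → ℝ) (k : Fin n),
      fderiv ℝ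
          (fun q' : Fin n → ℝ =>
            fderiv ℝ S (q', a) ((0 : Fin n → ℝ), (Pi.single j 1 : Fin n → ℝ)))
          q (Pi.single k 1)
        = fderiv ℝ (fun a' : Fin n → ℝ => η (q, a') k) a (Pi.single j 1)
            - fderiv ℝ c a (Pi.single j 1) k) ∧
    -- the mixed derivative is continuous on `ℝⁿ × U`
    (∀ j k : Fin n,
      ContinuousOn
        (fun x : (Fin n → ℝ) × (Fin n → ℝ) =>
          fderiv ℝ
            (fun q' : Fin n → ℝ =>
              fderiv ℝ S (q', x.2) ((0 : Fin n → ℝ), (Pi.single j 1 : Fin n → ℝ)))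
            x.1 (Pi.single k 1))
        (Set.univ ×ˢ U)) ∧
    -- in particular `∂S/∂a` is `C¹` in the variable `q`
    (∀ a ∈ U, ∀ j : Fin n,
      ContDiff ℝ 1
        (fun q : Fin n → ℝ =>
          fderiv ℝ S (q, a) ((0 : Fin n → ℝ), (Pi.single j 1 : Fin n → ℝ)))) := by
  classical
  -- the identification of vectors with linear forms
  let T : (Fin n → ℝ) →L[ℝ] ((Fin n → ℝ) →L[ℝ] ℝ) :=
    ∑ k, (ContinuousLinearMap.proj k : (Fin n → ℝ) →L[ℝ] ℝ).smulRight
      (ContinuousLinearMap.proj k : (Fin n → ℝ) →L[ℝ] ℝ)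
  have hT : ∀ v k, T v (Pi.single k 1) = v k := by
    intro v k
    simp [T, Pi.single_apply]
  have hcompact : IsCompact (Set.univ.pi fun _ : Fin n => Set.Icc (0:ℝ) 1) :=
    isCompact_univ_pi fun _ => isCompact_Icc
  have hcC : ContDiffOn ℝ 1 c U :=
    (param_integral_aux MeasureTheory.volume hcompact hU hηC1).2.1.congr fun a _ => hc a
  have hO : IsOpen ((Set.univ : Set (Fin n → ℝ)) ×ˢ U) := isOpen_univ.prod hU
  have hGC : ContDiffOn ℝ 1 (fun x : (Fin n → ℝ) × (Fin n → ℝ) => η x - c x.2)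
      (Set.univ ×ˢ U) :=
    hηC1.sub (hcC.comp contDiff_snd.contDiffOn fun x hx => hx.2)
  have hPC : ContDiffOn ℝ 1 (fun x : (Fin n → ℝ) × (Fin n → ℝ) => T (η x - c x.2))
      (Set.univ ×ˢ U) := T.contDiff.comp_contDiffOn hGC
  have hSd : ∀ a ∈ U, ∀ q, HasFDerivAt (fun q' => S (q', a)) (T (η (q, a) - c a)) q := by
    intro a ha q
    have h1 : T (η (q, a) - c a) = fderiv ℝ (u a) q := by
      refine ContinuousLinearMap.coe_injective (LinearMap.pi_ext' fun k => ?_)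
      ext
      simp [hT, hu_grad a ha]
    simp only [hS, h1]
    exact ((hu_diff a ha) q).hasFDerivAt.sub_const _
  obtain ⟨hSC, hSq, hPa, hPc, hmix⟩ := gen_fun_abstract hU
    (fun x : (Fin n → ℝ) × (Fin n → ℝ) => T (η x - c x.2)) hPC S hSd
    (fun a _ => by simp [hS])
  have hii : ∀ q : Fin n → ℝ, ∀ a ∈ U, ∀ k : Fin n,
      fderiv ℝ S (q, a) ((Pi.single k 1 : Fin n → ℝ), (0 : Fin n → ℝ))
        = η (q, a) k - c a k := by
    intro q a ha k
    rw [hSq q a ha, hT]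
    rfl
  refine ⟨hSC, hii, ?_, ?_, ?_, ?_, ?_⟩
  · refine hGC.congr ?_
    rintro ⟨q, a⟩ ⟨-, ha⟩
    funext k
    exact hii q a ha k
  · intro a ha j q
    exact (hmix a ha _ q).differentiableAt
  · intro a ha j q k
    rw [(hmix a ha _ q).fderiv]
    have h1 := ((hPa a ha q).clm_apply (hasFDerivAt_const (Pi.single k (1:ℝ)) a)).fderiv
    have h2 : DifferentiableAt ℝ η (q, a) :=
      (hηC1.differentiableOn one_ne_zero).differentiableAt (hO.mem_nhds ⟨Set.mem_univ _, ha⟩)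
    have h2' := (h2.hasFDerivAt.comp a (hasFDerivAt_prodMk_right q a))
    have h2k : DifferentiableAt ℝ (fun a' => η (q, a') k) a :=
      (hasFDerivAt_pi'.1 h2' k).differentiableAt
    have h3 : DifferentiableAt ℝ c a :=
      (hcC.differentiableOn one_ne_zero).differentiableAt (hU.mem_nhds ha)
    have h3k := hasFDerivAt_pi'.1 h3.hasFDerivAt k
    have h4 := (h2k.hasFDerivAt.sub h3k).fderiv
    have h5 : (fun a' => (T (η (q, a') - c a')) (Pi.single k (1:ℝ)))
        = ((fun a' => η (q, a') k) - fun a' => c a' k) := by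
      funext a'
      simp [hT]
    rw [h5, h4] at h1
    have h6 := congrArg (fun L => L (Pi.single j (1:ℝ))) h1
    simpa using h6.symm
  · intro j k
    have : ContinuousOn (fun x : (Fin n → ℝ) × (Fin n → ℝ) =>
        fderiv ℝ (fun x : (Fin n → ℝ) × (Fin n → ℝ) => T (η x - c x.2)) x
          ((0 : Fin n → ℝ), (Pi.single j 1 : Fin n → ℝ)) (Pi.single k 1)) (Set.univ ×ˢ U) :=
      (hPc.clm_apply continuousOn_const).clm_apply continuousOn_const
    refine this.congr ?_
    rintro ⟨q, a⟩ ⟨-, ha⟩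
    simp only
    rw [(hmix a ha _ q).fderiv]
  · intro a ha j
    rw [contDiff_one_iff_fderiv]
    refine ⟨fun q => (hmix a ha _ q).differentiableAt, ?_⟩
    have h1 : fderiv ℝ (fun q : Fin n → ℝ =>
          fderiv ℝ S (q, a) ((0 : Fin n → ℝ), (Pi.single j 1 : Fin n → ℝ)))
        = fun q => fderiv ℝ (fun x : (Fin n → ℝ) × (Fin n → ℝ) => T (η x - c x.2)) (q, a)
          ((0 : Fin n → ℝ), (Pi.single j 1 : Fin n → ℝ)) := by
      funext q
      exact (hmix a ha _ q).fderiv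
    rw [h1]
    exact (hPc.comp_continuous (by fun_prop : Continuous fun q : Fin n → ℝ => (q, a))
      (fun q => ⟨Set.mem_univ _, ha⟩)).clm_apply continuous_const
end

section
/- Let U ⊆ ℝⁿ be open, c : U → ℝⁿ a C¹ map, and S : ℝⁿ × U → ℝ a C¹ function, ℤⁿ-periodic in the first variable q, such that ∂S/∂q is C¹ in (q,a) and ∂S/∂a is differentiable with respect to q with continuous mixed derivative ∂/∂q(∂S/∂a) = ∂/∂a(∂S/∂q). Define η(q,a) = c(a) + ∂S/∂q(q,a), and assume: (i) for all a ≠ a' in U and all q ∈ ℝⁿ, η(q,a) ≠ η(q,a') (the Lagrangian graphs are pairwise disjoint); and (ii) for every (q,a), the linear map Dc(a) + ∂²S/∂a∂q(q,a) : ℝⁿ → ℝⁿ (the derivative of a ↦ η(q,a)) is invertible. Then c is injective and Dc(a) is invertible for every a ∈ U; consequently c is a C¹ diffeomorphism from U onto its image. -/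
/-- A continuous periodic function attains its maximum. -/
theorem periodic_exists_max (n : ℕ) (f : (Fin n → ℝ) → ℝ) (hf : Continuous f)
    (hper : ∀ (q : Fin n → ℝ) (m : Fin n → ℤ), f (q + (fun i => (m i : ℝ))) = f q) :
    ∃ q0, ∀ q, f q ≤ f q0 := by
  obtain ⟨q0, -, h0⟩ := (isCompact_Icc (a := (0 : Fin n → ℝ)) (b := 1)).exists_isMaxOn
    ⟨0, by simp⟩ hf.continuousOn
  refine ⟨q0, fun q => ?_⟩
  have h1 := hper q (fun i => - ⌊q i⌋)
  rw [← h1]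
  apply h0
  constructor
  · intro i
    have := Int.floor_le (q i)
    simp only [Pi.zero_apply, Pi.add_apply, Int.cast_neg]
    linarith
  · intro i
    have := Int.lt_floor_add_one (q i)
    simp only [Pi.one_apply, Pi.add_apply, Int.cast_neg]
    linarith

/-- A differentiable periodic function has a critical point. -/
theorem periodic_exists_crit (n : ℕ) (f : (Fin n → ℝ) → ℝ) (hf : Differentiable ℝ f)
    (hper : ∀ (q : Fin n → ℝ) (m : Fin n → ℤ), f (q + (fun i => (m i : ℝ))) = f q) :
    ∃ q0, fderiv ℝ f q0 = 0 := by
  obtain ⟨q0, h0⟩ := periodic_exists_max n f hf.continuous hper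
  exact ⟨q0, IsLocalMax.fderiv_eq_zero (Filter.Eventually.of_forall h0)⟩

/-- **`c` is a `C¹` diffeomorphism onto its image (Proposition on cohomology classes).**
Let `U ⊆ ℝⁿ` be open, `c : U → ℝⁿ` a `C¹` map, and `S (q,a)` a `C¹` function on
`ℝⁿ × U`, `ℤⁿ`-periodic in `q`, such that `∂S/∂q` is `C¹` in `(q,a)` and `∂S/∂a` is
differentiable in `q` with continuous mixed derivative `∂/∂q(∂S/∂a) = ∂/∂a(∂S/∂q)`.
Set `η (q,a) = c a + ∂S/∂q (q,a)`, and assume (i) for `a ≠ a'` in `U` the graphs of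
`η (·,a)` and `η (·,a')` are disjoint, and (ii) for every `(q,a)` the linear map
`Dc (a) + ∂²S/∂a∂q (q,a)` (the derivative of `a ↦ η (q,a)`) is invertible.  Then `c` is
injective on `U` with invertible derivative everywhere; consequently `c` is a `C¹`
diffeomorphism from `U` onto its image. -/
theorem cohomology_map_is_C1_diffeo
    (n : ℕ) (U : Set (Fin n → ℝ)) (hU : IsOpen U)
    (c : (Fin n → ℝ) → (Fin n → ℝ)) (hcC1 : ContDiffOn ℝ 1 c U)
    (S : (Fin n → ℝ) × (Fin n → ℝ) → ℝ)
    (hSC1 : ContDiffOn ℝ 1 S (Set.univ ×ˢ U))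
    (hSper : ∀ (q a : Fin n → ℝ) (m : Fin n → ℤ),
      S (q + (fun i => (m i : ℝ)), a) = S (q, a))
    (hSqC1 : ContDiffOn ℝ 1
      (fun x : (Fin n → ℝ) × (Fin n → ℝ) =>
        fun k : Fin n => fderiv ℝ S x ((Pi.single k 1 : Fin n → ℝ), (0 : Fin n → ℝ)))
      (Set.univ ×ˢ U))
    (hSadiff : ∀ a ∈ U, ∀ j : Fin n,
      Differentiable ℝ
        (fun q : Fin n → ℝ =>
          fderiv ℝ S (q, a) ((0 : Fin n → ℝ), (Pi.single j 1 : Fin n → ℝ))))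
    (hmix : ∀ a ∈ U, ∀ (q : Fin n → ℝ) (j k : Fin n),
      fderiv ℝ
          (fun q' : Fin n → ℝ =>
            fderiv ℝ S (q', a) ((0 : Fin n → ℝ), (Pi.single j 1 : Fin n → ℝ)))
          q (Pi.single k 1)
        = fderiv ℝ
            (fun a' : Fin n → ℝ =>
              fderiv ℝ S (q, a') ((Pi.single k 1 : Fin n → ℝ), (0 : Fin n → ℝ)))
            a (Pi.single j 1))
    (hmixcont : ∀ j k : Fin n,
      ContinuousOn
        (fun x : (Fin n → ℝ) × (Fin n → ℝ) =>
          fderiv ℝ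
            (fun q' : Fin n → ℝ =>
              fderiv ℝ S (q', x.2) ((0 : Fin n → ℝ), (Pi.single j 1 : Fin n → ℝ)))
            x.1 (Pi.single k 1))
        (Set.univ ×ˢ U))
    (η : (Fin n → ℝ) → (Fin n → ℝ) → (Fin n → ℝ))
    (hη : ∀ q a : Fin n → ℝ, η q a =
      c a + fun k : Fin n =>
        fderiv ℝ S (q, a) ((Pi.single k 1 : Fin n → ℝ), (0 : Fin n → ℝ)))
    (hdisj : ∀ a ∈ U, ∀ a' ∈ U, a ≠ a' → ∀ q : Fin n → ℝ, η q a ≠ η q a')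
    (hinv : ∀ q : Fin n → ℝ, ∀ a ∈ U,
      Function.Bijective (fun v : Fin n → ℝ =>
        fderiv ℝ c a v +
          fderiv ℝ
            (fun a' : Fin n → ℝ =>
              fun k : Fin n =>
                fderiv ℝ S (q, a') ((Pi.single k 1 : Fin n → ℝ), (0 : Fin n → ℝ)))
            a v)) :
    Set.InjOn c U ∧
    (∀ a ∈ U, Function.Bijective ⇑(fderiv ℝ c a)) ∧
    ∃ g : (Fin n → ℝ) → (Fin n → ℝ),
      ContDiffOn ℝ 1 g (c '' U) ∧ ∀ a ∈ U, g (c a) = a := by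
  have hnhds : ∀ (q a : Fin n → ℝ), a ∈ U →
      (Set.univ ×ˢ U : Set ((Fin n → ℝ) × (Fin n → ℝ))) ∈ nhds (q, a) := fun q a ha =>
    (isOpen_univ.prod hU).mem_nhds ⟨trivial, ha⟩
  have hSd : ∀ (q a : Fin n → ℝ), a ∈ U → DifferentiableAt ℝ S (q, a) := fun q a ha =>
    (hSC1.contDiffAt (hnhds q a ha)).differentiableAt one_ne_zero
  have hSl : ∀ (a : Fin n → ℝ), a ∈ U → ∀ q, HasFDerivAt (fun q => S (q, a))
      ((fderiv ℝ S (q, a)).comp (ContinuousLinearMap.inl ℝ _ _)) q := fun a ha q =>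
    (hSd q a ha).hasFDerivAt.comp q (hasFDerivAt_prodMk_left q a)
  have hinj : Set.InjOn c U := by
    intro a ha a' ha' hcc
    by_contra hne
    have hd : ∀ q, HasFDerivAt (fun q => S (q, a) - S (q, a')) _ q := fun q =>
      (hSl a ha q).sub (hSl a' ha' q)
    obtain ⟨q0, h0⟩ := periodic_exists_crit n (fun q => S (q, a) - S (q, a'))
      (fun q => (hd q).differentiableAt) (fun q m => by simp only [hSper])
    rw [(hd q0).fderiv] at h0
    apply hdisj a ha a' ha' hne q0
    rw [hη, hη, hcc]
    congr 1
    funext k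
    have := congrArg (fun L => L (Pi.single k 1 : Fin n → ℝ)) h0
    simp at this
    linarith
  have hbij : ∀ a ∈ U, Function.Bijective ⇑(fderiv ℝ c a) := by
    intro a ha
    have hi : Function.Injective (fderiv ℝ c a) := by
      rw [injective_iff_map_eq_zero]
      intro v hv
      have hd : ∀ q, HasFDerivAt (fun q : Fin n → ℝ => ∑ j, v j *
          fderiv ℝ S (q, a) ((0 : Fin n → ℝ), (Pi.single j 1 : Fin n → ℝ)))
          (∑ j, v j • fderiv ℝ (fun q : Fin n → ℝ =>
          fderiv ℝ S (q, a) ((0 : Fin n → ℝ), (Pi.single j 1 : Fin n → ℝ))) q) q := fun q =>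
        HasFDerivAt.fun_sum fun j _ => (hSadiff a ha j q).hasFDerivAt.const_mul (v j)
      obtain ⟨q0, h0⟩ := periodic_exists_crit n _ (fun q => (hd q).differentiableAt) (by
        intro q m
        have h1 : fderiv ℝ S (q + (fun i => (m i : ℝ)), a) = fderiv ℝ S (q, a) := by
          have h2 := fderiv_comp_add_right (𝕜 := ℝ) (f := S) (x := (q, a))
            ((fun i => (m i : ℝ)), (0 : Fin n → ℝ))
          have h3 : (fun x => S (x + ((fun i => (m i : ℝ)), (0 : Fin n → ℝ)))) = S := by
            funext ⟨x, y⟩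
            simp [hSper]
          rw [h3] at h2
          rw [h2]
          simp
        simp only [h1])
      rw [(hd q0).fderiv] at h0
      apply (hinv q0 a ha).1
      simp only [hv, map_zero, zero_add, add_zero]
      have hdiff : DifferentiableAt ℝ (fun a' : Fin n → ℝ => fun k : Fin n =>
          fderiv ℝ S (q0, a') ((Pi.single k 1 : Fin n → ℝ), (0 : Fin n → ℝ))) a :=
        ((hSqC1.contDiffAt (hnhds q0 a ha)).differentiableAt one_ne_zero).comp a
          (hasFDerivAt_prodMk_right q0 a).differentiableAt
      funext k
      rw [fderiv_pi (fun k => differentiableAt_pi.1 hdiff k)]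
      have h4 := congrArg (fun L => L (Pi.single k 1 : Fin n → ℝ)) h0
      simp only [_root_.sum_apply, _root_.smul_apply, hmix a ha,
        _root_.zero_apply] at h4
      simp only [ContinuousLinearMap.pi_apply, Pi.zero_apply]
      rw [← h4]
      conv_lhs => rw [pi_eq_sum_univ' v]
      simp only [map_sum, map_smul]
    exact ⟨hi, (LinearMap.injective_iff_surjective (f := (fderiv ℝ c a).toLinearMap)).1 hi⟩
  refine ⟨hinj, hbij, Function.invFunOn c U, ?_, fun a ha => hinj.leftInvOn_invFunOn ha⟩
  rintro _ ⟨a, ha, rfl⟩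
  apply ContDiffAt.contDiffWithinAt
  have hca := hcC1.contDiffAt (hU.mem_nhds ha)
  let e : (Fin n → ℝ) ≃L[ℝ] (Fin n → ℝ) :=
    (LinearEquiv.ofBijective (fderiv ℝ c a).toLinearMap (hbij a ha)).toContinuousLinearEquiv
  have he : HasFDerivAt c (e : (Fin n → ℝ) →L[ℝ] (Fin n → ℝ)) a := by
    have : (e : (Fin n → ℝ) →L[ℝ] (Fin n → ℝ)) = fderiv ℝ c a := by
      ext1 v
      rfl
    rw [this]
    exact (hca.differentiableAt one_ne_zero).hasFDerivAt
  refine (hca.to_localInverse he one_ne_zero).congr_of_eventuallyEq ?_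
  have hs := hca.hasStrictFDerivAt' he one_ne_zero
  exact hs.localInverse_unique (Filter.mem_of_superset (hU.mem_nhds ha)
    fun x hx => hinj.leftInvOn_invFunOn hx)
end

section
/- Let f : ℝⁿ → ℝⁿ be a C¹ bijection whose inverse f⁻¹ is Lipschitz. Then Df(x) is invertible for every x ∈ ℝⁿ and f⁻¹ is C¹; that is, f is a C¹ diffeomorphism of ℝⁿ. -/
/-- **A `C¹` bijection with Lipschitz inverse is a `C¹` diffeomorphism.**
Let `f : ℝⁿ → ℝⁿ` be a `C¹` bijection whose inverse is Lipschitz.  Then `Df (x)` is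
invertible for every `x`, and `f⁻¹` is `C¹`; that is, `f` is a `C¹` diffeomorphism. -/
theorem c1_bijection_with_lipschitz_inverse_is_diffeo
    (n : ℕ) (f : (Fin n → ℝ) ≃ (Fin n → ℝ))
    (hf : ContDiff ℝ 1 ⇑f)
    (K : NNReal) (hK : LipschitzWith K ⇑f.symm) :
    (∀ x : Fin n → ℝ, Function.Bijective ⇑(fderiv ℝ (⇑f) x)) ∧
      ContDiff ℝ 1 ⇑f.symm := by
  have hinj : ∀ x : Fin n → ℝ, Function.Injective ⇑(fderiv ℝ (⇑f) x) := by
    intro x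
    rw [injective_iff_map_eq_zero]
    intro v hv
    have hd : HasFDerivAt (⇑f) (fderiv ℝ (⇑f) x) x :=
      (hf.differentiable one_ne_zero x).hasFDerivAt
    have h1 : HasDerivAt (fun t : ℝ => f (x + t • v)) 0 0 := by
      have := hd.hasLineDerivAt v
      rw [hv] at this
      exact this
    have hline : HasDerivAt (fun t : ℝ => x + t • v) v 0 := by
      simpa using ((hasDerivAt_id (0 : ℝ)).smul_const v).const_add x
    have hline0 : HasDerivAt (fun t : ℝ => x + t • v) 0 0 := by
      rw [hasDerivAt_iff_isLittleO] at h1 ⊢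
      simp only [smul_zero, sub_zero, zero_smul, add_zero] at h1 ⊢
      refine Asymptotics.IsBigO.trans_isLittleO ?_ h1
      refine Asymptotics.IsBigO.of_bound (K : ℝ) (Filter.Eventually.of_forall fun t => ?_)
      have := hK.norm_sub_le (f (x + t • v)) (f x)
      simpa using this
    exact hline.unique hline0
  have hbij : ∀ x : Fin n → ℝ, Function.Bijective ⇑(fderiv ℝ (⇑f) x) := fun x =>
    ⟨hinj x, (LinearMap.injective_iff_surjective
      (f := (fderiv ℝ (⇑f) x : (Fin n → ℝ) →ₗ[ℝ] (Fin n → ℝ)))).1 (hinj x)⟩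
  refine ⟨hbij, ?_⟩
  let h : (Fin n → ℝ) ≃ₜ (Fin n → ℝ) :=
    { f with
      continuous_toFun := hf.continuous
      continuous_invFun := hK.continuous }
  let e : (x : Fin n → ℝ) → (Fin n → ℝ) ≃L[ℝ] (Fin n → ℝ) := fun x =>
    (LinearEquiv.ofBijective (fderiv ℝ (⇑f) x : (Fin n → ℝ) →ₗ[ℝ] (Fin n → ℝ))
      (hbij x)).toContinuousLinearEquiv
  have he : ∀ x, HasFDerivAt (⇑h) (e x : (Fin n → ℝ) →L[ℝ] (Fin n → ℝ)) x := by
    intro x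
    have : (e x : (Fin n → ℝ) →L[ℝ] (Fin n → ℝ)) = fderiv ℝ (⇑f) x := by
      ext1 v; rfl
    rw [this]
    exact (hf.differentiable one_ne_zero x).hasFDerivAt
  exact h.contDiff_symm he hf
end
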